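/- arXiv:2103.04012 — 7 statements merged into one kernel-verified Lean document; each statement's English description precedes it below -/
import Mathlib

section
/- Let K be a compact Hausdorff space, X a complex Banach space, and S an X-valued function space over a uniform algebra on K with base algebra A := {x* ∘ f : f ∈ S, x* ∈ X*}, satisfying in addition A⊗X ⊆ S. Let Γ ⊆ K be a closed boundary for A in which the set of strong boundary points of A is dense (these properties hold for the Shilov boundary of A). If f ∈ S has ‖f‖ = 1 and there exists a limit point t₀ of Γ (i.e., t₀ ∈ Γ and every neighborhood of t₀ meets Γ∖{t₀}) with ‖f(t₀)‖_X = 1, then f is a Daugavet point of S: for every ε > 0 the closed unit ball B_S equals the closed convex hull of Δ_ε(f) = {g ∈ B_S : ‖f − g‖ ≥ 2 − ε}. -/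
set_option maxHeartbeats 1000000
set_option synthInstance.maxHeartbeats 1000000

/-- `t₀` is a strong boundary point for the algebra `A ⊆ C(K,ℂ)`. -/
def IsStrongBoundaryPoint {K : Type*} [TopologicalSpace K] [CompactSpace K]
    (A : Subalgebra ℂ C(K, ℂ)) (t₀ : K) : Prop :=
  ∀ U : Set K, IsOpen U → t₀ ∈ U →
    ∃ h ∈ A, h t₀ = 1 ∧ ‖h‖ = 1 ∧ ∃ c : ℝ, c < 1 ∧ ∀ t ∉ U, ‖h t‖ ≤ c

theorem peak_aux {K : Type*} [TopologicalSpace K] [CompactSpace K]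
    (A : Subalgebra ℂ C(K, ℂ)) (s : K) (hs : IsStrongBoundaryPoint A s)
    (U : Set K) (hU : IsOpen U) (hsU : s ∈ U) (η : ℝ) (hη : 0 < η) :
    ∃ h ∈ A, h s = 1 ∧ (∀ t, ‖h t‖ ≤ 1) ∧ ∀ t ∉ U, ‖h t‖ ≤ η := by
  obtain ⟨h, hA, h1, hn, c, hc, hcU⟩ := hs U hU hsU
  obtain ⟨k, hk⟩ := exists_pow_lt_of_lt_one hη (max_lt hc zero_lt_one : max c 0 < 1)
  refine ⟨h ^ k, A.pow_mem hA k, by simp [h1], fun t => ?_, fun t ht => ?_⟩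
  · simp only [ContinuousMap.pow_apply, norm_pow]
    exact pow_le_one₀ (norm_nonneg _) (hn ▸ h.norm_coe_le_norm t)
  · simp only [ContinuousMap.pow_apply, norm_pow]
    exact (pow_le_pow_left₀ (norm_nonneg _) ((hcU t ht).trans (le_max_left _ _)) k).trans hk.le

theorem sum_aux {K : Type*} [TopologicalSpace K] [CompactSpace K]
    (A : Subalgebra ℂ C(K, ℂ)) (s : K) (hs : IsStrongBoundaryPoint A s)
    (U : Set K) (hU : IsOpen U) (hsU : s ∈ U) (η : ℝ) (hη : 0 < η) (m : ℕ) :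
    ∃ h ∈ A, h s = m ∧ (∀ t, ∃ r : ℝ, 0 ≤ r ∧ r ≤ m ∧ ‖h t - r‖ ≤ 2 + m * η) ∧
      ∀ t ∉ U, ‖h t‖ ≤ m * η := by
  induction m with
  | zero => exact ⟨0, A.zero_mem, by simp, fun t => ⟨0, by simp⟩, by simp⟩
  | succ m ih =>
    obtain ⟨H, hA, h1, hr, hU'⟩ := ih
    have hVo : IsOpen (U ∩ {t | ‖H t - m‖ < 1}) :=
      hU.inter (isOpen_lt (by fun_prop) continuous_const)
    obtain ⟨p, pA, p1, pn, pV⟩ := peak_aux A s hs _ hVo ⟨hsU, by simp [h1]⟩ η hη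
    refine ⟨H + p, A.add_mem hA pA, by simp [h1, p1], fun t => ?_, fun t ht => ?_⟩
    · by_cases ht : t ∈ U ∩ {t | ‖H t - m‖ < 1}
      · refine ⟨m, by positivity, by simp, ?_⟩
        have e : (H + p) t - ((m : ℝ) : ℂ) = (H t - m) + p t := by simp; ring
        rw [e]
        have h3 : ‖H t - m‖ < 1 := ht.2
        have h4 : 0 ≤ ((m + 1 : ℕ) : ℝ) * η := by positivity
        linarith [norm_add_le (H t - m) (p t), pn t]
      · obtain ⟨r, r0, rm, hr⟩ := hr t
        refine ⟨r, r0, by push_cast; linarith, ?_⟩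
        have e : (H + p) t - (r : ℂ) = (H t - r) + p t := by simp; ring
        rw [e]
        push_cast
        linarith [norm_add_le (H t - r) (p t), pV t ht]
    · have := pV t (fun h => ht h.1)
      have e : (H + p) t = H t + p t := rfl
      rw [e]
      push_cast
      linarith [norm_add_le (H t) (p t), hU' t ht]

theorem stolz_aux {K : Type*} [TopologicalSpace K] [CompactSpace K]
    (A : Subalgebra ℂ C(K, ℂ)) (s : K) (hs : IsStrongBoundaryPoint A s)
    (U : Set K) (hU : IsOpen U) (hsU : s ∈ U) (δ : ℝ) (hδ : 0 < δ) :
    ∃ h ∈ A, h s = 1 ∧ (∀ t, ‖1 - h t‖ + ‖h t‖ ≤ 1 + δ) ∧ ∀ t ∉ U, ‖h t‖ ≤ δ := by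
  obtain ⟨m, hm⟩ := exists_nat_gt (8 / δ)
  have hm0 : (0 : ℝ) < m := lt_trans (by positivity) hm
  have hmc : (m : ℂ) ≠ 0 := by
    have : m ≠ 0 := by rintro rfl; simp at hm0
    exact_mod_cast this
  obtain ⟨H, hA, h1, hr, hU'⟩ := sum_aux A s hs U hU hsU (δ / 4) (by positivity) m
  have hn : ∀ z : ℂ, ‖(m : ℂ)⁻¹ * z‖ = ‖z‖ / m := fun z => by
    simp [norm_mul, div_eq_inv_mul]
  rw [div_lt_iff₀ hδ] at hm
  refine ⟨(m : ℂ)⁻¹ • H, A.smul_mem hA _, by simp [h1, hmc], fun t => ?_, fun t ht => ?_⟩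
  · obtain ⟨r, r0, rm, hr⟩ := hr t
    have e : 1 - ((m : ℂ)⁻¹ • H) t = (m : ℂ)⁻¹ * (m - H t) := by
      simp [mul_sub, hmc]
    have e' : ((m : ℂ)⁻¹ • H) t = (m : ℂ)⁻¹ * H t := by simp
    rw [e, e', hn, hn, ← add_div, div_le_iff₀ hm0]
    have a1 : ‖(m : ℂ) - H t‖ ≤ (m - r) + ‖H t - r‖ := by
      have : (m : ℂ) - H t = ((m - r : ℝ) : ℂ) - (H t - r) := by push_cast; ring
      rw [this]
      refine (norm_sub_le _ _).trans ?_
      rw [Complex.norm_real, Real.norm_of_nonneg (by linarith)]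
    have a2 : ‖H t‖ ≤ r + ‖H t - r‖ := by
      have : H t = (r : ℂ) + (H t - r) := by ring
      conv_lhs => rw [this]
      refine (norm_add_le _ _).trans ?_
      rw [Complex.norm_real, Real.norm_of_nonneg r0]
    nlinarith
  · have e' : ((m : ℂ)⁻¹ • H) t = (m : ℂ)⁻¹ * H t := by simp
    rw [e', hn, div_le_iff₀ hm0]
    have := hU' t ht
    nlinarith

theorem infinite_aux {K : Type*} [TopologicalSpace K] [T2Space K] (Γ B W : Set K) (t₀ : K)
    (hB : Γ ⊆ closure B) (h : t₀ ∈ closure (Γ \ {t₀})) (hW : IsOpen W) (hW0 : t₀ ∈ W) :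
    (W ∩ B).Infinite := by
  intro hfin
  have hfin' : ((W ∩ B) \ {t₀}).Finite := hfin.subset Set.sdiff_subset
  have ho : IsOpen (W \ ((W ∩ B) \ {t₀})) := hW.sdiff hfin'.isClosed
  obtain ⟨x, hx, hxΓ, hx0⟩ := mem_closure_iff.1 h _ ho ⟨hW0, fun h => h.2 rfl⟩
  obtain ⟨y, hy, hyB⟩ := mem_closure_iff.1 (hB hxΓ) _ (ho.sdiff (isClosed_singleton (x := t₀))) ⟨hx, hx0⟩
  exact hy.1.2 ⟨⟨hy.1.1, hyB⟩, hy.2⟩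

/- STATEMENT 12: Let `S` be an `X`-valued function space over a uniform algebra on a
compact Hausdorff space `K` with base algebra `A = {x* ∘ f : f ∈ S, x* ∈ X*}`, and
assume moreover `A ⊗ X ⊆ S`. Let `Γ` be a closed boundary for `A` in which the
strong boundary points of `A` are dense. If `f ∈ S` with `‖f‖ = 1` attains its norm
at a limit point `t₀` of `Γ`, then `f` is a Daugavet point: for every `ε > 0`, the
closed unit ball of `S` is the closed convex hull of `{g ∈ B_S : ‖f - g‖ ≥ 2 - ε}`. -/
theorem stmt_12 {K : Type*} [TopologicalSpace K] [CompactSpace K] [T2Space K]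
    {X : Type*} [NormedAddCommGroup X] [NormedSpace ℂ X] [CompleteSpace X]
    (S : Submodule ℂ C(K, X)) (hSclosed : IsClosed (S : Set C(K, X)))
    (A : Subalgebra ℂ C(K, ℂ))
    (hAbase : (A : Set C(K, ℂ)) =
      {g : C(K, ℂ) | ∃ f ∈ S, ∃ φ : X →L[ℂ] ℂ, ∀ t : K, g t = φ (f t)})
    (hAclosed : IsClosed (A : Set C(K, ℂ)))
    (hAsep : ∀ s t : K, s ≠ t → ∃ g ∈ A, g s ≠ g t)
    (hmul : ∀ φ ∈ A, ∀ f ∈ S, φ • f ∈ S)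
    (htensor : ∀ φ ∈ A, ∀ x : X, φ • ContinuousMap.const K x ∈ S)
    (Γ : Set K) (hΓclosed : IsClosed Γ)
    (hΓbd : ∀ g ∈ A, ∃ t ∈ Γ, ‖g t‖ = ‖g‖)
    (hΓdense : Γ ⊆ closure {t | t ∈ Γ ∧ IsStrongBoundaryPoint A t})
    (f : C(K, X)) (hfS : f ∈ S) (hf1 : ‖f‖ = 1)
    (t₀ : K) (ht₀Γ : t₀ ∈ Γ) (ht₀lim : t₀ ∈ closure (Γ \ {t₀}))
    (hft₀ : ‖f t₀‖ = 1) :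
    ∀ ε > (0 : ℝ),
      Metric.closedBall (0 : S) 1 =
        closure (convexHull ℝ
          {g : S | ‖g‖ ≤ 1 ∧ 2 - ε ≤ ‖(⟨f, hfS⟩ : S) - g‖}) := by
  intro ε hε
  apply Set.Subset.antisymm
  swap
  · apply closure_minimal _ Metric.isClosed_closedBall
    apply convexHull_min _ (convex_closedBall _ _)
    intro g hg
    simpa using hg.1
  intro g hg
  have hg1 : ‖(g : C(K, X))‖ ≤ 1 := by simpa using hg
  rw [Metric.mem_closure_iff]
  intro e he
  set δ : ℝ := min 1 (min (ε / 2) (e / 8)) with hδdef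
  have hδ : 0 < δ := by positivity
  have hδ1 : δ ≤ 1 := min_le_left _ _
  have hδε : δ ≤ ε / 2 := (min_le_right _ _).trans (min_le_left _ _)
  have hδe : δ ≤ e / 8 := (min_le_right _ _).trans (min_le_right _ _)
  obtain ⟨n, hn⟩ := exists_nat_gt (8 / e)
  have hn0 : (0 : ℝ) < n := lt_trans (by positivity) hn
  rw [div_lt_iff₀ he] at hn
  have hWo : IsOpen {t | ‖f t - f t₀‖ < δ} := isOpen_lt (by fun_prop) continuous_const
  have hinf := infinite_aux Γ _ _ t₀ hΓdense ht₀lim hWo (by simpa using hδ)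
  obtain ⟨F, hFsub, hFcard⟩ := hinf.exists_subset_card_eq n
  obtain ⟨U, hU, hdis⟩ := F.finite_toSet.t2_separation
  have key : ∀ s : K, ∃ h : C(K, ℂ), s ∈ F → h ∈ A ∧ h s = 1 ∧
      (∀ t, ‖1 - h t‖ + ‖h t‖ ≤ 1 + δ) ∧ ∀ t ∉ U s, ‖h t‖ ≤ δ := by
    intro s
    by_cases hs : s ∈ F
    · obtain ⟨h, a, b⟩ := stolz_aux A s (hFsub hs).2.2 (U s) (hU s).2 (hU s).1 δ hδ
      exact ⟨h, fun _ => ⟨a, b⟩⟩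
    · exact ⟨0, fun h => absurd h hs⟩
  choose h hh using key
  let c : ℂ := ((1 + δ : ℝ) : ℂ)⁻¹
  have hcn : ‖c‖ = (1 + δ)⁻¹ := by
    simp only [c, norm_inv, Complex.norm_real]
    rw [Real.norm_of_nonneg (by linarith)]
  have hc1 : ((1 + δ : ℝ) : ℂ) ≠ 0 := by
    have : (1 + δ : ℝ) ≠ 0 := by linarith
    exact_mod_cast this
  let G : K → C(K, X) := fun s =>
    c • ((1 - h s) • (g : C(K, X)) + h s • ContinuousMap.const K (-f t₀))
  have hGap : ∀ s t, G s t = c • ((1 - h s t) • (g : C(K, X)) t + h s t • (-f t₀)) :=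
    fun s t => rfl
  have hgt : ∀ t, ‖(g : C(K, X)) t‖ ≤ 1 := fun t => ((g : C(K, X)).norm_coe_le_norm t).trans hg1
  have hGS : ∀ s ∈ F, G s ∈ S := fun s hs =>
    S.smul_mem _ (S.add_mem (hmul _ (A.sub_mem A.one_mem (hh s hs).1) _ g.2)
      (htensor _ (hh s hs).1 _))
  have hGn : ∀ s ∈ F, ‖G s‖ ≤ 1 := by
    intro s hs
    refine (ContinuousMap.norm_le _ zero_le_one).2 fun t => ?_
    rw [hGap, norm_smul, hcn, inv_mul_le_iff₀ (by linarith), mul_one]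
    refine (norm_add_le _ _).trans (le_trans ?_ ((hh s hs).2.2.1 t))
    rw [norm_smul, norm_smul, norm_neg, hft₀, mul_one]
    gcongr
    exact mul_le_of_le_one_right (norm_nonneg _) (hgt t)
  have hGf : ∀ s ∈ F, 2 - ε ≤ ‖f - G s‖ := by
    intro s hs
    refine le_trans ?_ ((f - G s).norm_coe_le_norm s)
    have e1 : (f - G s) s = (f s - f t₀) + (1 + c) • f t₀ := by
      rw [ContinuousMap.sub_apply, hGap, (hh s hs).2.1]
      simp only [sub_self, zero_smul, one_smul, zero_add, smul_neg, add_smul]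
      abel
    have e2 : ‖(1 + c) • f t₀‖ = 1 + (1 + δ)⁻¹ := by
      rw [norm_smul, hft₀, mul_one]
      have : 1 + c = ((1 + (1 + δ)⁻¹ : ℝ) : ℂ) := by simp [c]
      rw [this, Complex.norm_real, Real.norm_of_nonneg (by positivity)]
    have e3 : 1 - δ ≤ (1 + δ)⁻¹ := by
      rw [inv_eq_one_div, le_div_iff₀ (by linarith)]
      nlinarith
    have e4 : ‖f s - f t₀‖ < δ := (hFsub hs).1
    rw [e1]
    have := norm_sub_le ((f s - f t₀) + (1 + c) • f t₀) (f s - f t₀)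
    rw [add_sub_cancel_left, e2] at this
    linarith
  have hdiff : ∀ s ∈ F, ∀ t, ‖(g : C(K, X)) t - G s t‖ ≤ 2 * ‖h s t‖ + δ := by
    intro s hs t
    have e1 : (g : C(K, X)) t - G s t
        = c • (h s t • ((g : C(K, X)) t + f t₀) + (δ : ℂ) • (g : C(K, X)) t) := by
      have : (g : C(K, X)) t = c • (((1 + δ : ℝ) : ℂ) • (g : C(K, X)) t) := by
        rw [smul_smul, inv_mul_cancel₀ hc1, one_smul]
      rw [hGap]
      nth_rewrite 1 [this]
      rw [← smul_sub]
      congr 1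
      push_cast
      module
    rw [e1, norm_smul, hcn, inv_mul_le_iff₀ (by linarith)]
    have e2 : ‖h s t • ((g : C(K, X)) t + f t₀)‖ ≤ ‖h s t‖ * 2 := by
      rw [norm_smul]
      gcongr
      linarith [norm_add_le ((g : C(K, X)) t) (f t₀), hgt t]
    have e3 : ‖(δ : ℂ) • (g : C(K, X)) t‖ ≤ δ := by
      rw [norm_smul, Complex.norm_real, Real.norm_of_nonneg hδ.le]
      exact mul_le_of_le_one_right hδ.le (hgt t)
    have := norm_add_le (h s t • ((g : C(K, X)) t + f t₀)) ((δ : ℂ) • (g : C(K, X)) t)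
    nlinarith [norm_nonneg (h s t)]
  have hsum : ∀ t, ∑ s ∈ F, ‖h s t‖ ≤ 2 + n * δ := by
    intro t
    classical
    have hb : ∀ s ∈ F, ‖h s t‖ ≤ (if t ∈ U s then 2 else 0) + δ := by
      intro s hs
      split_ifs with ht
      · linarith [(hh s hs).2.2.1 t, norm_nonneg (1 - h s t)]
      · linarith [(hh s hs).2.2.2 t ht]
    refine (Finset.sum_le_sum hb).trans ?_
    rw [Finset.sum_add_distrib, Finset.sum_const, hFcard, nsmul_eq_mul, ← Finset.sum_filter,
      Finset.sum_const, nsmul_eq_mul]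
    have : (F.filter (fun s => t ∈ U s)).card ≤ 1 := by
      rw [Finset.card_le_one]
      intro a ha b hb
      rw [Finset.mem_filter] at ha hb
      by_contra hab
      exact Set.disjoint_left.1 (hdis ha.1 hb.1 hab) ha.2 hb.2
    have : ((F.filter (fun s => t ∈ U s)).card : ℝ) ≤ 1 := by exact_mod_cast this
    linarith
  classical
  let G' : K → S := fun s => if hs : G s ∈ S then ⟨G s, hs⟩ else 0
  have hG' : ∀ (s : K) (hs : s ∈ F), G' s = ⟨G s, hGS s hs⟩ := fun s hs => dif_pos (hGS s hs)
  refine ⟨∑ s ∈ F, (n : ℝ)⁻¹ • G' s, ?_, ?_⟩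
  · refine (convex_convexHull ℝ _).sum_mem (fun _ _ => by positivity) ?_ ?_
    · rw [Finset.sum_const, hFcard, nsmul_eq_mul, mul_inv_cancel₀ hn0.ne']
    · intro s hs
      apply subset_convexHull
      rw [hG' s hs]
      exact ⟨hGn s hs, hGf s hs⟩
  · rw [dist_eq_norm]
    have e1 : g - ∑ s ∈ F, (n : ℝ)⁻¹ • G' s = (n : ℝ)⁻¹ • ∑ s ∈ F, (g - G' s) := by
      rw [Finset.sum_sub_distrib, Finset.sum_const, hFcard, smul_sub, Finset.smul_sum,
        ← Nat.cast_smul_eq_nsmul ℝ, smul_smul, inv_mul_cancel₀ hn0.ne', one_smul]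
    rw [e1, norm_smul, norm_inv, Real.norm_of_nonneg hn0.le, inv_mul_lt_iff₀ hn0]
    have e2 : ‖∑ s ∈ F, (g - G' s)‖ ≤ 4 + 3 * n * δ := by
      have : ((∑ s ∈ F, (g - G' s) : S) : C(K, X)) = ∑ s ∈ F, ((g : C(K, X)) - G s) := by
        rw [Submodule.coe_sum]
        refine Finset.sum_congr rfl fun s hs => ?_
        rw [hG' s hs]
        rfl
      change ‖((∑ s ∈ F, (g - G' s) : S) : C(K, X))‖ ≤ _
      rw [this]
      refine (ContinuousMap.norm_le _ (by positivity)).2 fun t => ?_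
      rw [ContinuousMap.sum_apply]
      refine (norm_sum_le _ _).trans ((Finset.sum_le_sum fun s hs => hdiff s hs t).trans ?_)
      rw [Finset.sum_add_distrib, ← Finset.mul_sum, Finset.sum_const, hFcard, nsmul_eq_mul]
      linarith [hsum t]
    have e3 : n * δ ≤ n * (e / 8) := by gcongr
    nlinarith
end

section
/- Let K be a compact Hausdorff space, X a complex Banach space, and S an X-valued function space over a uniform algebra on K with base algebra A := {x* ∘ f : f ∈ S, x* ∈ X*}, satisfying in addition A⊗X ⊆ S. Let Γ ⊆ K be a closed boundary for A in which the set of strong boundary points of A is dense (these properties hold for the Shilov boundary of A). If Γ has no isolated points, then S has the Daugavet property: every rank-one bounded linear operator T : S → S satisfies ‖I + T‖ = 1 + ‖T‖. -/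
set_option maxHeartbeats 1000000
set_option synthInstance.maxHeartbeats 1000000

theorem aux_series {K : Type*} [TopologicalSpace K] [CompactSpace K]
    (A : Subalgebra ℂ C(K, ℂ)) (hA : IsClosed (A : Set C(K, ℂ)))
    (u : C(K, ℂ)) (hu : u ∈ A) (c : ℕ → ℂ) (hc : Summable fun n => ‖c n‖ * ‖u‖ ^ n) :
    ∃ W ∈ A, ∀ t, HasSum (fun n => c n * u t ^ n) (W t) := by
  have hs : Summable fun n => c n • u ^ n := by
    refine Summable.of_norm_bounded hc fun n => ?_
    rw [norm_smul]
    refine mul_le_mul_of_nonneg_left ?_ (norm_nonneg _)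
    rw [ContinuousMap.norm_le _ (by positivity)]
    intro t
    simp only [ContinuousMap.pow_apply, norm_pow]
    exact pow_le_pow_left₀ (norm_nonneg _) (u.norm_coe_le_norm t) n
  refine ⟨∑' n, c n • u ^ n, ?_, fun t => ?_⟩
  · exact hA.mem_of_tendsto hs.hasSum
      (Filter.Eventually.of_forall fun s => A.sum_mem fun n _ => A.smul_mem (A.pow_mem hu n) _)
  · have := hs.hasSum.mapL (ContinuousMap.evalCLM ℂ t)
    simpa using this

theorem aux_cpow {K : Type*} [TopologicalSpace K] [CompactSpace K]
    (A : Subalgebra ℂ C(K, ℂ)) (hA : IsClosed (A : Set C(K, ℂ)))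
    (u : C(K, ℂ)) (hu : u ∈ A) (hu1 : ‖u‖ < 1) (a : ℝ) :
    ∃ W ∈ A, ∀ t, W t = Complex.exp (a * Complex.log (1 - u t)) := by
  obtain ⟨L, hLA, hL⟩ := aux_series A hA u hu (fun n => 1 / (n : ℂ)) (by
    refine Summable.of_nonneg_of_le (fun n => by positivity) (fun n => ?_)
      (summable_geometric_of_lt_one (norm_nonneg u) hu1)
    refine mul_le_of_le_one_left (by positivity) ?_
    rcases n with _ | n
    · simp
    · rw [norm_div, norm_one, Complex.norm_natCast, div_le_one (by positivity)]
      push_cast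
      linarith [(Nat.cast_nonneg n : (0 : ℝ) ≤ n)])
  have hL' : ∀ t, L t = - Complex.log (1 - u t) := fun t => by
    have h1 := Complex.hasSum_taylorSeries_neg_log ((u.norm_coe_le_norm t).trans_lt hu1)
    refine (hL t).unique (h1.congr_fun ?_)
    intro n
    ring
  obtain ⟨W, hWA, hW⟩ := aux_series A hA ((-a : ℂ) • L) (A.smul_mem hLA _)
    (fun n => 1 / (n.factorial : ℂ)) (by
    refine (Real.summable_pow_div_factorial ‖(-a : ℂ) • L‖).congr fun n => ?_
    rw [norm_div, norm_one, Complex.norm_natCast]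
    ring)
  refine ⟨W, hWA, fun t => ?_⟩
  have h1 := NormedSpace.expSeries_div_hasSum_exp (a * Complex.log (1 - u t))
  rw [← Complex.exp_eq_exp_ℂ] at h1
  refine (hW t).unique (h1.congr_fun ?_)
  intro n
  simp [hL']
  ring

theorem aux_pt {a : ℝ} (ha : 0 < a) (ha1 : a ≤ 1 / 2) (z : ℂ) (hz : ‖z‖ < 1) :
    ‖Complex.exp (a * Complex.log (1 - z))‖ + ‖1 - Complex.exp (a * Complex.log (1 - z))‖
      ≤ 1 + 8 * a := by
  set l := Complex.log (1 - z) with hl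
  have him : |l.im| ≤ 2 := by
    have : |(1 - z).arg| ≤ Real.pi / 2 := by
      rw [Complex.abs_arg_le_pi_div_two_iff]
      have := (Complex.abs_re_le_norm z)
      simp only [Complex.sub_re, Complex.one_re]
      linarith [le_abs_self z.re]
    rw [hl, Complex.log_im]
    linarith [Real.pi_lt_four]
  have hre : l.re ≤ 1 := by
    rw [hl, Complex.log_re]
    have h2 : ‖1 - z‖ ≤ 2 := (norm_sub_le _ _).trans (by rw [norm_one]; linarith)
    have := Real.log_le_sub_one_of_pos (x := ‖1 - z‖) (by
      rw [norm_pos_iff, sub_ne_zero]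
      rintro rfl
      simp at hz)
    linarith
  set r := Real.exp (a * l.re) with hr
  have hr0 : 0 < r := Real.exp_pos _
  have hr1 : r ≤ 1 + 2 * a := by
    have h1 : r ≤ Real.exp a := Real.exp_le_exp.2 (by nlinarith)
    have h2 := Real.add_one_le_exp (-a)
    have h3 : Real.exp a * Real.exp (-a) = 1 := by rw [← Real.exp_add]; simp
    have h4 := Real.exp_pos a
    nlinarith
  have hw : Complex.exp (a * l) = r * Complex.exp (Complex.I * ((a * l.im : ℝ) : ℂ)) := by
    rw [hr, Complex.ofReal_exp, ← Complex.exp_add]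
    congr 1
    conv_lhs => rw [← Complex.re_add_im l]
    push_cast
    ring
  have hn : ‖Complex.exp (a * l)‖ = r := by
    rw [Complex.norm_exp]
    simp [hr]
  have h2 : ‖(r : ℂ) - Complex.exp (a * l)‖ ≤ r * (2 * a) := by
    have : (r : ℂ) - Complex.exp (a * l)
        = -(r * (Complex.exp (Complex.I * ((a * l.im : ℝ) : ℂ)) - 1)) := by rw [hw]; ring
    rw [this, norm_neg, norm_mul, Complex.norm_real, Real.norm_of_nonneg hr0.le]
    refine mul_le_mul_of_nonneg_left (Real.norm_exp_I_mul_ofReal_sub_one_le.trans ?_) hr0.le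
    rw [Real.norm_eq_abs, abs_mul, abs_of_pos ha]
    nlinarith
  have h3 : ‖1 - Complex.exp (a * l)‖ ≤ |1 - r| + r * (2 * a) := by
    have e : 1 - Complex.exp (a * l) = ((1 - r : ℝ) : ℂ) + ((r : ℂ) - Complex.exp (a * l)) := by
      push_cast; ring
    rw [e]
    refine (norm_add_le _ _).trans (add_le_add ?_ h2)
    rw [Complex.norm_real, Real.norm_eq_abs]
  rw [hn]
  rcases abs_cases (1 - r) with ⟨h, _⟩ | ⟨h, _⟩ <;> nlinarith

theorem aux_peak {K : Type*} [TopologicalSpace K] [CompactSpace K]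
    (A : Subalgebra ℂ C(K, ℂ)) (hA : IsClosed (A : Set C(K, ℂ))) (s : K)
    (hs : ∀ U : Set K, IsOpen U → s ∈ U →
      ∃ h ∈ A, h s = 1 ∧ ‖h‖ = 1 ∧ ∃ c : ℝ, c < 1 ∧ ∀ t ∉ U, ‖h t‖ ≤ c)
    (U : Set K) (hU : IsOpen U) (hsU : s ∈ U) {ε : ℝ} (hε : 0 < ε) (hε1 : ε ≤ 1 / 2) :
    ∃ h ∈ A, ‖1 - h s‖ ≤ ε ∧ (∀ t, ‖h t‖ + ‖1 - h t‖ ≤ 1 + ε) ∧ ∀ t ∉ U, ‖h t‖ ≤ ε := by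
  obtain ⟨h₀, h₀A, h₀s, h₀n, c, hc, h₀c⟩ := hs U hU hsU
  set a : ℝ := ε / 8 with ha
  have ha0 : 0 < a := by positivity
  set q : ℝ := Real.exp (Real.log ε / a) with hq
  have hq0 : 0 < q := Real.exp_pos _
  have hq1 : q < 1 := by
    rw [hq, Real.exp_lt_one_iff]
    exact div_neg_of_neg_of_pos (Real.log_neg hε (by linarith)) ha0
  have hcont : ContinuousAt
      (fun z : ℂ => 1 - Complex.exp (a * Complex.log (1 - ((1 - q : ℝ) : ℂ) * z))) 0 := by
    refine ContinuousAt.sub continuousAt_const (ContinuousAt.cexp (ContinuousAt.mul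
      continuousAt_const (ContinuousAt.clog (by fun_prop) ?_)))
    simp
  obtain ⟨δ, hδ, hδ'⟩ := Metric.continuousAt_iff.1 hcont ε hε
  obtain ⟨n, hn⟩ := exists_pow_lt_of_lt_one hδ (max_lt hc one_pos)
  set u : C(K, ℂ) := ((1 - q : ℝ) : ℂ) • h₀ ^ n with hu
  have huA : u ∈ A := A.smul_mem (A.pow_mem h₀A n) _
  have hu1 : ‖u‖ < 1 := by
    have : ‖u‖ ≤ 1 - q := by
      rw [ContinuousMap.norm_le _ (by linarith)]
      intro t
      have : ‖h₀ t‖ ≤ 1 := h₀n ▸ h₀.norm_coe_le_norm t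
      simp only [hu, ContinuousMap.smul_apply, ContinuousMap.pow_apply, norm_smul, norm_pow,
        Complex.norm_real, Real.norm_of_nonneg (sub_nonneg.2 hq1.le)]
      exact mul_le_of_le_one_right (by linarith) (pow_le_one₀ (norm_nonneg _) this)
    linarith
  obtain ⟨W, hWA, hW⟩ := aux_cpow A hA u huA hu1 a
  refine ⟨1 - W, A.sub_mem A.one_mem hWA, ?_, fun t => ?_, fun t ht => ?_⟩
  · have : W s = ε := by
      rw [hW]
      have : 1 - u s = (q : ℂ) := by simp [hu, h₀s]
      rw [this, ← Complex.ofReal_log hq0.le, hq, Real.log_exp, ← Complex.ofReal_mul,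
        mul_div_cancel₀ _ ha0.ne', ← Complex.ofReal_exp, Real.exp_log hε]
    simp [this, abs_of_pos hε]
  · have := aux_pt ha0 (by linarith) (u t) ((u.norm_coe_le_norm t).trans_lt hu1)
    rw [← hW] at this
    simp only [ContinuousMap.sub_apply, ContinuousMap.one_apply, sub_sub_cancel]
    linarith
  · have h1 : dist (h₀ t ^ n) 0 < δ := by
      rw [dist_zero_right, norm_pow]
      exact (pow_le_pow_left₀ (norm_nonneg _) ((h₀c t ht).trans (le_max_left _ _)) n).trans_lt hn
    have := hδ' h1
    simp only [mul_zero, sub_zero, Complex.log_one, Complex.exp_zero, sub_self,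
      dist_zero_right] at this
    have e : W t = _ := hW t
    simp only [ContinuousMap.sub_apply, ContinuousMap.one_apply, e]
    exact this.le

theorem aux_sum {E ι : Type*} [NormedAddCommGroup E] [NormedSpace ℂ E] (ψ : E →L[ℂ] ℂ)
    (F : Finset ι) (v : ι → E) (C : ℝ)
    (h : ∀ θ : ι → ℂ, (∀ i, ‖θ i‖ ≤ 1) → ‖∑ i ∈ F, θ i • v i‖ ≤ C) :
    ∑ i ∈ F, ‖ψ (v i)‖ ≤ ‖ψ‖ * C := by
  have hθ : ∀ i, ∃ θ : ℂ, ‖θ‖ ≤ 1 ∧ θ * ψ (v i) = ‖ψ (v i)‖ := fun i => by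
    obtain ⟨θ, h1, h2⟩ := RCLike.exists_norm_eq_mul_self (ψ (v i))
    exact ⟨θ, h1.le, h2.symm⟩
  choose θ h1 h2 using hθ
  have e : ψ (∑ i ∈ F, θ i • v i) = ((∑ i ∈ F, ‖ψ (v i)‖ : ℝ) : ℂ) := by
    rw [map_sum]
    push_cast
    refine Finset.sum_congr rfl fun i _ => ?_
    rw [map_smul, smul_eq_mul, h2]
  have h3 := ψ.le_opNorm (∑ i ∈ F, θ i • v i)
  rw [e, Complex.norm_real, Real.norm_of_nonneg (Finset.sum_nonneg fun _ _ => norm_nonneg _)] at h3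
  exact h3.trans (mul_le_mul_of_nonneg_left (h θ h1) (norm_nonneg _))

theorem aux_inf {K : Type*} [TopologicalSpace K] [T2Space K] (Γ D V : Set K)
    (hd : Γ ⊆ closure D) (hni : ∀ t ∈ Γ, t ∈ closure (Γ \ {t})) (hV : IsOpen V)
    (t₀ : K) (ht : t₀ ∈ Γ) (htV : t₀ ∈ V) : (D ∩ V).Infinite := by
  have h1 : (Γ ∩ V).Infinite := by
    intro hf
    obtain ⟨y, ⟨hyV, hy⟩, hyΓ, hyt⟩ := mem_closure_iff.1 (hni t₀ ht) (V \ ((Γ ∩ V) \ {t₀}))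
      (hV.sdiff (hf.subset Set.sdiff_subset).isClosed) ⟨htV, fun h => h.2 rfl⟩
    exact hy ⟨⟨hyΓ, hyV⟩, hyt⟩
  intro hf
  obtain ⟨y, ⟨hyΓ, hyV⟩, hy⟩ := (h1.sdiff hf).nonempty
  obtain ⟨w, ⟨hwV, hw⟩, hwD⟩ := mem_closure_iff.1 (hd hyΓ) (V \ (D ∩ V))
    (hV.sdiff hf.isClosed) ⟨hyV, hy⟩
  exact hw ⟨hwD, hwV⟩

/- STATEMENT 13: Let `S` be an `X`-valued function space over a uniform algebra on a
compact Hausdorff space `K` with base algebra `A = {x* ∘ f : f ∈ S, x* ∈ X*}`,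
satisfying `A ⊗ X ⊆ S`. Let `Γ` be a closed boundary for `A` in which the strong
boundary points of `A` are dense. If `Γ` has no isolated points, then `S` has the
Daugavet property: every rank-one bounded linear operator `T` (i.e. `T = ψ(·) • g`
with `ψ ≠ 0`, `g ≠ 0`) satisfies `‖I + T‖ = 1 + ‖T‖`. -/
theorem stmt_13 {K : Type*} [TopologicalSpace K] [CompactSpace K] [T2Space K]
    {X : Type*} [NormedAddCommGroup X] [NormedSpace ℂ X] [CompleteSpace X]
    (S : Submodule ℂ C(K, X)) (hSclosed : IsClosed (S : Set C(K, X)))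
    (A : Subalgebra ℂ C(K, ℂ))
    (hAbase : (A : Set C(K, ℂ)) =
      {g : C(K, ℂ) | ∃ f ∈ S, ∃ φ : X →L[ℂ] ℂ, ∀ t : K, g t = φ (f t)})
    (hAclosed : IsClosed (A : Set C(K, ℂ)))
    (hAsep : ∀ s t : K, s ≠ t → ∃ g ∈ A, g s ≠ g t)
    (hmul : ∀ φ ∈ A, ∀ f ∈ S, φ • f ∈ S)
    (htensor : ∀ φ ∈ A, ∀ x : X, φ • ContinuousMap.const K x ∈ S)
    (Γ : Set K) (hΓclosed : IsClosed Γ)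
    (hΓbd : ∀ g ∈ A, ∃ t ∈ Γ, ‖g t‖ = ‖g‖)
    (hΓdense : Γ ⊆ closure {t | t ∈ Γ ∧ IsStrongBoundaryPoint A t})
    (hΓnoiso : ∀ t ∈ Γ, t ∈ closure (Γ \ {t})) :
    ∀ (ψ : S →L[ℂ] ℂ) (g : S), ψ ≠ 0 → g ≠ 0 →
      ‖ContinuousLinearMap.id ℂ S + ψ.smulRight g‖ = 1 + ‖ψ.smulRight g‖ := by
  intro ψ g hψ hg
  set P := ‖ψ‖ with hP
  set G := ‖g‖ with hG
  have hP0 : 0 ≤ P := norm_nonneg ψ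
  have hG0 : 0 < G := norm_pos_iff.2 hg
  rw [ContinuousLinearMap.norm_smulRight_apply, ← hP, ← hG]
  set T := ContinuousLinearMap.id ℂ S + ψ.smulRight g with hT
  have hTn : 0 ≤ ‖T‖ := norm_nonneg T
  -- the point of the boundary where `g` attains its norm
  obtain ⟨t₀, ht₀Γ, ht₀⟩ : ∃ t₀ ∈ Γ, ‖(g : C(K, X)) t₀‖ = G := by
    have hne : Nonempty K := by
      by_contra hK
      rw [not_nonempty_iff] at hK
      exact hg (Subtype.ext (ContinuousMap.ext fun t => (hK.false t).elim))
    obtain ⟨t, -, ht⟩ := isCompact_univ.exists_isMaxOn (Set.univ_nonempty (α := K))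
      (f := fun t => ‖(g : C(K, X)) t‖) (by fun_prop)
    have htG : ‖(g : C(K, X)) t‖ = G := by
      refine le_antisymm ((g : C(K, X)).norm_coe_le_norm t) ?_
      change ‖(g : C(K, X))‖ ≤ _
      rw [ContinuousMap.norm_le _ (norm_nonneg _)]
      exact fun y => ht (Set.mem_univ y)
    obtain ⟨φ, hφ1, hφ⟩ := exists_dual_vector'' ℂ ((g : C(K, X)) t)
    let k : C(K, ℂ) := ⟨fun y => φ ((g : C(K, X)) y), by fun_prop⟩
    have hk : k ∈ A := by
      rw [← SetLike.mem_coe, hAbase]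
      exact ⟨g, g.2, φ, fun _ => rfl⟩
    obtain ⟨s, hs, hsk⟩ := hΓbd k hk
    refine ⟨s, hs, le_antisymm ((g : C(K, X)).norm_coe_le_norm s) ?_⟩
    have h1 : ‖k t‖ ≤ ‖k‖ := k.norm_coe_le_norm t
    have h2 : ‖k t‖ = G := by
      change ‖φ ((g : C(K, X)) t)‖ = G
      rw [hφ, htG]
      simp [hG0.le]
    have h3 : ‖k s‖ ≤ ‖(g : C(K, X)) s‖ := by
      refine (φ.le_opNorm _).trans ?_
      exact mul_le_of_le_one_left (norm_nonneg _) hφ1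
    linarith
  have key : ∀ ε : ℝ, 0 < ε → ε ≤ 1 / 2 →
      1 + P * G - ε * (2 + 6 * P * G + P + G) ≤ ‖T‖ * (1 + ε) := by
    intro ε hε hε1
    obtain ⟨f₀, p, hf₀, hp, hp1, hp2⟩ : ∃ (f₀ : S) (p : ℝ), ‖f₀‖ ≤ 1 ∧ ψ f₀ = p ∧
        P - ε ≤ p ∧ 0 ≤ p := by
      obtain ⟨y, hy, hy'⟩ := ψ.exists_lt_apply_of_lt_opNorm (r := P - ε) (by linarith)
      obtain ⟨θ, h1, h2⟩ := RCLike.exists_norm_eq_mul_self (ψ y)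
      refine ⟨θ • y, ‖ψ y‖, ?_, ?_, hy'.le, norm_nonneg _⟩
      · rw [norm_smul, h1, one_mul]; exact hy.le
      · rw [map_smul, smul_eq_mul]; exact h2.symm
    have hpP : p ≤ P := by
      have := ψ.le_opNorm f₀
      rw [hp, Complex.norm_real, Real.norm_of_nonneg hp2] at this
      exact this.trans (mul_le_of_le_one_right hP0 hf₀)
    have hf₀t : ∀ t, ‖(f₀ : C(K, X)) t‖ ≤ 1 :=
      fun t => ((f₀ : C(K, X)).norm_coe_le_norm t).trans hf₀
    set x : X := ((1 / G : ℝ) : ℂ) • (g : C(K, X)) t₀ with hx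
    have hx1 : ‖x‖ = 1 := by
      rw [hx, norm_smul, ht₀, Complex.norm_real, Real.norm_of_nonneg (by positivity)]
      field_simp
    set V : Set K := {t | ‖(g : C(K, X)) t - (g : C(K, X)) t₀‖ < ε} with hV
    have hVo : IsOpen V := isOpen_lt (by fun_prop) continuous_const
    have hinf := aux_inf Γ _ V hΓdense hΓnoiso hVo t₀ ht₀Γ (by simp [hV, hε])
    obtain ⟨M, hM⟩ := exists_nat_gt (1 / ε)
    obtain ⟨F, hF, hFc⟩ := hinf.exists_subset_card_eq (M + 2)
    obtain ⟨U, hU, hUd⟩ := F.finite_toSet.t2_separation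
    set e : ℝ := 1 / ((M + 2 : ℕ) : ℝ) with he
    have he0 : 0 < e := by positivity
    have he1 : e ≤ 1 / 2 := by
      rw [he]
      exact one_div_le_one_div_of_le (by norm_num) (by push_cast; linarith [M.cast_nonneg (α := ℝ)])
    have heε : e ≤ ε := by
      rw [he, div_le_iff₀ (by positivity)]
      rw [div_lt_iff₀ hε] at hM
      push_cast
      nlinarith
    have hpk : ∀ s : K, ∃ h ∈ A, s ∈ F → (‖1 - h s‖ ≤ e ∧
        (∀ t, ‖h t‖ + ‖1 - h t‖ ≤ 1 + e) ∧ ∀ t ∉ U s, ‖h t‖ ≤ e) := by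
      intro s
      by_cases hs : s ∈ F
      · obtain ⟨h, hA, h1⟩ := aux_peak A hAclosed s (hF hs).1.2 (U s) (hU s).2 (hU s).1 he0 he1
        exact ⟨h, hA, fun _ => h1⟩
      · exact ⟨0, A.zero_mem, fun h => absurd h hs⟩
    choose h hhA hh using hpk
    have hvS : ∀ s, h s • ContinuousMap.const K x - h s • (f₀ : C(K, X)) ∈ S := fun s =>
      S.sub_mem (htensor _ (hhA s) x) (hmul _ (hhA s) _ f₀.2)
    let v : K → S := fun s => ⟨_, hvS s⟩
    have hv : ∀ s t, (v s : C(K, X)) t = h s t • (x - (f₀ : C(K, X)) t) := fun s t => by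
      simp [v, smul_sub]
    have hsum := aux_sum ψ F v 6 (by
      intro θ hθ
      change ‖((∑ i ∈ F, θ i • v i : S) : C(K, X))‖ ≤ 6
      rw [ContinuousMap.norm_le _ (by norm_num)]
      intro t
      have e1 : ((∑ i ∈ F, θ i • v i : S) : C(K, X)) t
          = ∑ i ∈ F, θ i • (h i t • (x - (f₀ : C(K, X)) t)) := by
        simp [← hv, ContinuousMap.sum_apply]
      rw [e1]
      have b1 : ∀ i ∈ F, ‖θ i • (h i t • (x - (f₀ : C(K, X)) t))‖ ≤ ‖h i t‖ * 2 := by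
        intro i _
        rw [norm_smul, norm_smul]
        have : ‖x - (f₀ : C(K, X)) t‖ ≤ 2 := (norm_sub_le _ _).trans (by linarith [hf₀t t])
        calc _ ≤ 1 * (‖h i t‖ * 2) := by gcongr; exact hθ i
          _ = _ := one_mul _
      have b2 : ∑ i ∈ F, ‖h i t‖ ≤ 3 := by
        have c0 : ∀ i ∈ F, ‖h i t‖ ≤ 2 := fun i hi => by
          have := (hh i hi).2.1 t
          linarith [norm_nonneg (1 - h i t)]
        have c1 : ∀ G' ⊆ F, (∀ i ∈ G', t ∉ U i) → ∑ i ∈ G', ‖h i t‖ ≤ 1 := by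
          intro G' hG' hn
          calc _ ≤ ∑ i ∈ G', e := Finset.sum_le_sum fun i hi => (hh i (hG' hi)).2.2 t (hn i hi)
            _ = G'.card * e := by simp
            _ ≤ F.card * e := by gcongr
            _ = 1 := by rw [hFc, he]; field_simp
        by_cases hex : ∃ i ∈ F, t ∈ U i
        · obtain ⟨i, hi, hti⟩ := hex
          classical
          rw [← Finset.add_sum_erase F _ hi]
          have := c1 (F.erase i) (Finset.erase_subset _ _) (fun j hj htj => by
            have hjF := Finset.mem_of_mem_erase hj
            exact Set.disjoint_left.1 (hUd hjF hi (Finset.ne_of_mem_erase hj)) htj hti)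
          linarith [c0 i hi]
        · push Not at hex
          linarith [c1 F subset_rfl hex]
      calc _ ≤ ∑ i ∈ F, ‖h i t‖ * 2 := norm_sum_le_of_le _ b1
        _ = (∑ i ∈ F, ‖h i t‖) * 2 := by rw [Finset.sum_mul]
        _ ≤ 6 := by linarith)
    obtain ⟨s, hsF, hs⟩ : ∃ s ∈ F, ‖ψ (v s)‖ ≤ 6 * P * e := by
      by_contra hcon
      push Not at hcon
      have hne : F.Nonempty := Finset.card_pos.1 (by omega)
      have := Finset.sum_lt_sum_of_nonempty hne hcon
      rw [Finset.sum_const, hFc, nsmul_eq_mul] at this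
      have e2 : ((M + 2 : ℕ) : ℝ) * (6 * P * e) = P * 6 := by rw [he]; field_simp
      linarith
    obtain ⟨q1, q2, -⟩ := hh s hsF
    have hsV : ‖(g : C(K, X)) s - (g : C(K, X)) t₀‖ < ε := (hF hsF).2
    set f : S := f₀ + v s with hf
    have hfn : ‖f‖ ≤ 1 + ε := by
      change ‖(f : C(K, X))‖ ≤ _
      rw [ContinuousMap.norm_le _ (by linarith)]
      intro t
      have e3 : (f : C(K, X)) t = (1 - h s t) • (f₀ : C(K, X)) t + h s t • x := by
        rw [hf, Submodule.coe_add, ContinuousMap.add_apply, hv, smul_sub, sub_smul, one_smul]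
        abel
      rw [e3]
      calc _ ≤ ‖1 - h s t‖ * 1 + ‖h s t‖ * 1 := by
            refine (norm_add_le _ _).trans ?_
            rw [norm_smul, norm_smul, hx1]
            gcongr
            exact hf₀t t
        _ ≤ 1 + ε := by linarith [q2 t]
    have hψf : ψ f = p + ψ (v s) := by rw [hf, map_add, hp]
    have hTf : (T f : C(K, X)) s = (x + (p : ℂ) • (g : C(K, X)) t₀)
        + (((1 - h s s) • ((f₀ : C(K, X)) s - x) + ψ (v s) • (g : C(K, X)) s)
          + (p : ℂ) • ((g : C(K, X)) s - (g : C(K, X)) t₀)) := by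
      have : T f = f + ψ f • g := by simp [hT]
      rw [this, hψf, Submodule.coe_add, ContinuousMap.add_apply, Submodule.coe_smul,
        ContinuousMap.smul_apply, hf, Submodule.coe_add, ContinuousMap.add_apply, hv]
      module
    have n1 : ‖x + (p : ℂ) • (g : C(K, X)) t₀‖ = 1 + p * G := by
      have : x + (p : ℂ) • (g : C(K, X)) t₀ = ((1 / G + p : ℝ) : ℂ) • (g : C(K, X)) t₀ := by
        rw [hx]; push_cast; module
      rw [this, norm_smul, ht₀, Complex.norm_real, Real.norm_of_nonneg (by positivity)]
      field_simp
    have n2 : ‖(1 - h s s) • ((f₀ : C(K, X)) s - x)‖ ≤ ε * 2 := by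
      rw [norm_smul]
      have : ‖(f₀ : C(K, X)) s - x‖ ≤ 2 := (norm_sub_le _ _).trans (by linarith [hf₀t s])
      gcongr
      linarith
    have n3 : ‖ψ (v s) • (g : C(K, X)) s‖ ≤ 6 * P * ε * G := by
      rw [norm_smul]
      have : ‖(g : C(K, X)) s‖ ≤ G := (g : C(K, X)).norm_coe_le_norm s
      gcongr
      exact hs.trans (by gcongr)
    have n4 : ‖(p : ℂ) • ((g : C(K, X)) s - (g : C(K, X)) t₀)‖ ≤ P * ε := by
      rw [norm_smul, Complex.norm_real, Real.norm_of_nonneg hp2]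
      gcongr
    have n5 : ‖(T f : C(K, X)) s‖ ≤ ‖T‖ * (1 + ε) :=
      (((T f : C(K, X)).norm_coe_le_norm s).trans (T.le_opNorm f)).trans (by gcongr)
    have n6 := norm_sub_le_norm_add (x + (p : ℂ) • (g : C(K, X)) t₀)
      (((1 - h s s) • ((f₀ : C(K, X)) s - x) + ψ (v s) • (g : C(K, X)) s)
          + (p : ℂ) • ((g : C(K, X)) s - (g : C(K, X)) t₀))
    rw [← hTf, n1] at n6
    have n7 := norm_add₃_le (a := (1 - h s s) • ((f₀ : C(K, X)) s - x))
      (b := ψ (v s) • (g : C(K, X)) s) (c := (p : ℂ) • ((g : C(K, X)) s - (g : C(K, X)) t₀))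
    nlinarith
  refine le_antisymm ?_ ?_
  · have h1 : ‖T‖ ≤ ‖ContinuousLinearMap.id ℂ S‖ + ‖ψ.smulRight g‖ :=
      norm_add_le (ContinuousLinearMap.id ℂ S) (ψ.smulRight g)
    have h2 : ‖ContinuousLinearMap.id ℂ S‖ ≤ 1 := ContinuousLinearMap.norm_id_le
    rw [ContinuousLinearMap.norm_smulRight_apply, ← hP, ← hG] at h1
    linarith
  · set C := 2 + 6 * P * G + P + G + ‖T‖ with hC
    have hC0 : 0 < C := by positivity
    refine le_of_forall_pos_le_add fun d hd => ?_
    have k := key (min (1 / 2) (d / C)) (by positivity) (min_le_left _ _)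
    have k2 : min (1 / 2) (d / C) * C ≤ d := by
      calc _ ≤ d / C * C := by gcongr; exact min_le_right _ _
        _ = d := by field_simp
    rw [hC] at k2 k
    nlinarith
end

section
/- Let K be a compact Hausdorff space, X a uniformly convex complex Banach space, and S an X-valued function space over a uniform algebra on K with base algebra A := {x* ∘ f : f ∈ S, x* ∈ X*}. Let Γ ⊆ K be a closed boundary for A in which the set of strong boundary points of A is dense (these properties hold for the Shilov boundary of A). If f ∈ S with ‖f‖ = 1 is a Δ-point of S (i.e., f belongs to the closed convex hull of Δ_ε(f) = {g ∈ B_S : ‖f − g‖ ≥ 2 − ε} for every ε > 0), then there exists a limit point t₀ of Γ (t₀ ∈ Γ such that every neighborhood of t₀ meets Γ∖{t₀}) with ‖f(t₀)‖_X = 1. -/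
set_option maxHeartbeats 1000000
set_option synthInstance.maxHeartbeats 1000000

/- STATEMENT 14: Let `X` be a uniformly convex complex Banach space and `S` an
`X`-valued function space over a uniform algebra on the compact Hausdorff space `K`
with base algebra `A = {x* ∘ f : f ∈ S, x* ∈ X*}`. Let `Γ` be a closed boundary for
`A` in which the strong boundary points of `A` are dense. If `f ∈ S` with `‖f‖ = 1`
is a Δ-point of `S`, then there is a limit point `t₀` of `Γ` with `‖f t₀‖ = 1`. -/
theorem stmt_14 {K : Type*} [TopologicalSpace K] [CompactSpace K] [T2Space K]
    {X : Type*} [NormedAddCommGroup X] [NormedSpace ℂ X] [CompleteSpace X]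
    [UniformConvexSpace X]
    (S : Submodule ℂ C(K, X)) (hSclosed : IsClosed (S : Set C(K, X)))
    (A : Subalgebra ℂ C(K, ℂ))
    (hAbase : (A : Set C(K, ℂ)) =
      {g : C(K, ℂ) | ∃ f ∈ S, ∃ φ : X →L[ℂ] ℂ, ∀ t : K, g t = φ (f t)})
    (hAclosed : IsClosed (A : Set C(K, ℂ)))
    (hAsep : ∀ s t : K, s ≠ t → ∃ g ∈ A, g s ≠ g t)
    (hmul : ∀ φ ∈ A, ∀ f ∈ S, φ • f ∈ S)
    (Γ : Set K) (hΓclosed : IsClosed Γ)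
    (hΓbd : ∀ g ∈ A, ∃ t ∈ Γ, ‖g t‖ = ‖g‖)
    (hΓdense : Γ ⊆ closure {t | t ∈ Γ ∧ IsStrongBoundaryPoint A t})
    (f : C(K, X)) (hfS : f ∈ S) (hf1 : ‖f‖ = 1)
    (hΔ : ∀ ε > (0 : ℝ), (⟨f, hfS⟩ : S) ∈
      closure (convexHull ℝ {g : S | ‖g‖ ≤ 1 ∧ 2 - ε ≤ ‖(⟨f, hfS⟩ : S) - g‖})) :
    ∃ t₀ ∈ Γ, t₀ ∈ closure (Γ \ {t₀}) ∧ ‖f t₀‖ = 1 := by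
  classical
  by_contra hcon
  push Not at hcon
  have hev : ∀ (h : C(K, X)) (t : K), ‖h t‖ ≤ ‖h‖ := fun h t => h.norm_coe_le_norm t
  -- norms of elements of `S` are attained on `Γ`
  have hatt : ∀ h ∈ S, ∃ t ∈ Γ, ‖h‖ ≤ ‖h t‖ := by
    intro h hh
    by_cases h0 : h = 0
    · obtain ⟨t, ht, -⟩ := hΓbd 0 A.zero_mem
      exact ⟨t, ht, by simp [h0]⟩
    have hne : Nonempty K := by
      by_contra hK
      rw [not_nonempty_iff] at hK
      exact h0 (ContinuousMap.ext fun t => (hK.false t).elim)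
    obtain ⟨s, -, hs⟩ := isCompact_univ.exists_isMaxOn (Set.univ_nonempty (α := K))
      (f := fun t => ‖h t‖) (by fun_prop)
    have hs' : ‖h‖ ≤ ‖h s‖ :=
      (ContinuousMap.norm_le _ (norm_nonneg _)).2 fun t => hs (Set.mem_univ t)
    have hs0 : h s ≠ 0 := by
      intro h1
      rw [h1, norm_zero] at hs'
      exact h0 (norm_le_zero_iff.1 hs')
    obtain ⟨φ, hφ1, hφ⟩ := exists_dual_vector ℂ (h s) (by simpa using hs0)
    let g : C(K, ℂ) := ⟨fun t => φ (h t), by fun_prop⟩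
    have hg : g ∈ A := by
      have : g ∈ (A : Set C(K, ℂ)) := by
        rw [hAbase]
        exact ⟨h, hh, φ, fun t => rfl⟩
      exact this
    obtain ⟨t, ht, hgt⟩ := hΓbd g hg
    refine ⟨t, ht, ?_⟩
    have h1 : ‖g t‖ ≤ ‖h t‖ := by
      have := φ.le_opNorm (h t)
      rw [hφ1, one_mul] at this
      exact this
    have h2 : ‖g s‖ ≤ ‖g‖ := g.norm_coe_le_norm s
    have h3 : ‖g s‖ = ‖h s‖ := by
      change ‖φ (h s)‖ = _
      rw [hφ]; simp
    linarith
  let U : K → Set K := fun t => (closure (Γ \ {t}))ᶜ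
  have hUo : ∀ t, IsOpen (U t) := fun t => isClosed_closure.isOpen_compl
  have hUΓ : ∀ t s, s ∈ Γ → s ∈ U t → s = t := by
    intro t s hs hU
    by_contra hne
    exact hU (subset_closure ⟨hs, hne⟩)
  let F : Set K := {t | t ∈ Γ ∧ ‖f t‖ = 1}
  have hFU : ∀ t ∈ F, t ∈ U t := fun t ht hc => hcon t ht.1 hc ht.2
  have hFcl : IsClosed F := hΓclosed.inter (isClosed_eq (by fun_prop) continuous_const)
  have hFfin : F.Finite := by
    obtain ⟨T, hT⟩ := hFcl.isCompact.elim_finite_subcover U hUo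
      (fun t ht => Set.mem_iUnion.2 ⟨t, hFU t ht⟩)
    refine T.finite_toSet.subset fun s hs => ?_
    obtain ⟨t, ht, hst⟩ := Set.mem_iUnion₂.1 (hT hs)
    rw [hUΓ t s hs.1 hst]
    exact ht
  have hgap : ∃ η > (0 : ℝ), ∀ t ∈ Γ, t ∉ F → ‖f t‖ ≤ 1 - η := by
    have hcl : IsClosed (Γ \ ⋃ t ∈ F, U t) :=
      hΓclosed.sdiff (isOpen_biUnion fun t _ => hUo t)
    have hmem : ∀ t ∈ Γ, t ∉ F → t ∈ (Γ \ ⋃ t ∈ F, U t) := by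
      intro t ht htF
      refine ⟨ht, fun hc => ?_⟩
      obtain ⟨s, hs, hts⟩ := Set.mem_iUnion₂.1 hc
      rw [hUΓ s t ht hts] at htF
      exact htF hs
    rcases (Γ \ ⋃ t ∈ F, U t).eq_empty_or_nonempty with he | hne
    · refine ⟨1, one_pos, fun t ht htF => ?_⟩
      have := hmem t ht htF
      rw [he] at this
      exact this.elim
    · obtain ⟨s, hs, hmax⟩ := hcl.isCompact.exists_isMaxOn hne
        (f := fun t => ‖f t‖) (by fun_prop)
      have hs1 : ‖f s‖ < 1 := by
        refine lt_of_le_of_ne (hf1 ▸ hev f s) fun h1 => hs.2 ?_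
        exact Set.mem_iUnion₂.2 ⟨s, ⟨hs.1, h1⟩, hFU s ⟨hs.1, h1⟩⟩
      refine ⟨1 - ‖f s‖, by linarith, fun t ht htF => ?_⟩
      have : ‖f t‖ ≤ ‖f s‖ := hmax (hmem t ht htF)
      linarith
  obtain ⟨η, hη, hgap⟩ := hgap
  have hφ : ∀ t, ∃ φ : X →L[ℂ] ℂ, ‖φ‖ ≤ 1 ∧ φ (f t) = (‖f t‖ : ℂ) := by
    intro t
    by_cases h0 : f t = 0
    · exact ⟨0, by simp, by simp [h0]⟩
    · obtain ⟨φ, h1, h2⟩ := exists_dual_vector ℂ (f t) (by simpa using h0)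
      exact ⟨φ, h1.le, by simpa using h2⟩
  choose φ hφ1 hφf using hφ
  obtain ⟨δ, hδ, huc⟩ := exists_forall_closed_ball_dist_add_le_two_sub X (ε := 1) one_pos
  let ε : ℝ := min (δ / 2) (η / 2)
  have hε : 0 < ε := by positivity
  have hε1 : ε < δ := lt_of_le_of_lt (min_le_left _ _) (by linarith)
  have hε2 : ε < η := lt_of_le_of_lt (min_le_right _ _) (by linarith)
  let T := hFfin.toFinset
  have hTF : ∀ t, t ∈ T ↔ t ∈ F := fun t => hFfin.mem_toFinset
  let Φ : S → ℝ := fun g => ∑ t ∈ T, (φ t ((g : C(K, X)) t)).re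
  have hΦc : Continuous Φ := by
    refine continuous_finsetSum _ fun t _ => ?_
    refine Complex.continuous_re.comp ((φ t).continuous.comp ?_)
    exact (continuous_eval_const (F := C(K, X)) t).comp continuous_subtype_val
  have hΦadd : ∀ (a b : ℝ) (g h : S), Φ (a • g + b • h) = a * Φ g + b * Φ h := by
    intro a b g h
    simp only [Φ, Finset.mul_sum, ← Finset.sum_add_distrib]
    refine Finset.sum_congr rfl fun t _ => ?_
    have : ((a • g + b • h : S) : C(K, X)) t
        = (a : ℂ) • (g : C(K, X)) t + (b : ℂ) • (h : C(K, X)) t := rfl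
    rw [this]
    simp
  have hre : ∀ t x, (φ t x).re ≤ ‖x‖ := by
    intro t x
    calc (φ t x).re ≤ ‖φ t x‖ := Complex.re_le_norm _
      _ ≤ ‖φ t‖ * ‖x‖ := (φ t).le_opNorm x
      _ ≤ 1 * ‖x‖ := by gcongr; exact hφ1 t
      _ = ‖x‖ := one_mul _
  have hsub : closure (convexHull ℝ
      {g : S | ‖g‖ ≤ 1 ∧ 2 - ε ≤ ‖(⟨f, hfS⟩ : S) - g‖}) ⊆ {g : S | Φ g ≤ T.card - 1} := by
    refine closure_minimal (convexHull_min ?_ ?_) (isClosed_le hΦc continuous_const)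
    · rintro g ⟨hg1, hg2⟩
      have hg1' : ∀ t, ‖(g : C(K, X)) t‖ ≤ 1 := fun t => (hev _ t).trans hg1
      obtain ⟨t, ht, hgt⟩ := hatt (f - (g : C(K, X))) (S.sub_mem hfS g.2)
      have h2 : 2 - ε ≤ ‖f t - (g : C(K, X)) t‖ := le_trans hg2 hgt
      have hft : ‖f t‖ ≤ 1 := hf1 ▸ hev f t
      have htF : t ∈ F := by
        by_contra hn
        have h3 := hgap t ht hn
        have h4 := norm_sub_le (f t) ((g : C(K, X)) t)
        have h5 := hg1' t
        linarith
      have hsmall : ‖f t + (g : C(K, X)) t‖ < 1 := by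
        by_contra hn
        push Not at hn
        have := huc hft (y := -((g : C(K, X)) t)) (by rw [norm_neg]; exact hg1' t)
          (by rw [sub_neg_eq_add]; exact hn)
        rw [← sub_eq_add_neg] at this
        linarith
      have h0 : (φ t ((g : C(K, X)) t)).re ≤ 0 := by
        have h6 := hre t (f t + (g : C(K, X)) t)
        rw [map_add, hφf, htF.2] at h6
        simp at h6
        linarith
      change ∑ s ∈ T, (φ s ((g : C(K, X)) s)).re ≤ T.card - 1
      have htT := (hTF t).2 htF
      rw [← Finset.add_sum_erase _ _ htT]
      have h7 : ∑ s ∈ T.erase t, (φ s ((g : C(K, X)) s)).re ≤ ∑ s ∈ T.erase t, (1 : ℝ) :=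
        Finset.sum_le_sum fun s _ => (hre s _).trans (hg1' s)
      rw [Finset.sum_const, nsmul_eq_mul, mul_one, Finset.cast_card_erase_of_mem htT] at h7
      linarith
    · intro g hg h hh a b ha hb hab
      change Φ _ ≤ _
      rw [hΦadd]
      have hg' : Φ g ≤ T.card - 1 := hg
      have hh' : Φ h ≤ T.card - 1 := hh
      calc a * Φ g + b * Φ h ≤ a * (T.card - 1) + b * (T.card - 1) := by gcongr
        _ = T.card - 1 := by rw [← add_mul, hab, one_mul]
  have hfin : Φ ⟨f, hfS⟩ ≤ T.card - 1 := hsub (hΔ ε hε)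
  have hΦf : Φ ⟨f, hfS⟩ = T.card := by
    change ∑ s ∈ T, (φ s (f s)).re = T.card
    rw [Finset.sum_congr rfl (g := fun _ => (1 : ℝ))]
    · simp
    · intro s hs
      rw [hφf, ((hTF s).1 hs).2]
      simp
  linarith
end

section
/- Let A be a uniform algebra on a compact Hausdorff space K and let Γ ⊆ K be a closed boundary for A in which the set of strong boundary points of A is dense (these properties hold for the Shilov boundary of A). For f ∈ A with ‖f‖_∞ = 1, the following are equivalent: (i) f is a Daugavet point of A (for every ε > 0 the closed unit ball B_A equals the closed convex hull of Δ_ε(f) = {g ∈ B_A : ‖f − g‖_∞ ≥ 2 − ε}); (ii) f is a Δ-point of A (f belongs to the closed convex hull of Δ_ε(f) for every ε > 0); (iii) there exists a limit point t₀ of Γ (t₀ ∈ Γ such that every neighborhood of t₀ meets Γ∖{t₀}) with |f(t₀)| = 1. -/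
set_option maxHeartbeats 1000000
set_option synthInstance.maxHeartbeats 1000000

lemma aux_poly (η : ℝ) (hη : 0 < η) : ∃ p : Polynomial ℂ, p.eval 0 = 0 ∧ ‖p.eval 1 - 1‖ ≤ η ∧
    ∀ z : ℂ, ‖z‖ ≤ 1 → ‖p.eval z‖ + ‖1 - p.eval z‖ ≤ 1 + η := by
  obtain ⟨L, hL⟩ : ∃ L : ℝ, L = 12 / η + 1 := ⟨_, rfl⟩
  have hLpos : 0 < L := by rw [hL]; positivity
  have h6 : 6 / L ≤ η / 2 := by
    rw [div_le_iff₀ hLpos, hL]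
    field_simp
    linarith
  have hL1 : 1 ≤ L := by
    rw [hL]
    have : 0 < 12 / η := by positivity
    linarith
  obtain ⟨r, hr⟩ : ∃ r : ℝ, r = 1 - Real.exp (-L) := ⟨_, rfl⟩
  have hr1 : r < 1 := by rw [hr]; linarith [Real.exp_pos (-L)]
  have hr0 : 0 < r := by
    have : Real.exp (-L) < 1 := by
      rw [← Real.exp_zero]; exact Real.exp_lt_exp.2 (by linarith)
    linarith
  have hunif := tendstoUniformlyOn_tsum_nat (u := fun k : ℕ => r ^ k)
    (f := fun (k : ℕ) (w : ℂ) => w ^ k / k) (s := {w | ‖w‖ ≤ r})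
    (summable_geometric_of_lt_one hr0.le hr1) (by
      intro n w hw
      rw [norm_div, norm_pow]
      rcases Nat.eq_zero_or_pos n with h | h
      · subst h; simp
      · have : (1:ℝ) ≤ n := by exact_mod_cast h
        rw [Complex.norm_natCast]
        calc ‖w‖ ^ n / n ≤ ‖w‖ ^ n := div_le_self (by positivity) this
          _ ≤ r ^ n := pow_le_pow_left₀ (norm_nonneg _) hw n)
  rw [Metric.tendstoUniformlyOn_iff] at hunif
  obtain ⟨N, hN⟩ := (hunif (η / 4) (by positivity)).exists
  have hq : ∀ z : ℂ, ‖z‖ ≤ 1 →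
      ‖-Complex.log (1 - r * z) / L - (∑ k ∈ Finset.range N, ((r:ℂ) * z) ^ k / k) / L‖ ≤ η / 4 := by
    intro z hz
    have hw : ‖(r:ℂ) * z‖ ≤ r := by
      rw [norm_mul, Complex.norm_real, Real.norm_of_nonneg hr0.le]
      nlinarith
    have h1 := hN (r * z) hw
    rw [(Complex.hasSum_taylorSeries_neg_log (lt_of_le_of_lt hw hr1)).tsum_eq, dist_eq_norm] at h1
    rw [← sub_div, norm_div, Complex.norm_real, Real.norm_of_nonneg hLpos.le]
    exact (div_le_self (norm_nonneg _) hL1).trans h1.le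
  let p : Polynomial ℂ := ∑ k ∈ Finset.range N, Polynomial.C ((r:ℂ) ^ k / k / L) * Polynomial.X ^ k
  have hp : ∀ z : ℂ, p.eval z = (∑ k ∈ Finset.range N, ((r:ℂ) * z) ^ k / k) / L := by
    intro z
    simp only [p, Polynomial.eval_finsetSum, Polynomial.eval_mul, Polynomial.eval_C,
      Polynomial.eval_pow, Polynomial.eval_X, Finset.sum_div]
    refine Finset.sum_congr rfl fun k _ => ?_
    rw [mul_pow]; ring
  refine ⟨p, ?_, ?_, ?_⟩
  · rw [hp, Finset.sum_eq_zero, zero_div]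
    intro k _
    rcases Nat.eq_zero_or_pos k with h | h
    · subst h; simp
    · rw [mul_zero, zero_pow h.ne', zero_div]
  · have := hq 1 (by simp)
    rw [← hp, mul_one] at this
    have h2 : -Complex.log (1 - r) / L = 1 := by
      have : (1 - r : ℂ) = ((Real.exp (-L) : ℝ) : ℂ) := by rw [hr]; push_cast; ring
      rw [this, ← Complex.ofReal_log (Real.exp_pos _).le, Real.log_exp]
      push_cast
      rw [neg_neg, div_self]
      exact_mod_cast hLpos.ne'
    rw [h2, norm_sub_rev] at this
    linarith
  · intro z hz
    have h1 := hq z hz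
    rw [← hp] at h1
    set q := -Complex.log (1 - r * z) / L with hqdef
    have hw : ‖(r:ℂ) * z‖ ≤ r := by
      rw [norm_mul, Complex.norm_real, Real.norm_of_nonneg hr0.le]
      nlinarith
    have hre : q.re = -Real.log ‖1 - r * z‖ / L := by
      rw [hqdef, Complex.div_ofReal_re, Complex.neg_re, Complex.log_re]
    have him : q.im = -Complex.arg (1 - r * z) / L := by
      rw [hqdef, Complex.div_ofReal_im, Complex.neg_im, Complex.log_im]
    have hlow : Real.exp (-L) ≤ ‖1 - r * z‖ := by
      have := norm_sub_norm_le (1:ℂ) (r * z)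
      rw [norm_one] at this
      linarith
    have hup : ‖1 - r * z‖ ≤ 2 := by
      have := norm_sub_le (1:ℂ) (r * z)
      rw [norm_one] at this
      linarith
    have hnpos := (Real.exp_pos (-L)).trans_le hlow
    have hl1 : -L ≤ Real.log ‖1 - r * z‖ := (Real.le_log_iff_exp_le hnpos).2 hlow
    have hl2 : Real.log ‖1 - r * z‖ ≤ 1 := by
      have := Real.log_le_sub_one_of_pos hnpos
      linarith
    have harg : |Complex.arg (1 - r * z)| ≤ 2 := by
      have : |Complex.arg (1 - r * z)| ≤ Real.pi / 2 := by
        rw [Complex.abs_arg_le_pi_div_two_iff]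
        have := Complex.re_le_norm (r * z)
        rw [Complex.sub_re, Complex.one_re]
        linarith
      linarith [Real.pi_le_four]
    have ha1 : q.re ≤ 1 := by rw [hre, div_le_one hLpos]; linarith
    have ha2 : -(1 / L) ≤ q.re := by
      rw [hre, ← neg_div]
      gcongr
    have hb : |q.im| ≤ 2 / L := by
      rw [him, abs_div, abs_neg, abs_of_pos hLpos]
      gcongr
    have hA : ‖q‖ ≤ |q.re| + |q.im| := Complex.norm_le_abs_re_add_abs_im q
    have hB : ‖1 - q‖ ≤ |1 - q.re| + |q.im| := by
      have := Complex.norm_le_abs_re_add_abs_im (1 - q)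
      simpa using this
    have hC : |1 - q.re| = 1 - q.re := abs_of_nonneg (by linarith)
    have e1 : 1 / L = (6 / L) / 6 := by ring
    have e2 : 2 / L = (6 / L) / 3 := by ring
    have hLp : 0 < 6 / L := by positivity
    have hD : |q.re| ≤ q.re + 2 * (1 / L) := by
      rw [abs_le]; constructor
      · linarith
      · linarith
    have hE : ‖p.eval z‖ ≤ ‖q‖ + η / 4 := by
      have := norm_sub_le q (q - p.eval z)
      rw [sub_sub_cancel] at this
      linarith
    have hF : ‖1 - p.eval z‖ ≤ ‖1 - q‖ + η / 4 := by
      have := norm_add_le (1 - q) (q - p.eval z)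
      rw [sub_add_sub_cancel] at this
      linarith
    linarith

lemma aux_u {K : Type*} [TopologicalSpace K] [CompactSpace K]
    (A : Subalgebra ℂ C(K, ℂ)) (t : K) (ht : IsStrongBoundaryPoint A t) (U : Set K)
    (hU : IsOpen U) (htU : t ∈ U) (η : ℝ) (hη : 0 < η) :
    ∃ u : A, ‖(u : C(K, ℂ)) t - 1‖ ≤ η ∧
      (∀ s, ‖(u : C(K, ℂ)) s‖ + ‖1 - (u : C(K, ℂ)) s‖ ≤ 1 + η) ∧
      ∀ s ∉ U, ‖(u : C(K, ℂ)) s‖ ≤ η := by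
  obtain ⟨p, hp0, hp1, hp⟩ := aux_poly η hη
  obtain ⟨h, hA, h1, hn, c, hc, hcU⟩ := ht U hU htU
  have hcont : ContinuousAt (fun z => p.eval z) 0 := p.continuous.continuousAt
  obtain ⟨d, hd, hpd⟩ := Metric.continuousAt_iff.1 hcont η hη
  have hc0 : max c 0 < 1 := max_lt hc one_pos
  obtain ⟨m, hm⟩ := exists_pow_lt_of_lt_one hd hc0
  let H : A := ⟨h, hA⟩
  have hev : ∀ s, ((Polynomial.aeval (H ^ m) p : A) : C(K, ℂ)) s = p.eval ((h s) ^ m) := by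
    intro s
    have := Polynomial.aeval_algHom_apply ((ContinuousMap.evalAlgHom ℂ ℂ s).comp A.val) (H ^ m) p
    rw [Polynomial.aeval_def, Polynomial.eval₂_eq_eval_map] at this
    simpa [H] using this.symm
  have hle : ∀ s, ‖h s‖ ≤ 1 := fun s => hn ▸ h.norm_coe_le_norm s
  refine ⟨Polynomial.aeval (H ^ m) p, ?_, ?_, ?_⟩
  · rw [hev, h1, one_pow]; exact hp1
  · intro s
    rw [hev]
    apply hp
    rw [norm_pow]
    exact pow_le_one₀ (norm_nonneg _) (hle s)
  · intro s hs
    rw [hev]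
    have : dist ((h s) ^ m) 0 < d := by
      rw [dist_zero_right, norm_pow]
      refine lt_of_le_of_lt ?_ hm
      exact pow_le_pow_left₀ (norm_nonneg _) ((hcU s hs).trans (le_max_left _ _)) m
    have := hpd this
    rw [hp0, dist_zero_right] at this
    exact this.le

lemma aux_x {K : Type*} [TopologicalSpace K] [CompactSpace K]
    (A : Subalgebra ℂ C(K, ℂ)) (t : K) (ht : IsStrongBoundaryPoint A t) (U : Set K)
    (hU : IsOpen U) (htU : t ∈ U) (η : ℝ) (hη : 0 < η) (hη1 : η ≤ 1) (f g : A)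
    (hf : ‖f‖ ≤ 1) (hg : ‖g‖ ≤ 1) (hft : 1 - η ≤ ‖(f : C(K, ℂ)) t‖) :
    ∃ x : A, ‖x‖ ≤ 1 ∧ 2 - 5 * η ≤ ‖f - x‖ ∧
      (∀ s, ‖(x : C(K, ℂ)) s - (g : C(K, ℂ)) s‖ ≤ 5) ∧
      ∀ s ∉ U, ‖(x : C(K, ℂ)) s - (g : C(K, ℂ)) s‖ ≤ 3 * η := by
  obtain ⟨u, hu1, hu2, hu3⟩ := aux_u A t ht U hU htU η hη
  have hfs : ∀ s, ‖(f : C(K, ℂ)) s‖ ≤ 1 := fun s => ((f : C(K, ℂ)).norm_coe_le_norm s).trans hf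
  have hgs : ∀ s, ‖(g : C(K, ℂ)) s‖ ≤ 1 := fun s => ((g : C(K, ℂ)).norm_coe_le_norm s).trans hg
  set c : ℂ := (f : C(K, ℂ)) t with hc
  let G : A := g * (1 - u) - c • u
  let k : ℂ := ((1 + η : ℝ) : ℂ)⁻¹
  have hGs : ∀ s, (G : C(K, ℂ)) s =
      (g : C(K, ℂ)) s * (1 - (u : C(K, ℂ)) s) - c * (u : C(K, ℂ)) s := by
    intro s; simp [G]
  have hxs : ∀ s, ((k • G : A) : C(K, ℂ)) s = k * (G : C(K, ℂ)) s := by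
    intro s; simp
  have hc1 : ‖c‖ ≤ 1 := hfs t
  have hGn : ∀ s, ‖(G : C(K, ℂ)) s‖ ≤ 1 + η := by
    intro s
    rw [hGs]
    refine (norm_sub_le _ _).trans ?_
    rw [norm_mul, norm_mul]
    have := hu2 s
    have a1 := mul_le_mul_of_nonneg_right (hgs s) (norm_nonneg (1 - (u : C(K, ℂ)) s))
    have a2 := mul_le_mul_of_nonneg_right hc1 (norm_nonneg ((u : C(K, ℂ)) s))
    linarith
  have hk : ‖k‖ = (1 + η)⁻¹ := by
    simp only [k, norm_inv, Complex.norm_real]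
    rw [Real.norm_of_nonneg (by linarith)]
  have hk1 : ‖k - 1‖ = η * (1 + η)⁻¹ := by
    have : k - 1 = ((-(η * (1 + η)⁻¹) : ℝ) : ℂ) := by
      have h0 : (1 + η : ℂ) ≠ 0 := by
        have : (1 + η) ≠ 0 := by linarith
        exact_mod_cast this
      simp only [k]; push_cast; field_simp; ring
    rw [this, Complex.norm_real, norm_neg, Real.norm_of_nonneg (by positivity)]
  have hxG : ∀ s, ‖k * (G : C(K, ℂ)) s - (G : C(K, ℂ)) s‖ ≤ η := by
    intro s
    have : k * (G : C(K, ℂ)) s - (G : C(K, ℂ)) s = (k - 1) * (G : C(K, ℂ)) s := by ring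
    rw [this, norm_mul, hk1]
    calc η * (1 + η)⁻¹ * ‖(G : C(K, ℂ)) s‖ ≤ η * (1 + η)⁻¹ * (1 + η) := by
          gcongr; exact hGn s
      _ = η := by field_simp
  have hxg : ∀ s, ‖((k • G : A) : C(K, ℂ)) s - (g : C(K, ℂ)) s‖ ≤ η + 2 * ‖(u : C(K, ℂ)) s‖ := by
    intro s
    rw [hxs]
    have e : k * (G : C(K, ℂ)) s - (g : C(K, ℂ)) s = (k * (G : C(K, ℂ)) s - (G : C(K, ℂ)) s) -
      ((g : C(K, ℂ)) s + c) * (u : C(K, ℂ)) s := by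
      have := hGs s
      linear_combination this
    rw [e]
    refine (norm_sub_le _ _).trans (add_le_add (hxG s) ?_)
    rw [norm_mul]
    gcongr
    exact (norm_add_le _ _).trans (by linarith [hgs s])
  refine ⟨k • G, ?_, ?_, ?_, ?_⟩
  · change ‖((k • G : A) : C(K, ℂ))‖ ≤ 1
    rw [ContinuousMap.norm_le _ zero_le_one]
    intro s
    rw [hxs, norm_mul, hk, inv_mul_le_iff₀ (by linarith)]
    linarith [hGn s]
  · have h1 : ‖((f - k • G : A) : C(K, ℂ)) t‖ ≤ ‖f - k • G‖ :=
      ContinuousMap.norm_coe_le_norm _ t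
    refine le_trans ?_ h1
    have e : ((f - k • G : A) : C(K, ℂ)) t = 2 * c - ((c + (g : C(K, ℂ)) t) * (1 - (u : C(K, ℂ)) t)
        + (k * (G : C(K, ℂ)) t - (G : C(K, ℂ)) t)) := by
      have e0 : ((f - k • G : A) : C(K, ℂ)) t = c - k * (G : C(K, ℂ)) t := by simp [hc]
      have := hGs t
      rw [e0]
      linear_combination (-1 : ℂ) * this
    rw [e]
    refine le_trans ?_ (norm_sub_norm_le _ _)
    have b1 : ‖(2:ℂ) * c‖ = 2 * ‖c‖ := by simp
    have b2 : ‖(c + (g : C(K, ℂ)) t) * (1 - (u : C(K, ℂ)) t)‖ ≤ 2 * η := by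
      rw [norm_mul]
      refine mul_le_mul ?_ ?_ (norm_nonneg _) (by norm_num)
      · exact (norm_add_le _ _).trans (by linarith [hgs t])
      · rw [norm_sub_rev]; exact hu1
    have b3 := norm_add_le ((c + (g : C(K, ℂ)) t) * (1 - (u : C(K, ℂ)) t))
      (k * (G : C(K, ℂ)) t - (G : C(K, ℂ)) t)
    have b4 := hxG t
    linarith
  · intro s
    have := hu2 s
    linarith [hxg s, norm_nonneg (1 - (u : C(K, ℂ)) s)]
  · intro s hs
    linarith [hxg s, hu3 s hs]

lemma aux_31 {K : Type*} [TopologicalSpace K] [CompactSpace K] [T2Space K]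
    (A : Subalgebra ℂ C(K, ℂ)) (Γ : Set K)
    (hΓdense : Γ ⊆ closure {t | t ∈ Γ ∧ IsStrongBoundaryPoint A t})
    (f : A) (hf1 : ‖f‖ = 1) (t₀ : K) (ht : t₀ ∈ closure (Γ \ {t₀}))
    (hft : ‖(f : C(K, ℂ)) t₀‖ = 1) (ε : ℝ) (hε : 0 < ε) (g : A) (hg : ‖g‖ ≤ 1) :
    g ∈ closure (convexHull ℝ {g : A | ‖g‖ ≤ 1 ∧ 2 - ε ≤ ‖f - g‖}) := by
  classical
  rw [Metric.mem_closure_iff]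
  intro ρ hρ
  obtain ⟨η, hηdef⟩ : ∃ η, η = min (ε / 5) (min (ρ / 8) 1) := ⟨_, rfl⟩
  have hη : 0 < η := by rw [hηdef]; positivity
  have hη1 : η ≤ 1 := by rw [hηdef]; exact (min_le_right _ _).trans (min_le_right _ _)
  have hηρ : η ≤ ρ / 8 := by rw [hηdef]; exact (min_le_right _ _).trans (min_le_left _ _)
  have hηε : η ≤ ε / 5 := by rw [hηdef]; exact min_le_left _ _
  obtain ⟨n, hn⟩ := exists_nat_gt (20 / ρ)
  have hn0 : (0:ℝ) < n := lt_trans (by positivity) hn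
  have hn5 : 5 / (n:ℝ) ≤ ρ / 4 := by
    rw [div_lt_iff₀ hρ] at hn
    rw [div_le_iff₀ hn0]
    linarith
  let W : Set K := {t | 1 - η < ‖(f : C(K, ℂ)) t‖}
  have hW : IsOpen W := isOpen_lt continuous_const (by fun_prop)
  have htW : t₀ ∈ W := by simp only [W, Set.mem_setOf_eq, hft]; linarith
  have hinf : ({t | t ∈ Γ ∧ IsStrongBoundaryPoint A t} ∩ W).Infinite := by
    intro hfin
    have hV : IsOpen (W \ (({t | t ∈ Γ ∧ IsStrongBoundaryPoint A t} ∩ W) \ {t₀})) :=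
      hW.sdiff (hfin.subset Set.diff_subset).isClosed
    obtain ⟨s, ⟨hs1, hs2⟩, hs3, hs4⟩ := mem_closure_iff.1 ht _ hV ⟨htW, by simp⟩
    have hV2 := hV.sdiff (isClosed_singleton (x := t₀))
    obtain ⟨q, ⟨⟨hq1, hq2⟩, hq3⟩, hq4⟩ := mem_closure_iff.1 (hΓdense hs3) _ hV2 ⟨⟨hs1, hs2⟩, hs4⟩
    exact hq2 ⟨⟨hq4, hq1⟩, hq3⟩
  obtain ⟨T, hTS, hTn⟩ := hinf.exists_subset_card_eq n
  obtain ⟨U, hU, hdisj⟩ := T.finite_toSet.t2_separation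
  have hx : ∀ i : K, ∃ x : A, i ∈ T → (‖x‖ ≤ 1 ∧ 2 - 5 * η ≤ ‖f - x‖ ∧
      (∀ s, ‖(x : C(K, ℂ)) s - (g : C(K, ℂ)) s‖ ≤ 5) ∧
      ∀ s ∉ U i, ‖(x : C(K, ℂ)) s - (g : C(K, ℂ)) s‖ ≤ 3 * η) := by
    intro i
    by_cases hi : i ∈ T
    · obtain ⟨⟨_, h1⟩, h2⟩ := hTS hi
      obtain ⟨x, hx⟩ := aux_x A i h1 (U i) (hU i).2 (hU i).1 η hη hη1 f g hf1.le hg h2.le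
      exact ⟨x, fun _ => hx⟩
    · exact ⟨0, fun h => absurd h hi⟩
  choose x hx using hx
  refine ⟨∑ i ∈ T, (1 / (n:ℝ)) • x i, ?_, ?_⟩
  · refine (convex_convexHull ℝ _).sum_mem (fun i _ => by positivity) ?_ ?_
    · rw [Finset.sum_const, hTn, nsmul_eq_mul]; field_simp
    · intro i hi
      refine subset_convexHull ℝ _ ⟨(hx i hi).1, ?_⟩
      linarith [(hx i hi).2.1]
  · rw [dist_comm, dist_eq_norm]
    refine lt_of_le_of_lt (b := 3 * η + 5 / n) ?_ (by linarith)
    change ‖((∑ i ∈ T, (1 / (n:ℝ)) • x i - g : A) : C(K, ℂ))‖ ≤ _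
    rw [ContinuousMap.norm_le _ (by positivity)]
    intro s
    have e : ((∑ i ∈ T, (1 / (n:ℝ)) • x i - g : A) : C(K, ℂ)) s =
        (1 / (n:ℂ)) * ∑ i ∈ T, ((x i : C(K, ℂ)) s - (g : C(K, ℂ)) s) := by
      have hn' : (n:ℂ) ≠ 0 := by exact_mod_cast hn0.ne'
      have e1 : ((∑ i ∈ T, (1 / (n:ℝ)) • x i - g : A) : C(K, ℂ)) s =
        (∑ i ∈ T, (1 / (n:ℂ)) * (x i : C(K, ℂ)) s) - (g : C(K, ℂ)) s := by
        simp [ContinuousMap.sum_apply]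
      rw [e1, Finset.sum_sub_distrib, Finset.sum_const, hTn, nsmul_eq_mul, mul_sub,
        ← Finset.mul_sum]
      field_simp
    rw [e, norm_mul]
    have h1 : ‖(1 / (n:ℂ))‖ = 1 / n := by simp
    have hcard : (T.filter (fun i => s ∈ U i)).card ≤ 1 := by
      rw [Finset.card_le_one]
      intro a ha b hb
      rw [Finset.mem_filter] at ha hb
      by_contra hab
      exact Set.disjoint_left.1 (hdisj ha.1 hb.1 hab) ha.2 hb.2
    have h2 : ‖∑ i ∈ T, ((x i : C(K, ℂ)) s - (g : C(K, ℂ)) s)‖ ≤ n * (3 * η) + 5 := by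
      calc _ ≤ ∑ i ∈ T, ‖((x i : C(K, ℂ)) s - (g : C(K, ℂ)) s)‖ := norm_sum_le _ _
        _ ≤ ∑ i ∈ T, (3 * η + if s ∈ U i then 5 else 0) := by
          refine Finset.sum_le_sum fun i hi => ?_
          split_ifs with h
          · linarith [(hx i hi).2.2.1 s]
          · linarith [(hx i hi).2.2.2 s h]
        _ = n * (3 * η) + (T.filter (fun i => s ∈ U i)).card * 5 := by
          rw [Finset.sum_add_distrib, Finset.sum_const, hTn, nsmul_eq_mul, ← Finset.sum_filter,
            Finset.sum_const, nsmul_eq_mul]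
        _ ≤ _ := by
          have : ((T.filter (fun i => s ∈ U i)).card : ℝ) ≤ 1 := by exact_mod_cast hcard
          linarith
    rw [h1]
    calc 1 / (n:ℝ) * _ ≤ 1 / (n:ℝ) * (n * (3 * η) + 5) := by gcongr
      _ = _ := by field_simp

lemma aux_23 {K : Type*} [TopologicalSpace K] [CompactSpace K] [T2Space K]
    (A : Subalgebra ℂ C(K, ℂ)) (Γ : Set K) (hΓclosed : IsClosed Γ)
    (hΓbd : ∀ g ∈ A, ∃ t ∈ Γ, ‖g t‖ = ‖g‖)
    (f : A) (hf1 : ‖f‖ = 1)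
    (h : ∀ ε > (0 : ℝ), f ∈ closure (convexHull ℝ {g : A | ‖g‖ ≤ 1 ∧ 2 - ε ≤ ‖f - g‖})) :
    ∃ t₀ ∈ Γ, t₀ ∈ closure (Γ \ {t₀}) ∧ ‖(f : C(K, ℂ)) t₀‖ = 1 := by
  by_contra! hcon
  let H : Set K := {t | t ∈ Γ ∧ ‖(f : C(K, ℂ)) t‖ = 1}
  have hHclosed : IsClosed H :=
    hΓclosed.inter (isClosed_eq (f := fun t => ‖(f : C(K, ℂ)) t‖) (by fun_prop) continuous_const)
  have hHfin : H.Finite := by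
    by_contra hinf
    obtain ⟨x, hxH, hx⟩ := Set.Infinite.exists_accPt_of_subset_isCompact hinf
      hHclosed.isCompact subset_rfl
    rw [accPt_principal_iff_clusterPt, ← mem_closure_iff_clusterPt] at hx
    exact hcon x hxH.1 (closure_mono (Set.diff_subset_diff_left fun y hy => hy.1) hx) hxH.2
  have hfs : ∀ s, ‖(f : C(K, ℂ)) s‖ ≤ 1 := fun s =>
    ((f : C(K, ℂ)).norm_coe_le_norm s).trans hf1.le
  have hDclosed : IsClosed (Γ \ H) := by
    refine isClosed_of_closure_subset fun x hx => ?_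
    have hxΓ : x ∈ Γ := hΓclosed.closure_subset_iff.2 Set.diff_subset hx
    refine ⟨hxΓ, fun hxH => hcon x hxΓ (closure_mono ?_ hx) hxH.2⟩
    rintro y ⟨hy1, hy2⟩
    refine ⟨hy1, fun hyx => hy2 ?_⟩
    rw [Set.mem_singleton_iff] at hyx
    rw [hyx]; exact hxH
  obtain ⟨δ, hδ, hδD⟩ : ∃ δ > 0, ∀ t ∈ Γ \ H, ‖(f : C(K, ℂ)) t‖ ≤ 1 - δ := by
    rcases (Γ \ H).eq_empty_or_nonempty with he | hne
    · exact ⟨1, one_pos, by simp [he]⟩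
    · obtain ⟨x, hx, hmax⟩ := hDclosed.isCompact.exists_isMaxOn hne
        (f := fun t => ‖(f : C(K, ℂ)) t‖) (by fun_prop)
      refine ⟨1 - ‖(f : C(K, ℂ)) x‖, ?_, ?_⟩
      · have : ‖(f : C(K, ℂ)) x‖ ≠ 1 := fun h' => hx.2 ⟨hx.1, h'⟩
        have := lt_of_le_of_ne (hfs x) this
        linarith
      · intro t ht
        have : ‖(f : C(K, ℂ)) t‖ ≤ ‖(f : C(K, ℂ)) x‖ := hmax ht
        linarith
  let φ : A → ℝ := fun g => ∑ t ∈ hHfin.toFinset,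
    ((starRingEnd ℂ) ((f : C(K, ℂ)) t) * (g : C(K, ℂ)) t).re
  have hlin : IsLinearMap ℝ φ := by
    constructor
    · intro x y
      simp only [φ, ← Finset.sum_add_distrib]
      refine Finset.sum_congr rfl fun t _ => ?_
      rw [← Complex.add_re, ← mul_add]; rfl
    · intro a x
      simp only [φ, smul_eq_mul, Finset.mul_sum]
      refine Finset.sum_congr rfl fun t _ => ?_
      have : ((a • x : A) : C(K, ℂ)) t = (a : ℂ) * (x : C(K, ℂ)) t := by simp
      rw [this, mul_left_comm, Complex.re_ofReal_mul]
  have hcont : Continuous φ := by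
    refine continuous_finsetSum _ fun t _ => Complex.continuous_re.comp (continuous_const.mul ?_)
    exact (continuous_eval_const (F := C(K, ℂ)) t).comp continuous_subtype_val
  obtain ⟨ε, hεdef⟩ : ∃ ε, ε = min (δ / 2) (1 / 2) := ⟨_, rfl⟩
  have hε : 0 < ε := by rw [hεdef]; positivity
  have hε1 : ε ≤ δ / 2 := by rw [hεdef]; exact min_le_left _ _
  have hε2 : ε ≤ 1 / 2 := by rw [hεdef]; exact min_le_right _ _
  have hsub : closure (convexHull ℝ {g : A | ‖g‖ ≤ 1 ∧ 2 - ε ≤ ‖f - g‖}) ⊆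
      {g : A | φ g ≤ hHfin.toFinset.card - 1} := by
    refine closure_minimal (convexHull_min ?_ (convex_halfSpace_le hlin _))
      (isClosed_le hcont continuous_const)
    rintro g ⟨hg, hfg⟩
    have hgs : ∀ s, ‖(g : C(K, ℂ)) s‖ ≤ 1 := fun s => ((g : C(K, ℂ)).norm_coe_le_norm s).trans hg
    obtain ⟨t, htΓ, ht⟩ := hΓbd _ (f - g).2
    have ht' : 2 - ε ≤ ‖(f : C(K, ℂ)) t - (g : C(K, ℂ)) t‖ := by
      refine hfg.trans (le_of_eq ?_)
      exact ht.symm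
    have htH : t ∈ H := by
      by_contra hn
      have := hδD t ⟨htΓ, hn⟩
      have := norm_sub_le ((f : C(K, ℂ)) t) ((g : C(K, ℂ)) t)
      linarith [hgs t]
    have hle1 : ∀ s, ((starRingEnd ℂ) ((f : C(K, ℂ)) s) * (g : C(K, ℂ)) s).re ≤ 1 := by
      intro s
      refine (Complex.re_le_norm _).trans ?_
      rw [norm_mul, RCLike.norm_conj]
      exact mul_le_one₀ (hfs s) (norm_nonneg _) (hgs s)
    have hle0 : ((starRingEnd ℂ) ((f : C(K, ℂ)) t) * (g : C(K, ℂ)) t).re ≤ 0 := by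
      have h1 : ‖(f : C(K, ℂ)) t - (g : C(K, ℂ)) t‖ ^ 2 = ‖(f : C(K, ℂ)) t‖ ^ 2
          + ‖(g : C(K, ℂ)) t‖ ^ 2
          - 2 * ((starRingEnd ℂ) ((f : C(K, ℂ)) t) * (g : C(K, ℂ)) t).re := by
        simp only [Complex.sq_norm, Complex.normSq_apply, Complex.sub_re, Complex.sub_im,
          Complex.mul_re, Complex.conj_re, Complex.conj_im]
        ring
      have h2 := hgs t
      have h3 := hfs t
      nlinarith [norm_nonneg ((g : C(K, ℂ)) t), norm_nonneg ((f : C(K, ℂ)) t)]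
    have htm : t ∈ hHfin.toFinset := hHfin.mem_toFinset.2 htH
    change φ g ≤ _
    simp only [φ]
    classical
    rw [← Finset.add_sum_erase _ _ htm]
    have := Finset.sum_le_card_nsmul (hHfin.toFinset.erase t)
      (fun t => ((starRingEnd ℂ) ((f : C(K, ℂ)) t) * (g : C(K, ℂ)) t).re) 1 (fun s _ => hle1 s)
    rw [nsmul_eq_mul, mul_one, Finset.cast_card_erase_of_mem htm] at this
    linarith
  have hf := hsub (h ε hε)
  have hφf : φ f = hHfin.toFinset.card := by
    simp only [φ]
    rw [Finset.sum_congr rfl (g := fun _ => (1:ℝ)), Finset.sum_const, nsmul_eq_mul, mul_one]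
    intro t ht
    have h1 := (hHfin.mem_toFinset.1 ht).2
    rw [← Complex.normSq_eq_conj_mul_self, Complex.ofReal_re, Complex.normSq_eq_norm_sq, h1]
    norm_num
  have : φ f ≤ hHfin.toFinset.card - 1 := hf
  linarith

/- STATEMENT 15: Let `A` be a uniform algebra on a compact Hausdorff space `K` and
`Γ` a closed boundary for `A` in which the strong boundary points of `A` are dense.
For `f ∈ A` with `‖f‖ = 1`, the following are equivalent: (i) `f` is a Daugavet
point; (ii) `f` is a Δ-point; (iii) there is a limit point `t₀` of `Γ` with
`|f(t₀)| = 1`. -/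
theorem stmt_15 {K : Type*} [TopologicalSpace K] [CompactSpace K] [T2Space K]
    (A : Subalgebra ℂ C(K, ℂ)) (hAclosed : IsClosed (A : Set C(K, ℂ)))
    (hAsep : ∀ s t : K, s ≠ t → ∃ g ∈ A, g s ≠ g t)
    (Γ : Set K) (hΓclosed : IsClosed Γ)
    (hΓbd : ∀ g ∈ A, ∃ t ∈ Γ, ‖g t‖ = ‖g‖)
    (hΓdense : Γ ⊆ closure {t | t ∈ Γ ∧ IsStrongBoundaryPoint A t})
    (f : A) (hf1 : ‖f‖ = 1) :
    ((∀ ε > (0 : ℝ),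
        Metric.closedBall (0 : A) 1 =
          closure (convexHull ℝ {g : A | ‖g‖ ≤ 1 ∧ 2 - ε ≤ ‖f - g‖})) ↔
      (∀ ε > (0 : ℝ),
        f ∈ closure (convexHull ℝ {g : A | ‖g‖ ≤ 1 ∧ 2 - ε ≤ ‖f - g‖}))) ∧
    ((∀ ε > (0 : ℝ),
        f ∈ closure (convexHull ℝ {g : A | ‖g‖ ≤ 1 ∧ 2 - ε ≤ ‖f - g‖})) ↔
      (∃ t₀ ∈ Γ, t₀ ∈ closure (Γ \ {t₀}) ∧ ‖(f : C(K, ℂ)) t₀‖ = 1)) := by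
  have h31 : (∃ t₀ ∈ Γ, t₀ ∈ closure (Γ \ {t₀}) ∧ ‖(f : C(K, ℂ)) t₀‖ = 1) → ∀ ε > (0 : ℝ),
      Metric.closedBall (0 : A) 1 =
        closure (convexHull ℝ {g : A | ‖g‖ ≤ 1 ∧ 2 - ε ≤ ‖f - g‖}) := by
    rintro ⟨t₀, _, ht, hft⟩ ε hε
    refine Set.Subset.antisymm ?_ ?_
    · intro g hg
      exact aux_31 A Γ hΓdense f hf1 t₀ ht hft ε hε g (mem_closedBall_zero_iff.1 hg)
    · refine closure_minimal (convexHull_min ?_ (convex_closedBall _ _)) Metric.isClosed_closedBall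
      exact fun g hg => mem_closedBall_zero_iff.2 hg.1
  have h12 : (∀ ε > (0 : ℝ), Metric.closedBall (0 : A) 1 =
        closure (convexHull ℝ {g : A | ‖g‖ ≤ 1 ∧ 2 - ε ≤ ‖f - g‖})) → ∀ ε > (0 : ℝ),
        f ∈ closure (convexHull ℝ {g : A | ‖g‖ ≤ 1 ∧ 2 - ε ≤ ‖f - g‖}) := by
    intro h ε hε
    rw [← h ε hε]
    exact mem_closedBall_zero_iff.2 hf1.le
  have h23 := aux_23 A Γ hΓclosed hΓbd f hf1
  exact ⟨⟨h12, fun h => h31 (h23 h)⟩, ⟨h23, fun h => h12 (h31 h)⟩⟩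
end

section
/- Let K be a compact Hausdorff space, X a uniformly convex complex Banach space, and S an X-valued function space over a uniform algebra on K with base algebra A := {x* ∘ f : f ∈ S, x* ∈ X*}. Let Γ ⊆ K be a closed boundary for A in which the set of strong boundary points of A is dense (these properties hold for the Shilov boundary of A). If every f ∈ S with ‖f‖ = 1 is a Δ-point of S (i.e., f belongs to the closed convex hull of {g ∈ B_S : ‖f − g‖ ≥ 2 − ε} for every ε > 0), then Γ has no isolated points. -/
set_option maxHeartbeats 1000000
set_option synthInstance.maxHeartbeats 1000000

/- STATEMENT 16: Let `X` be a uniformly convex complex Banach space and `S` an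
`X`-valued function space over a uniform algebra on the compact Hausdorff space `K`
with base algebra `A = {x* ∘ f : f ∈ S, x* ∈ X*}`. Let `Γ` be a closed boundary for
`A` in which the strong boundary points of `A` are dense. If every norm-one `f ∈ S`
is a Δ-point of `S`, then `Γ` has no isolated points. -/
theorem stmt_16 {K : Type*} [TopologicalSpace K] [CompactSpace K] [T2Space K]
    {X : Type*} [NormedAddCommGroup X] [NormedSpace ℂ X] [CompleteSpace X]
    [UniformConvexSpace X]
    (S : Submodule ℂ C(K, X)) (hSclosed : IsClosed (S : Set C(K, X)))
    (A : Subalgebra ℂ C(K, ℂ))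
    (hAbase : (A : Set C(K, ℂ)) =
      {g : C(K, ℂ) | ∃ f ∈ S, ∃ φ : X →L[ℂ] ℂ, ∀ t : K, g t = φ (f t)})
    (hAclosed : IsClosed (A : Set C(K, ℂ)))
    (hAsep : ∀ s t : K, s ≠ t → ∃ g ∈ A, g s ≠ g t)
    (hmul : ∀ φ ∈ A, ∀ f ∈ S, φ • f ∈ S)
    (Γ : Set K) (hΓclosed : IsClosed Γ)
    (hΓbd : ∀ g ∈ A, ∃ t ∈ Γ, ‖g t‖ = ‖g‖)
    (hΓdense : Γ ⊆ closure {t | t ∈ Γ ∧ IsStrongBoundaryPoint A t})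
    (hΔall : ∀ f : S, ‖f‖ = 1 →
      ∀ ε > (0 : ℝ), f ∈ closure (convexHull ℝ {g : S | ‖g‖ ≤ 1 ∧ 2 - ε ≤ ‖f - g‖})) :
    ∀ t ∈ Γ, t ∈ closure (Γ \ {t}) := by
  classical
  have hnorm : ∀ f ∈ S, ∀ M : ℝ, 0 ≤ M → (∀ s ∈ Γ, ‖f s‖ ≤ M) → ‖f‖ ≤ M := by
    intro f hf M hM hs
    rw [ContinuousMap.norm_le _ hM]
    intro x
    obtain ⟨φ, hφ1, hφ2⟩ := exists_dual_vector'' ℂ (f x)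
    have hg : (⟨fun y => φ (f y), by fun_prop⟩ : C(K, ℂ)) ∈ A := by
      change _ ∈ (A : Set C(K, ℂ))
      rw [hAbase]
      exact ⟨f, hf, φ, fun _ => rfl⟩
    obtain ⟨s, hsΓ, hsn⟩ := hΓbd _ hg
    have h1 := ContinuousMap.norm_coe_le_norm (⟨fun y => φ (f y), by fun_prop⟩ : C(K, ℂ)) x
    rw [← hsn] at h1
    simp only [ContinuousMap.coe_mk] at h1
    rw [hφ2] at h1
    have h2 : ‖φ (f s)‖ ≤ ‖f s‖ := by
      have := φ.le_of_opNorm_le hφ1 (f s)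
      linarith
    have h3 := hs s hsΓ
    simp at h1
    linarith
  intro t ht
  by_contra hcl
  have hUo : IsOpen (closure (Γ \ {t}))ᶜ := isClosed_closure.isOpen_compl
  have hU : ∀ s ∈ Γ, s ≠ t → s ∉ (closure (Γ \ {t}))ᶜ := by
    intro s hs hst h
    exact h (subset_closure ⟨hs, hst⟩)
  have hsb : IsStrongBoundaryPoint A t := by
    obtain ⟨s, hsU, hsΓ, hs⟩ := mem_closure_iff.1 (hΓdense ht) _ hUo hcl
    by_cases hst : s = t
    · rwa [← hst]
    · exact absurd hsU (hU s hsΓ hst)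
  obtain ⟨h, hA, ht1, hn1, c, hc1, hc⟩ := hsb _ hUo hcl
  -- a function in S nonvanishing at t
  have hone : (1 : C(K, ℂ)) ∈ (A : Set C(K, ℂ)) := A.one_mem
  rw [hAbase] at hone
  obtain ⟨f, hf, φ, hφ⟩ := hone
  have hft : f t ≠ 0 := by
    intro h0
    have := hφ t
    rw [h0] at this
    simp at this
  have hftp : 0 < ‖f t‖ := norm_pos_iff.2 hft
  set d := max c 0 with hd
  have hd0 : 0 ≤ d := le_max_right _ _
  have hd1 : d < 1 := max_lt hc1 one_pos
  have hlim : Filter.Tendsto (fun n : ℕ => d ^ n * (‖f t‖⁻¹ * ‖f‖)) Filter.atTop (nhds 0) := by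
    simpa using (tendsto_pow_atTop_nhds_zero_of_lt_one hd0 hd1).mul_const (‖f t‖⁻¹ * ‖f‖)
  obtain ⟨n, hn⟩ := (hlim.eventually (gt_mem_nhds (show (0 : ℝ) < 1 / 2 by norm_num))).exists
  let F : C(K, X) := ((‖f t‖⁻¹ : ℝ) : ℂ) • ((h ^ n) • f)
  have hFS : F ∈ S := S.smul_mem _ (hmul _ (A.pow_mem hA n) _ hf)
  have hFv : ∀ s, F s = ((‖f t‖⁻¹ : ℝ) : ℂ) • ((h s) ^ n • f s) := fun s => rfl
  have hFt : ‖F t‖ = 1 := by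
    rw [hFv, ht1, norm_smul]
    simp [hftp.ne']
  have hFoff : ∀ s ∈ Γ, s ≠ t → ‖F s‖ ≤ 1 / 2 := by
    intro s hs hst
    have h1 : ‖h s‖ ≤ d := (hc s (hU s hs hst)).trans (le_max_left _ _)
    have h2 : ‖f s‖ ≤ ‖f‖ := f.norm_coe_le_norm s
    have h3 : ‖h s‖ ^ n ≤ d ^ n := pow_le_pow_left₀ (norm_nonneg _) h1 n
    rw [hFv, norm_smul, norm_smul, norm_pow, Complex.norm_real, norm_inv, norm_norm]
    calc ‖f t‖⁻¹ * (‖h s‖ ^ n * ‖f s‖) ≤ ‖f t‖⁻¹ * (d ^ n * ‖f‖) := by gcongr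
      _ = d ^ n * (‖f t‖⁻¹ * ‖f‖) := by ring
      _ ≤ 1 / 2 := hn.le
  have hFn : ‖F‖ = 1 := by
    apply le_antisymm
    · apply hnorm F hFS 1 zero_le_one
      intro s hs
      by_cases hst : s = t
      · rw [hst, hFt]
      · exact (hFoff s hs hst).trans (by norm_num)
    · rw [← hFt]; exact F.norm_coe_le_norm t
  obtain ⟨δ, hδ, huc⟩ := exists_forall_closed_ball_dist_add_le_two_sub X (show (0 : ℝ) < 1 by norm_num)
  have hε : 0 < min (δ / 2) (1 / 4) := by positivity
  have hmem := hΔall ⟨F, hFS⟩ hFn _ hε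
  let C : Set S := {g : S | ‖F t + (g : C(K, X)) t‖ ≤ 1}
  have hCc : IsClosed C := by
    have : Continuous fun g : S => ‖F t + (g : C(K, X)) t‖ := by
      have : Continuous fun g : S => (g : C(K, X)) t :=
        (continuous_eval_const (F := C(K, X)) t).comp continuous_subtype_val
      fun_prop
    exact isClosed_le this continuous_const
  have hCconv : Convex ℝ C := by
    intro g₁ h₁ g₂ h₂ a b ha hb hab
    simp only [C, Set.mem_ofPred_eq] at h₁ h₂ ⊢
    have e : F t + ((a • g₁ + b • g₂ : S) : C(K, X)) t
        = a • (F t + (g₁ : C(K, X)) t) + b • (F t + (g₂ : C(K, X)) t) := by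
      have e1 : ((a • g₁ + b • g₂ : S) : C(K, X)) t
        = a • (g₁ : C(K, X)) t + b • (g₂ : C(K, X)) t := rfl
      have e2 : F t = a • F t + b • F t := by rw [← add_smul, hab, one_smul]
      rw [e1, smul_add, smul_add]
      nth_rewrite 1 [e2]
      abel
    rw [e]
    refine (norm_add_le _ _).trans ?_
    rw [norm_smul, norm_smul, Real.norm_of_nonneg ha, Real.norm_of_nonneg hb]
    nlinarith
  have hsub : {g : S | ‖g‖ ≤ 1 ∧ 2 - min (δ / 2) (1 / 4) ≤ ‖(⟨F, hFS⟩ : S) - g‖} ⊆ C := by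
    rintro g ⟨hg1, hg2⟩
    change ‖F t + (g : C(K, X)) t‖ ≤ 1
    by_contra hlt
    push Not at hlt
    have hgs : ∀ s, ‖(g : C(K, X)) s‖ ≤ 1 := fun s =>
      ((g : C(K, X)).norm_coe_le_norm s).trans hg1
    have key := huc hFt.le (show ‖-(g : C(K, X)) t‖ ≤ 1 by rw [norm_neg]; exact hgs t)
      (by rw [sub_neg_eq_add]; exact hlt.le)
    rw [← sub_eq_add_neg] at key
    have hle : ‖F - (g : C(K, X))‖ ≤ max (3 / 2) (2 - δ) := by
      apply hnorm _ (S.sub_mem hFS g.2) _ (le_trans (by norm_num) (le_max_left _ _))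
      intro s hs
      rw [ContinuousMap.sub_apply]
      by_cases hst : s = t
      · rw [hst]; exact key.trans (le_max_right _ _)
      · refine le_trans ?_ (le_max_left _ _)
        have := norm_sub_le (F s) ((g : C(K, X)) s)
        have := hFoff s hs hst
        have := hgs s
        linarith
    have hg2' : 2 - min (δ / 2) (1 / 4) ≤ ‖F - (g : C(K, X))‖ := hg2
    have m1 := min_le_left (δ / 2) (1 / 4 : ℝ)
    have m2 := min_le_right (δ / 2) (1 / 4 : ℝ)
    rcases le_max_iff.1 hle with h' | h' <;> linarith
  have hfin : (⟨F, hFS⟩ : S) ∈ C := closure_minimal (convexHull_min hsub hCconv) hCc hmem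
  have hfin' : ‖F t + F t‖ ≤ 1 := hfin
  rw [← two_smul ℝ, norm_smul, hFt] at hfin'
  norm_num at hfin'
end

section
/- Let A be a uniform algebra on a compact Hausdorff space K and let Γ ⊆ K be a closed boundary for A in which the set of strong boundary points of A is dense (these properties hold for the Shilov boundary of A). Then the following are equivalent: (i) A has the Daugavet property (every rank-one bounded linear operator T : A → A satisfies ‖I + T‖ = 1 + ‖T‖); (ii) A has the diametral diameter two property (for every relatively weakly open subset U of B_A, every f ∈ U with ‖f‖_∞ = 1, and every ε > 0, there exists g ∈ U with ‖f − g‖_∞ ≥ 2 − ε); (iii) A has the diametral local diameter two property (for every slice S of B_A, every f ∈ S with ‖f‖_∞ = 1, and every ε > 0, there exists g ∈ S with ‖f − g‖_∞ ≥ 2 − ε); (iv) Γ has no isolated points. -/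
set_option maxHeartbeats 1000000
set_option synthInstance.maxHeartbeats 1000000

theorem ua_apply_le {K : Type*} [TopologicalSpace K] [CompactSpace K]
    {A : Subalgebra ℂ C(K, ℂ)} (f : A) (t : K) : ‖(f : C(K, ℂ)) t‖ ≤ ‖f‖ :=
  ContinuousMap.norm_coe_le_norm (f : C(K, ℂ)) t

theorem ua_norm_le {K : Type*} [TopologicalSpace K] [CompactSpace K]
    {A : Subalgebra ℂ C(K, ℂ)} (f : A) {C : ℝ} (hC : 0 ≤ C)
    (h : ∀ t, ‖(f : C(K, ℂ)) t‖ ≤ C) : ‖f‖ ≤ C :=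
  (ContinuousMap.norm_le (f : C(K, ℂ)) hC).2 h

/-- The Moebius estimate. -/
theorem moebius_le {a : ℝ} (h0 : 0 < a) (h1 : a < 1) {z q : ℂ} (hz : ‖z‖ ≤ 1)
    (hq : (1 - a * z) * q = 1) :
    ‖1 - (1 - a) * (1 + z) * q‖ ≤ 1 := by
  have hne : (1 - a * z : ℂ) ≠ 0 := left_ne_zero_of_mul_eq_one hq
  have e : 1 - (1 - a) * (1 + z) * q = (a - z) * q := by
    linear_combination (-1 : ℂ) * hq
  have hq' : ‖1 - a * z‖ * ‖q‖ = 1 := by rw [← norm_mul, hq, norm_one]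
  have key : ‖(a : ℂ) - z‖ ≤ ‖1 - a * z‖ := by
    rw [← sq_le_sq₀ (norm_nonneg _) (norm_nonneg _)]
    have hz2 : ‖z‖ ^ 2 ≤ 1 := by nlinarith [norm_nonneg z]
    rw [← Complex.normSq_eq_norm_sq, ← Complex.normSq_eq_norm_sq]
    rw [← Complex.normSq_eq_norm_sq] at hz2
    simp only [Complex.normSq_apply, Complex.sub_re, Complex.sub_im, Complex.ofReal_re,
      Complex.ofReal_im, Complex.one_re, Complex.one_im, Complex.mul_re, Complex.mul_im] at *
    nlinarith [mul_nonneg (show 0 ≤ 1 - a^2 by nlinarith) (sub_nonneg.2 hz2)]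
  rw [e, norm_mul, ← hq']
  gcongr

theorem peak_function {K : Type*} [TopologicalSpace K] [CompactSpace K]
    (A : Subalgebra ℂ C(K, ℂ)) (hAclosed : IsClosed (A : Set C(K, ℂ)))
    {t₀ : K} (ht : IsStrongBoundaryPoint A t₀) {U : Set K} (hU : IsOpen U) (hm : t₀ ∈ U)
    {ε : ℝ} (hε : 0 < ε) :
    ∃ p : A, (p : C(K, ℂ)) t₀ = 1 ∧ (∀ t, ‖(p : C(K, ℂ)) t‖ ≤ 1) ∧
      (∀ t, ‖1 - (p : C(K, ℂ)) t‖ ≤ 1) ∧ ∀ t ∉ U, ‖(p : C(K, ℂ)) t‖ ≤ ε := by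
  obtain ⟨h, hA, h1, hn, c, hc, hcU⟩ := ht U hU hm
  have : CompleteSpace A := hAclosed.completeSpace_coe
  obtain ⟨a, ha0, ha1, hac⟩ : ∃ a : ℝ, 0 < a ∧ a < 1 ∧ (1 - a) ≤ ε * (1 - c) := by
    have : 0 < ε * (1 - c) := mul_pos hε (by linarith)
    refine ⟨1 - min (ε * (1 - c)) (1/2), ?_, ?_, ?_⟩
    · have := min_le_right (ε * (1 - c)) (1/2); linarith
    · have := lt_min this (show (0:ℝ) < 1/2 by norm_num); linarith
    · have := min_le_left (ε * (1 - c)) (1/2); linarith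
  let H : A := ⟨h, hA⟩
  have hH : ‖((a : ℂ) • H : A)‖ < 1 := by
    refine lt_of_le_of_lt (norm_smul_le _ _) ?_
    have : ‖H‖ = 1 := hn
    rw [this, mul_one, Complex.norm_real, Real.norm_of_nonneg ha0.le]
    exact ha1
  obtain ⟨u, hu⟩ := isUnit_one_sub_of_norm_lt_one hH
  have hq0 : (1 - (a : ℂ) • H) * (↑u⁻¹ : A) = 1 := by rw [← hu]; exact u.mul_inv
  obtain ⟨q, hqd⟩ : ∃ q : A, q = (↑u⁻¹ : A) := ⟨_, rfl⟩
  rw [← hqd] at hq0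
  have hq : ∀ t, (1 - a * h t) * (q : C(K, ℂ)) t = 1 := by
    intro t
    have := congrArg (fun f : A => (f : C(K, ℂ)) t) hq0
    simpa [H] using this
  have hz : ∀ t, ‖h t‖ ≤ 1 := fun t => hn ▸ ContinuousMap.norm_coe_le_norm h t
  let p : A := (((1 - a) / 2 : ℂ)) • ((1 + H) * q)
  have hp : ∀ t, (p : C(K, ℂ)) t = (1 - a) / 2 * ((1 + h t) * (q : C(K, ℂ)) t) := by
    intro t; simp [p, H]
  have hm1 : ∀ t, ‖1 - 2 * (p : C(K, ℂ)) t‖ ≤ 1 := by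
    intro t
    have := moebius_le ha0 ha1 (hz t) (hq t)
    rw [hp]; convert this using 2; ring
  refine ⟨p, ?_, ?_, ?_, ?_⟩
  · have := hq t₀
    rw [h1] at this
    rw [hp, h1]; linear_combination this
  · intro t
    have h2 : (p : C(K, ℂ)) t = 1/2 * (1 - (1 - 2 * (p : C(K, ℂ)) t)) := by ring
    have h3 := norm_sub_le (1:ℂ) (1 - 2 * (p : C(K, ℂ)) t)
    rw [h2, norm_mul]
    norm_num at h3 ⊢
    linarith [hm1 t]
  · intro t
    have h2 : 1 - (p : C(K, ℂ)) t = 1/2 * (1 + (1 - 2 * (p : C(K, ℂ)) t)) := by ring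
    have h3 := norm_add_le (1:ℂ) (1 - 2 * (p : C(K, ℂ)) t)
    rw [h2, norm_mul]
    norm_num at h3 ⊢
    linarith [hm1 t]
  · intro t htU
    have h5 := hcU t htU
    have h6 : 1 - c ≤ ‖1 - a * h t‖ := by
      have := norm_sub_norm_le (1:ℂ) (a * h t)
      rw [norm_one, norm_mul, Complex.norm_real, Real.norm_of_nonneg ha0.le] at this
      nlinarith [norm_nonneg (h t)]
    have h7 : ‖1 - a * h t‖ * ‖(q : C(K, ℂ)) t‖ = 1 := by rw [← norm_mul, hq, norm_one]
    have h8 : (1 - c) * ‖(q : C(K, ℂ)) t‖ ≤ 1 :=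
      (mul_le_mul_of_nonneg_right h6 (norm_nonneg _)).trans h7.le
    have h9 : ‖1 + h t‖ ≤ 2 := by
      have := norm_add_le (1:ℂ) (h t); rw [norm_one] at this; linarith [hz t]
    have h10 : ‖((1 - a) / 2 : ℂ)‖ = (1 - a) / 2 := by
      have : ((1 - a) / 2 : ℂ) = (((1 - a) / 2 : ℝ) : ℂ) := by push_cast; ring
      rw [this, Complex.norm_real, Real.norm_of_nonneg (by linarith)]
    rw [hp, norm_mul, norm_mul, h10]
    calc (1 - a) / 2 * (‖1 + h t‖ * ‖(q : C(K, ℂ)) t‖)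
        ≤ (1 - a) / 2 * (2 * ‖(q : C(K, ℂ)) t‖) := by
          gcongr
      _ = (1 - a) * ‖(q : C(K, ℂ)) t‖ := by ring
      _ ≤ ε * (1 - c) * ‖(q : C(K, ℂ)) t‖ := by gcongr
      _ = ε * ((1 - c) * ‖(q : C(K, ℂ)) t‖) := by ring
      _ ≤ ε * 1 := by gcongr
      _ = ε := mul_one _

theorem infinite_sbp {K : Type*} [TopologicalSpace K] [T2Space K]
    (Γ S : Set K) (hS : Γ ⊆ closure S)
    (hiv : ∀ t ∈ Γ, t ∈ closure (Γ \ {t})) {t₀ : K} (ht : t₀ ∈ Γ) {V : Set K}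
    (hV : IsOpen V) (hm : t₀ ∈ V) : (S ∩ V).Infinite := by
  intro hfin
  have h1 : Γ ∩ V ⊆ S ∩ V := by
    rintro x ⟨hx, hxV⟩
    have : x ∈ closure (S ∩ V) := by
      rw [mem_closure_iff]
      intro o ho hxo
      obtain ⟨y, hy, hyS⟩ := mem_closure_iff.1 (hS hx) (o ∩ V) (ho.inter hV) ⟨hxo, hxV⟩
      exact ⟨y, hy.1, hyS, hy.2⟩
    rwa [hfin.isClosed.closure_eq] at this
  have h2 : ((Γ ∩ V) \ {t₀}).Finite := (hfin.subset h1).subset Set.sdiff_subset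
  obtain ⟨y, hy, hyΓ⟩ := mem_closure_iff.1 (hiv t₀ ht) (V ∩ ((Γ ∩ V) \ {t₀})ᶜ)
    (hV.inter h2.isClosed.isOpen_compl) ⟨hm, fun h => h.2 rfl⟩
  exact hy.2 ⟨⟨hyΓ.1, hy.1⟩, hyΓ.2⟩

theorem sum_functional_le {K : Type*} [TopologicalSpace K] [CompactSpace K]
    (A : Subalgebra ℂ C(K, ℂ)) {F : Finset K} (p : K → A) (C : ℝ) (hC : 0 ≤ C)
    (h : ∀ t, ∑ x ∈ F, ‖(p x : C(K, ℂ)) t‖ ≤ C) (φ : A →L[ℂ] ℂ) :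
    ∑ x ∈ F, ‖φ (p x)‖ ≤ C * ‖φ‖ := by
  have hc : ∀ z : ℂ, ∃ c : ℂ, ‖c‖ = 1 ∧ c * z = (‖z‖ : ℂ) := by
    intro z
    by_cases hz : z = 0
    · exact ⟨1, by simp, by simp [hz]⟩
    · refine ⟨(‖z‖ : ℂ) / z, ?_, ?_⟩
      · rw [norm_div, Complex.norm_real, norm_norm, div_self (norm_ne_zero_iff.2 hz)]
      · field_simp
  choose c hc1 hc2 using hc
  have h1 : φ (∑ x ∈ F, c (φ (p x)) • p x) = ((∑ x ∈ F, ‖φ (p x)‖ : ℝ) : ℂ) := by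
    rw [map_sum]
    push_cast
    refine Finset.sum_congr rfl fun x _ => ?_
    rw [map_smul, smul_eq_mul, hc2]
  have h2 : ‖∑ x ∈ F, c (φ (p x)) • p x‖ ≤ C := by
    refine ua_norm_le _ hC fun t => ?_
    refine le_trans ?_ (h t)
    have : ((∑ x ∈ F, c (φ (p x)) • p x : A) : C(K, ℂ)) t
        = ∑ x ∈ F, c (φ (p x)) * (p x : C(K, ℂ)) t := by
      simp [ContinuousMap.sum_apply]
    rw [this]
    refine (norm_sum_le _ _).trans (le_of_eq ?_)
    refine Finset.sum_congr rfl fun x _ => ?_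
    rw [norm_mul, hc1, one_mul]
  have h3 := φ.le_opNorm (∑ x ∈ F, c (φ (p x)) • p x)
  rw [h1, Complex.norm_real, Real.norm_of_nonneg (Finset.sum_nonneg fun _ _ => norm_nonneg _)] at h3
  refine h3.trans ?_
  rw [mul_comm]
  gcongr

theorem key_prop {K : Type*} [TopologicalSpace K] [CompactSpace K] [T2Space K]
    (A : Subalgebra ℂ C(K, ℂ)) (hAclosed : IsClosed (A : Set C(K, ℂ)))
    (Γ : Set K)
    (hΓdense : Γ ⊆ closure {t | t ∈ Γ ∧ IsStrongBoundaryPoint A t})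
    (hiv : ∀ t ∈ Γ, t ∈ closure (Γ \ {t})) {t₀ : K} (ht : t₀ ∈ Γ) {V : Set K}
    (hV : IsOpen V) (hm : t₀ ∈ V) (s : Finset (A →L[ℂ] ℂ)) {η : ℝ} (hη : 0 < η) :
    ∃ p : A, ∃ t₁ ∈ Γ, t₁ ∈ V ∧ (p : C(K, ℂ)) t₁ = 1 ∧ (∀ t, ‖(p : C(K, ℂ)) t‖ ≤ 1) ∧
      (∀ t, ‖1 - (p : C(K, ℂ)) t‖ ≤ 1) ∧ (∀ t ∉ V, ‖(p : C(K, ℂ)) t‖ ≤ η) ∧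
      ∀ φ ∈ s, ‖φ p‖ < η := by
  classical
  have hinf := infinite_sbp Γ _ hΓdense hiv ht hV hm
  obtain ⟨M, hM⟩ : ∃ M : ℝ, M = ∑ φ ∈ s, ‖φ‖ := ⟨_, rfl⟩
  have hM0 : 0 ≤ M := hM ▸ Finset.sum_nonneg fun φ _ => φ.opNorm_nonneg
  obtain ⟨N, hN⟩ := exists_nat_gt (2 * M / η)
  have hN0 : 0 < (N : ℝ) := lt_of_le_of_lt (by positivity) hN
  obtain ⟨F, hF, hFN⟩ := hinf.exists_subset_card_eq N
  obtain ⟨U, hU, hdisj⟩ := F.finite_toSet.t2_separation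
  have hp : ∀ x : K, ∃ p : A, x ∈ F → ((p : C(K, ℂ)) x = 1 ∧ (∀ t, ‖(p : C(K, ℂ)) t‖ ≤ 1) ∧
      (∀ t, ‖1 - (p : C(K, ℂ)) t‖ ≤ 1) ∧ ∀ t ∉ V ∩ U x, ‖(p : C(K, ℂ)) t‖ ≤ min η (1 / N)) := by
    intro x
    by_cases hx : x ∈ F
    · obtain ⟨p, hp⟩ := peak_function A hAclosed (hF hx).1.2 (hV.inter (hU x).2)
        ⟨(hF hx).2, (hU x).1⟩ (lt_min hη (by positivity : 0 < 1 / (N : ℝ)))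
      exact ⟨p, fun _ => hp⟩
    · exact ⟨0, fun h => absurd h hx⟩
  choose p hp using hp
  have hsum : ∀ t, ∑ x ∈ F, ‖(p x : C(K, ℂ)) t‖ ≤ 2 := by
    intro t
    have h1 : ∀ x ∈ F, ‖(p x : C(K, ℂ)) t‖ ≤ 1 / N + (if t ∈ U x then 1 else 0) := by
      intro x hx
      split_ifs with htx
      · have := (hp x hx).2.1 t
        have : 0 < 1 / (N : ℝ) := by positivity
        linarith
      · rw [add_zero]
        exact ((hp x hx).2.2.2 t fun h => htx h.2).trans (min_le_right _ _)
    refine (Finset.sum_le_sum h1).trans ?_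
    rw [Finset.sum_add_distrib, Finset.sum_const, hFN, nsmul_eq_mul, mul_one_div_cancel hN0.ne',
      Finset.sum_boole]
    have : (F.filter fun x => t ∈ U x).card ≤ 1 := by
      rw [Finset.card_le_one]
      intro x hx y hy
      rw [Finset.mem_filter] at hx hy
      by_contra hne
      exact Set.disjoint_left.1 (hdisj hx.1 hy.1 hne) hx.2 hy.2
    have : ((F.filter fun x => t ∈ U x).card : ℝ) ≤ 1 := by exact_mod_cast this
    linarith
  have htot : ∑ x ∈ F, ∑ φ ∈ s, ‖φ (p x)‖ < ∑ x ∈ F, η := by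
    rw [Finset.sum_comm, Finset.sum_const, hFN, nsmul_eq_mul]
    calc ∑ φ ∈ s, ∑ x ∈ F, ‖φ (p x)‖ ≤ ∑ φ ∈ s, 2 * ‖φ‖ :=
          Finset.sum_le_sum fun φ _ => sum_functional_le A p 2 (by norm_num) hsum φ
      _ = 2 * M := by rw [← Finset.mul_sum, hM]
      _ < N * η := by rwa [div_lt_iff₀ hη] at hN
  obtain ⟨x, hx, hxs⟩ := Finset.exists_lt_of_sum_lt htot
  obtain ⟨q1, q2, q3, q4⟩ := hp x hx
  refine ⟨p x, x, (hF hx).1.1, (hF hx).2, q1, q2, q3, ?_, ?_⟩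
  · intro t htV
    exact (q4 t fun h => htV h.1).trans (min_le_left _ _)
  · intro φ hφ
    exact lt_of_le_of_lt
      (Finset.single_le_sum (f := fun φ : A →L[ℂ] ℂ => ‖φ (p x)‖) (fun _ _ => norm_nonneg _) hφ) hxs

theorem main_lemma0 {K : Type*} [TopologicalSpace K] [CompactSpace K] [T2Space K]
    (A : Subalgebra ℂ C(K, ℂ)) (hAclosed : IsClosed (A : Set C(K, ℂ)))
    (Γ : Set K)
    (hΓdense : Γ ⊆ closure {t | t ∈ Γ ∧ IsStrongBoundaryPoint A t})
    (hiv : ∀ t ∈ Γ, t ∈ closure (Γ \ {t})) {t₀ : K} (ht : t₀ ∈ Γ) {V : Set K}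
    (hV : IsOpen V) (hm : t₀ ∈ V) (s : Finset (A →L[ℂ] ℂ)) {η : ℝ} (hη : 0 < η)
    (f : A) (hf : ‖f‖ ≤ 1) (b : ℂ) (hb : ‖b‖ ≤ 1) :
    ∃ f' : A, ‖f'‖ ≤ 1 + 3 * η ∧ (∃ t ∈ V, ‖(f' : C(K, ℂ)) t - b‖ ≤ 3 * η) ∧
      ∀ φ ∈ s, ‖φ (f' - f)‖ ≤ 2 * η := by
  obtain ⟨a, ha⟩ : ∃ a, a = (f : C(K, ℂ)) t₀ := ⟨_, rfl⟩
  have ha1 : ‖a‖ ≤ 1 := ha ▸ (ua_apply_le f t₀).trans hf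
  have hV1 : IsOpen (V ∩ {t | ‖(f : C(K, ℂ)) t - a‖ < η}) :=
    hV.inter (isOpen_lt (by fun_prop) continuous_const)
  obtain ⟨p, t₁, ht₁, ht₁V, p1, p2, p3, p4, p5⟩ := key_prop A hAclosed Γ hΓdense hiv ht hV1
    ⟨hm, by simp [ha, hη]⟩ s hη
  obtain ⟨f₁, hf₁⟩ : ∃ f₁ : A, f₁ = f - a • p := ⟨_, rfl⟩
  have e1 : ∀ t, (f₁ : C(K, ℂ)) t = (f : C(K, ℂ)) t - a * (p : C(K, ℂ)) t := by
    intro t; simp [hf₁]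
  have n1 : ∀ t, ‖(f₁ : C(K, ℂ)) t‖ ≤ 1 + η := by
    intro t
    by_cases h : t ∈ V ∩ {t | ‖(f : C(K, ℂ)) t - a‖ < η}
    · have : (f₁ : C(K, ℂ)) t = a * (1 - (p : C(K, ℂ)) t) + ((f : C(K, ℂ)) t - a) := by
        rw [e1]; ring
      rw [this]
      refine (norm_add_le _ _).trans (add_le_add ?_ h.2.le)
      rw [norm_mul]
      exact mul_le_one₀ ha1 (norm_nonneg _) (p3 t)
    · rw [e1]
      refine (norm_sub_le _ _).trans (add_le_add ((ua_apply_le f t).trans hf) ?_)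
      rw [norm_mul]
      exact (mul_le_of_le_one_left (norm_nonneg _) ha1).trans (p4 t h)
  have s1 : ‖(f₁ : C(K, ℂ)) t₁‖ < η := by
    rw [e1, p1, mul_one]; exact ht₁V.2
  have hV2 : IsOpen (V ∩ {t | ‖(f₁ : C(K, ℂ)) t‖ < η}) :=
    hV.inter (isOpen_lt (by fun_prop) continuous_const)
  obtain ⟨q, t₂, ht₂, ht₂V, q1, q2, q3, q4, q5⟩ := key_prop A hAclosed Γ hΓdense hiv ht₁ hV2
    ⟨ht₁V.1, s1⟩ s hη
  have e2 : ∀ t, ((f₁ + b • q : A) : C(K, ℂ)) t = (f₁ : C(K, ℂ)) t + b * (q : C(K, ℂ)) t := by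
    intro t; simp
  refine ⟨f₁ + b • q, ?_, ⟨t₂, ht₂V.1, ?_⟩, ?_⟩
  · refine ua_norm_le _ (by positivity) fun t => ?_
    rw [e2]
    refine (norm_add_le _ _).trans ?_
    rw [norm_mul]
    have hbq : ‖b‖ * ‖(q : C(K, ℂ)) t‖ ≤ ‖(q : C(K, ℂ)) t‖ :=
      mul_le_of_le_one_left (norm_nonneg _) hb
    by_cases h : t ∈ V ∩ {t | ‖(f₁ : C(K, ℂ)) t‖ < η}
    · have h2 : ‖(f₁ : C(K, ℂ)) t‖ < η := h.2
      linarith [q2 t]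
    · linarith [q4 t h, n1 t]
  · rw [e2, q1, mul_one, add_sub_cancel_right]
    have h2 : ‖(f₁ : C(K, ℂ)) t₂‖ < η := ht₂V.2
    linarith
  · intro φ hφ
    have : φ (f₁ + b • q - f) = b * φ q - a * φ p := by
      rw [hf₁]; simp only [map_sub, map_add, map_smul, smul_eq_mul]; ring
    rw [this]
    refine (norm_sub_le _ _).trans ?_
    rw [norm_mul, norm_mul]
    have h1 := mul_le_of_le_one_left (norm_nonneg (φ q)) hb
    have h2 := mul_le_of_le_one_left (norm_nonneg (φ p)) ha1
    linarith [p5 φ hφ, q5 φ hφ]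

theorem main_lemma {K : Type*} [TopologicalSpace K] [CompactSpace K] [T2Space K]
    (A : Subalgebra ℂ C(K, ℂ)) (hAclosed : IsClosed (A : Set C(K, ℂ)))
    (Γ : Set K)
    (hΓdense : Γ ⊆ closure {t | t ∈ Γ ∧ IsStrongBoundaryPoint A t})
    (hiv : ∀ t ∈ Γ, t ∈ closure (Γ \ {t})) {t₀ : K} (ht : t₀ ∈ Γ) {V : Set K}
    (hV : IsOpen V) (hm : t₀ ∈ V) (s : Finset (A →L[ℂ] ℂ)) {η : ℝ} (hη : 0 < η)
    (f : A) (hf : ‖f‖ ≤ 1) (b : ℂ) (hb : ‖b‖ ≤ 1) :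
    ∃ f' : A, ‖f'‖ ≤ 1 ∧ (∃ t ∈ V, ‖(f' : C(K, ℂ)) t - b‖ ≤ η) ∧
      ∀ φ ∈ s, ‖φ (f' - f)‖ ≤ η := by
  obtain ⟨M, hM⟩ : ∃ M : ℝ, M = ∑ φ ∈ s, ‖φ‖ := ⟨_, rfl⟩
  have hM0 : 0 ≤ M := hM ▸ Finset.sum_nonneg fun φ _ => φ.opNorm_nonneg
  obtain ⟨θ, hθ⟩ : ∃ θ : ℝ, θ = η / (6 + 3 * M) := ⟨_, rfl⟩
  have hθ0 : 0 < θ := by rw [hθ]; positivity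
  have hθη : θ * (6 + 3 * M) = η := by rw [hθ]; field_simp
  obtain ⟨f₁, h1, ⟨t, htV, h2⟩, h3⟩ := main_lemma0 A hAclosed Γ hΓdense hiv ht hV hm s hθ0 f hf b hb
  obtain ⟨r, hr⟩ : ∃ r : ℝ, r = (1 + 3 * θ)⁻¹ := ⟨_, rfl⟩
  have hr0 : 0 < r := by rw [hr]; positivity
  have hr1 : r * (1 + 3 * θ) = 1 := by rw [hr]; field_simp
  have hrle : r ≤ 1 := by nlinarith
  have hn : ‖((r : ℂ) • f₁ : A)‖ ≤ 1 := by
    refine (norm_smul_le _ _).trans ?_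
    rw [Complex.norm_real, Real.norm_of_nonneg hr0.le, ← hr1]
    gcongr
  have hd : ‖((r : ℂ) • f₁ - f₁ : A)‖ ≤ 3 * θ := by
    have : ((r : ℂ) • f₁ - f₁ : A) = ((r - 1 : ℝ) : ℂ) • f₁ := by
      push_cast; rw [sub_smul, one_smul]
    rw [this]
    refine (norm_smul_le _ _).trans ?_
    rw [Complex.norm_real, Real.norm_of_nonpos (by linarith)]
    calc -(r - 1) * ‖f₁‖ ≤ -(r - 1) * (1 + 3 * θ) := by
          apply mul_le_mul_of_nonneg_left h1; linarith
      _ = 3 * θ := by linear_combination -hr1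
  refine ⟨(r : ℂ) • f₁, hn, ⟨t, htV, ?_⟩, ?_⟩
  · have e : (((r : ℂ) • f₁ : A) : C(K, ℂ)) t - b
        = (((r : ℂ) • f₁ - f₁ : A) : C(K, ℂ)) t + ((f₁ : C(K, ℂ)) t - b) := by
      simp
    rw [e]
    refine (norm_add_le _ _).trans ?_
    have := (ua_apply_le ((r : ℂ) • f₁ - f₁ : A) t).trans hd
    nlinarith
  · intro φ hφ
    have e : φ ((r : ℂ) • f₁ - f) = φ ((r : ℂ) • f₁ - f₁) + φ (f₁ - f) := by
      rw [← map_add]; congr 1; abel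
    rw [e]
    refine (norm_add_le _ _).trans ?_
    have h4 := φ.le_opNorm ((r : ℂ) • f₁ - f₁)
    have h5 : ‖φ‖ ≤ M := by
      rw [hM]
      exact Finset.single_le_sum (f := fun φ : A →L[ℂ] ℂ => ‖φ‖)
        (fun φ _ => φ.opNorm_nonneg) hφ
    have h6 : ‖φ‖ * ‖((r : ℂ) • f₁ - f₁ : A)‖ ≤ M * (3 * θ) := by gcongr
    nlinarith [h3 φ hφ]

/-- An isolated point of `Γ` produces an almost-idempotent of `A`. -/
theorem isolated_peak {K : Type*} [TopologicalSpace K] [CompactSpace K]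
    (A : Subalgebra ℂ C(K, ℂ)) (Γ : Set K)
    (hΓdense : Γ ⊆ closure {t | t ∈ Γ ∧ IsStrongBoundaryPoint A t})
    {t₀ : K} (ht : t₀ ∈ Γ) (hiso : t₀ ∉ closure (Γ \ {t₀})) :
    ∃ f : A, ‖f‖ = 1 ∧ (f : C(K, ℂ)) t₀ = 1 ∧
      ∀ t ∈ Γ, t ≠ t₀ → ‖(f : C(K, ℂ)) t‖ ≤ 1 / 4 := by
  rw [mem_closure_iff] at hiso
  push Not at hiso
  obtain ⟨U, hU, hmU, hUΓ⟩ := hiso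
  have hU' : ∀ t ∈ Γ, t ∈ U → t = t₀ := by
    intro t h1 h2
    by_contra h3
    have : t ∈ U ∩ (Γ \ {t₀}) := ⟨h2, h1, h3⟩
    rw [hUΓ] at this
    exact this
  obtain ⟨y, hyU, hyΓ, hys⟩ := mem_closure_iff.1 (hΓdense ht) U hU hmU
  obtain rfl := hU' y hyΓ hyU
  obtain ⟨h, hA, h1, hn, c, hc, hcU⟩ := hys U hU hyU
  obtain ⟨n, hn4⟩ := exists_pow_lt_of_lt_one (show (0:ℝ) < 1 / 4 by norm_num)
    (show max c 0 < 1 from max_lt hc one_pos)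
  let H : A := ⟨h, hA⟩
  have e : ∀ t, ((H ^ n : A) : C(K, ℂ)) t = h t ^ n := by intro t; simp [H]
  refine ⟨H ^ n, le_antisymm ?_ ?_, ?_, ?_⟩
  · refine ua_norm_le _ zero_le_one fun t => ?_
    rw [e, norm_pow]
    exact pow_le_one₀ (norm_nonneg _) (hn ▸ ContinuousMap.norm_coe_le_norm h t)
  · have := ua_apply_le (H ^ n) y
    rwa [e, h1, one_pow, norm_one] at this
  · rw [e, h1, one_pow]
  · intro t htΓ hne
    rw [e, norm_pow]
    refine le_trans (pow_le_pow_left₀ (norm_nonneg _) ?_ n) hn4.le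
    exact (hcU t fun h => hne (hU' t htΓ h)).trans (le_max_left _ _)

/-- Evaluation at a point as a functional on `A`. -/
theorem exists_eval {K : Type*} [TopologicalSpace K] [CompactSpace K]
    (A : Subalgebra ℂ C(K, ℂ)) (t₀ : K) :
    ∃ ψ : A →L[ℂ] ℂ, (∀ f : A, ψ f = (f : C(K, ℂ)) t₀) ∧ ‖ψ‖ = 1 := by
  obtain ⟨ψ, hψ⟩ : ∃ ψ : A →L[ℂ] ℂ, ∀ f : A, ψ f = (f : C(K, ℂ)) t₀ :=
    ⟨(ContinuousMap.evalCLM ℂ t₀).comp A.toSubmodule.subtypeL, fun f => rfl⟩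
  refine ⟨ψ, hψ, le_antisymm ?_ ?_⟩
  · refine ContinuousLinearMap.opNorm_le_bound _ zero_le_one fun f => ?_
    rw [hψ, one_mul]
    exact ua_apply_le f t₀
  · have h1 := ψ.le_opNorm 1
    have h2 : ‖(1 : A)‖ ≤ 1 := ua_norm_le _ zero_le_one fun t => by simp
    have h3 : ψ 1 = 1 := by rw [hψ]; rfl
    rw [h3, norm_one] at h1
    exact h1.trans (mul_le_of_le_one_right ψ.opNorm_nonneg h2)

theorem ua_mem_ball {K : Type*} [TopologicalSpace K] [CompactSpace K]
    {A : Subalgebra ℂ C(K, ℂ)} (f : A) : f ∈ Metric.closedBall (0 : A) 1 ↔ ‖f‖ ≤ 1 :=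
  mem_closedBall_zero_iff

theorem weak_mem {E : Type*} [NormedAddCommGroup E] [NormedSpace ℂ E]
    {W : Set (WeakSpace ℂ E)} (hW : IsOpen W) {f : E} (hf : toWeakSpace ℂ E f ∈ W)
    (P : E → Prop)
    (h : ∀ (s : Finset (E →L[ℂ] ℂ)) (η : ℝ), 0 < η → ∃ g, P g ∧ ∀ φ ∈ s, ‖φ (g - f)‖ ≤ η) :
    ∃ g, P g ∧ toWeakSpace ℂ E g ∈ W := by
  classical
  have h' : ∀ i : Finset (E →L[ℂ] ℂ) × ℕ, ∃ g, P g ∧ ∀ φ ∈ i.1, ‖φ (g - f)‖ ≤ 1 / ((i.2 : ℝ) + 1) :=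
    fun i => h i.1 _ (by positivity)
  choose g hP hg using h'
  have ht : Filter.Tendsto (fun i => toWeakSpace ℂ E (g i)) Filter.atTop
      (nhds (toWeakSpace ℂ E f)) := by
    have hind : Topology.IsInducing fun (x : WeakSpace ℂ E) (φ : E →L[ℂ] ℂ) =>
        φ ((toWeakSpace ℂ E).symm x) := ⟨rfl⟩
    rw [hind.tendsto_nhds_iff, tendsto_pi_nhds]
    intro φ
    change Filter.Tendsto (fun i => φ (g i)) Filter.atTop (nhds (φ f))
    rw [Metric.tendsto_atTop]
    intro ε hε
    obtain ⟨n, hn⟩ := exists_nat_one_div_lt hε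
    refine ⟨({φ}, n), fun i hi => ?_⟩
    have h1 := hg i φ (hi.1 (Finset.mem_singleton_self φ))
    rw [dist_eq_norm, ← map_sub]
    refine lt_of_le_of_lt (h1.trans ?_) hn
    have : (n : ℝ) ≤ i.2 := by exact_mod_cast hi.2
    gcongr
  obtain ⟨i, hi⟩ := (ht.eventually (hW.mem_nhds hf)).exists
  exact ⟨g i, hP i, hi⟩

theorem stmt_17 {K : Type*} [TopologicalSpace K] [CompactSpace K] [T2Space K]
    (A : Subalgebra ℂ C(K, ℂ)) (hAclosed : IsClosed (A : Set C(K, ℂ)))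
    (hAsep : ∀ s t : K, s ≠ t → ∃ g ∈ A, g s ≠ g t)
    (Γ : Set K) (hΓclosed : IsClosed Γ)
    (hΓbd : ∀ g ∈ A, ∃ t ∈ Γ, ‖g t‖ = ‖g‖)
    (hΓdense : Γ ⊆ closure {t | t ∈ Γ ∧ IsStrongBoundaryPoint A t}) :
    ((∀ (ψ : A →L[ℂ] ℂ) (g : A), ψ ≠ 0 → g ≠ 0 →
        ‖ContinuousLinearMap.id ℂ A + ψ.smulRight g‖ = 1 + ‖ψ.smulRight g‖) ↔
      (∀ t ∈ Γ, t ∈ closure (Γ \ {t}))) ∧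
    ((∀ W : Set (WeakSpace ℂ A), IsOpen W →
        ∀ f ∈ (⇑(toWeakSpace ℂ A) ⁻¹' W) ∩ Metric.closedBall (0 : A) 1, ‖f‖ = 1 →
          ∀ ε > (0 : ℝ),
            ∃ g ∈ (⇑(toWeakSpace ℂ A) ⁻¹' W) ∩ Metric.closedBall (0 : A) 1,
              2 - ε ≤ ‖f - g‖) ↔
      (∀ t ∈ Γ, t ∈ closure (Γ \ {t}))) ∧
    ((∀ ψ : A →L[ℂ] ℂ, ‖ψ‖ = 1 → ∀ δ > (0 : ℝ),
        ∀ f : A, ‖f‖ ≤ 1 → 1 - δ < (ψ f).re → ‖f‖ = 1 →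
          ∀ ε > (0 : ℝ),
            ∃ g : A, ‖g‖ ≤ 1 ∧ 1 - δ < (ψ g).re ∧ 2 - ε ≤ ‖f - g‖) ↔
      (∀ t ∈ Γ, t ∈ closure (Γ \ {t}))) := by
  have bd : ∀ (g : A) (C : ℝ), (∀ t ∈ Γ, ‖(g : C(K, ℂ)) t‖ ≤ C) → ‖g‖ ≤ C := by
    intro g C h
    obtain ⟨t, ht, hg⟩ := hΓbd g g.2
    have : ‖g‖ = ‖(g : C(K, ℂ)) t‖ := hg.symm
    rw [this]; exact h t ht
  -- (i) implies (iv)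
  have h14 : (∀ (ψ : A →L[ℂ] ℂ) (g : A), ψ ≠ 0 → g ≠ 0 →
        ‖ContinuousLinearMap.id ℂ A + ψ.smulRight g‖ = 1 + ‖ψ.smulRight g‖) →
      (∀ t ∈ Γ, t ∈ closure (Γ \ {t})) := by
    intro H t₀ ht₀
    by_contra hiso
    obtain ⟨f, hf1, hft, hfΓ⟩ := isolated_peak A Γ hΓdense ht₀ hiso
    obtain ⟨ψ, hψ, hψn⟩ := exists_eval A t₀
    have hψ0 : ψ ≠ 0 := by
      intro h
      have h5 := hψ f
      rw [h, hft, zero_apply] at h5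
      exact zero_ne_one h5
    have hf0 : -f ≠ 0 := by
      intro h; rw [neg_eq_zero] at h; rw [h] at hf1; simp at hf1
    have h1 := H ψ (-f) hψ0 hf0
    rw [ContinuousLinearMap.norm_smulRight_apply, hψn, norm_neg, hf1] at h1
    have h2 : ‖ContinuousLinearMap.id ℂ A + ψ.smulRight (-f)‖ ≤ 5 / 4 := by
      refine ContinuousLinearMap.opNorm_le_bound _ (by norm_num) fun g => ?_
      refine bd _ _ fun t ht => ?_
      have e : (((ContinuousLinearMap.id ℂ A + ψ.smulRight (-f)) g : A) : C(K, ℂ)) t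
          = (g : C(K, ℂ)) t - (g : C(K, ℂ)) t₀ * (f : C(K, ℂ)) t := by
        simp [hψ, sub_eq_add_neg]
      rw [e]
      by_cases h : t = t₀
      · rw [h, hft, mul_one, sub_self, norm_zero]; positivity
      · refine (norm_sub_le _ _).trans ?_
        rw [norm_mul]
        have h3 := ua_apply_le g t
        have h4 : ‖(g : C(K, ℂ)) t₀‖ * ‖(f : C(K, ℂ)) t‖ ≤ ‖g‖ * (1 / 4) :=
          mul_le_mul (ua_apply_le g t₀) (hfΓ t ht h) (norm_nonneg _) (norm_nonneg _)
        linarith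
    linarith
  -- (iii) implies (iv)
  have h34 : (∀ ψ : A →L[ℂ] ℂ, ‖ψ‖ = 1 → ∀ δ > (0 : ℝ),
        ∀ f : A, ‖f‖ ≤ 1 → 1 - δ < (ψ f).re → ‖f‖ = 1 →
          ∀ ε > (0 : ℝ),
            ∃ g : A, ‖g‖ ≤ 1 ∧ 1 - δ < (ψ g).re ∧ 2 - ε ≤ ‖f - g‖) →
      (∀ t ∈ Γ, t ∈ closure (Γ \ {t})) := by
    intro H t₀ ht₀
    by_contra hiso
    obtain ⟨f, hf1, hft, hfΓ⟩ := isolated_peak A Γ hΓdense ht₀ hiso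
    obtain ⟨ψ, hψ, hψn⟩ := exists_eval A t₀
    obtain ⟨g, hg1, hg2, hg3⟩ := H ψ hψn (1 / 4) (by norm_num) f hf1.le
      (by rw [hψ, hft]; norm_num) hf1 (1 / 2) (by norm_num)
    have h2 : ‖f - g‖ ≤ 5 / 4 := by
      refine bd _ _ fun t ht => ?_
      have e : ((f - g : A) : C(K, ℂ)) t = (f : C(K, ℂ)) t - (g : C(K, ℂ)) t := by simp
      rw [e]
      by_cases h : t = t₀
      · rw [h, hft]
        rw [hψ] at hg2
        have h3 := (ua_apply_le g t₀).trans hg1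
        have h4 : ‖1 - (g : C(K, ℂ)) t₀‖ ^ 2 ≤ 1 := by
          have h5 : ‖(g : C(K, ℂ)) t₀‖ ^ 2 ≤ 1 := pow_le_one₀ (norm_nonneg _) h3
          rw [← Complex.normSq_eq_norm_sq, Complex.normSq_apply] at h5 ⊢
          simp only [Complex.sub_re, Complex.sub_im, Complex.one_re, Complex.one_im]
          nlinarith
        nlinarith [norm_nonneg (1 - (g : C(K, ℂ)) t₀)]
      · refine (norm_sub_le _ _).trans ?_
        linarith [hfΓ t ht h, (ua_apply_le g t).trans hg1]
    linarith
  -- (ii) implies (iii)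
  have h23 : (∀ W : Set (WeakSpace ℂ A), IsOpen W →
        ∀ f ∈ (⇑(toWeakSpace ℂ A) ⁻¹' W) ∩ Metric.closedBall (0 : A) 1, ‖f‖ = 1 →
          ∀ ε > (0 : ℝ),
            ∃ g ∈ (⇑(toWeakSpace ℂ A) ⁻¹' W) ∩ Metric.closedBall (0 : A) 1,
              2 - ε ≤ ‖f - g‖) →
      (∀ ψ : A →L[ℂ] ℂ, ‖ψ‖ = 1 → ∀ δ > (0 : ℝ),
        ∀ f : A, ‖f‖ ≤ 1 → 1 - δ < (ψ f).re → ‖f‖ = 1 →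
          ∀ ε > (0 : ℝ),
            ∃ g : A, ‖g‖ ≤ 1 ∧ 1 - δ < (ψ g).re ∧ 2 - ε ≤ ‖f - g‖) := by
    intro H ψ _ δ _ f hf hfs hf1 ε hε
    have hc : Continuous fun x : WeakSpace ℂ A => ψ ((toWeakSpace ℂ A).symm x) :=
      WeakBilin.eval_continuous (topDualPairing ℂ A).flip ψ
    have hW : IsOpen {x : WeakSpace ℂ A | 1 - δ < (ψ ((toWeakSpace ℂ A).symm x)).re} :=
      isOpen_lt continuous_const (Complex.continuous_re.comp hc)
    obtain ⟨g, ⟨hg1, hg2⟩, hg3⟩ := H _ hW f ⟨hfs, (ua_mem_ball f).2 hf⟩ hf1 ε hε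
    exact ⟨g, (ua_mem_ball g).1 hg2, hg1, hg3⟩
  -- (iv) implies (ii)
  have h42 : (∀ t ∈ Γ, t ∈ closure (Γ \ {t})) →
      (∀ W : Set (WeakSpace ℂ A), IsOpen W →
        ∀ f ∈ (⇑(toWeakSpace ℂ A) ⁻¹' W) ∩ Metric.closedBall (0 : A) 1, ‖f‖ = 1 →
          ∀ ε > (0 : ℝ),
            ∃ g ∈ (⇑(toWeakSpace ℂ A) ⁻¹' W) ∩ Metric.closedBall (0 : A) 1,
              2 - ε ≤ ‖f - g‖) := by
    intro hiv W hW f hf hf1 ε hε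
    obtain ⟨t₀, ht₀, hft⟩ := hΓbd f f.2
    have hft1 : ‖(f : C(K, ℂ)) t₀‖ = 1 := hft.trans hf1
    obtain ⟨g, ⟨hg1, hg2⟩, hg3⟩ := weak_mem hW hf.1 (fun g => ‖g‖ ≤ 1 ∧ 2 - ε ≤ ‖f - g‖) (by
      intro s η hη
      have hV : IsOpen {t | ‖(f : C(K, ℂ)) t - (f : C(K, ℂ)) t₀‖ < ε / 2} :=
        isOpen_lt (by fun_prop) continuous_const
      obtain ⟨g, hg1, ⟨t, htV, hgt⟩, hgs⟩ := main_lemma A hAclosed Γ hΓdense hiv ht₀ hV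
        (by simp [hε]) s (lt_min hη (half_pos hε)) f hf1.le (-(f : C(K, ℂ)) t₀)
        (by rw [norm_neg, hft1])
      refine ⟨g, ⟨hg1, ?_⟩, fun φ hφ => (hgs φ hφ).trans (min_le_left _ _)⟩
      have h1 := ua_apply_le (f - g) t
      have e : (2 : ℂ) * (f : C(K, ℂ)) t₀ = ((f - g : A) : C(K, ℂ)) t
          - ((f : C(K, ℂ)) t - (f : C(K, ℂ)) t₀) + ((g : C(K, ℂ)) t - -(f : C(K, ℂ)) t₀) := by
        simp; ring
      have h2 : ‖(2 : ℂ) * (f : C(K, ℂ)) t₀‖ = 2 := by rw [norm_mul, hft1]; norm_num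
      have h3 := norm_add_le (((f - g : A) : C(K, ℂ)) t
          - ((f : C(K, ℂ)) t - (f : C(K, ℂ)) t₀)) ((g : C(K, ℂ)) t - -(f : C(K, ℂ)) t₀)
      have h4 := norm_sub_le (((f - g : A) : C(K, ℂ)) t) ((f : C(K, ℂ)) t - (f : C(K, ℂ)) t₀)
      rw [← e, h2] at h3
      have h5 := hgt.trans (min_le_right _ _)
      have h6 : ‖(f : C(K, ℂ)) t - (f : C(K, ℂ)) t₀‖ < ε / 2 := htV
      linarith)
    exact ⟨g, ⟨hg3, (ua_mem_ball g).2 hg1⟩, hg2⟩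
  -- (iv) implies (i)
  have h41 : (∀ t ∈ Γ, t ∈ closure (Γ \ {t})) →
      (∀ (ψ : A →L[ℂ] ℂ) (g : A), ψ ≠ 0 → g ≠ 0 →
        ‖ContinuousLinearMap.id ℂ A + ψ.smulRight g‖ = 1 + ‖ψ.smulRight g‖) := by
    intro hiv ψ g hψ0 hg0
    refine le_antisymm ?_ ?_
    · refine (ContinuousLinearMap.opNorm_add_le _ _).trans ?_
      exact add_le_add ContinuousLinearMap.norm_id_le le_rfl
    rw [ContinuousLinearMap.norm_smulRight_apply]
    have hψp : 0 ≤ ‖ψ‖ := ψ.opNorm_nonneg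
    refine le_of_forall_pos_le_add fun ε hε => ?_
    obtain ⟨η, hη⟩ : ∃ η : ℝ, η = ε / (1 + ‖ψ‖ + 2 * ‖g‖) := ⟨_, rfl⟩
    have hη0 : 0 < η := by rw [hη]; positivity
    have hηε : η * (1 + ‖ψ‖ + 2 * ‖g‖) = ε := by rw [hη]; field_simp
    obtain ⟨f, hf1, hf2⟩ := ψ.exists_lt_apply_of_lt_opNorm (sub_lt_self ‖ψ‖ hη0)
    obtain ⟨t₀, ht₀, hgt⟩ := hΓbd g g.2
    replace hgt : ‖(g : C(K, ℂ)) t₀‖ = ‖g‖ := hgt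
    obtain ⟨b, hb1, hb⟩ : ∃ b : ℂ, ‖b‖ = 1 ∧
        ‖b + ψ f * (g : C(K, ℂ)) t₀‖ = 1 + ‖ψ f‖ * ‖g‖ := by
      obtain ⟨u, hu⟩ : ∃ u, u = ψ f * (g : C(K, ℂ)) t₀ := ⟨_, rfl⟩
      have hun : ‖u‖ = ‖ψ f‖ * ‖g‖ := by rw [hu, norm_mul, hgt]
      rw [← hu, ← hun]
      by_cases h0 : u = 0
      · exact ⟨1, by simp, by simp [h0]⟩
      · have hn0 : 0 < ‖u‖ := norm_pos_iff.2 h0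
        refine ⟨((‖u‖⁻¹ : ℝ) : ℂ) * u, ?_, ?_⟩
        · rw [norm_mul, Complex.norm_real, norm_inv, norm_norm, inv_mul_cancel₀ hn0.ne']
        · have : ((‖u‖⁻¹ : ℝ) : ℂ) * u + u = ((‖u‖⁻¹ + 1 : ℝ) : ℂ) * u := by push_cast; ring
          rw [this, norm_mul, Complex.norm_real, Real.norm_of_nonneg (by positivity)]
          field_simp
    have hV : IsOpen {t | ‖(g : C(K, ℂ)) t - (g : C(K, ℂ)) t₀‖ < η} :=
      isOpen_lt (by fun_prop) continuous_const
    obtain ⟨k, hk1, ⟨t, htV, hkt⟩, hks⟩ := main_lemma A hAclosed Γ hΓdense hiv ht₀ hV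
        (by simp [hη0]) {ψ} hη0 f hf1.le b hb1.le
    have hkψ := hks ψ (Finset.mem_singleton_self ψ)
    rw [map_sub] at hkψ
    have hT : ‖(ContinuousLinearMap.id ℂ A + ψ.smulRight g) k‖
        ≤ ‖ContinuousLinearMap.id ℂ A + ψ.smulRight g‖ :=
      ContinuousLinearMap.unit_le_opNorm _ _ hk1
    have hTt := (ua_apply_le ((ContinuousLinearMap.id ℂ A + ψ.smulRight g) k) t).trans hT
    have e : (((ContinuousLinearMap.id ℂ A + ψ.smulRight g) k : A) : C(K, ℂ)) t
        = (k : C(K, ℂ)) t + ψ k * (g : C(K, ℂ)) t := by simp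
    rw [e] at hTt
    have e2 : b + ψ f * (g : C(K, ℂ)) t₀ = ((k : C(K, ℂ)) t + ψ k * (g : C(K, ℂ)) t)
        - (((k : C(K, ℂ)) t - b) + (ψ k * ((g : C(K, ℂ)) t - (g : C(K, ℂ)) t₀)
          + (ψ k - ψ f) * (g : C(K, ℂ)) t₀)) := by ring
    have h1 : ‖ψ k * ((g : C(K, ℂ)) t - (g : C(K, ℂ)) t₀)‖ ≤ ‖ψ‖ * η := by
      rw [norm_mul]
      exact mul_le_mul (ψ.unit_le_opNorm k hk1) (le_of_lt htV) (norm_nonneg _) hψp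
    have h2 : ‖(ψ k - ψ f) * (g : C(K, ℂ)) t₀‖ ≤ η * ‖g‖ := by
      rw [norm_mul, hgt]; gcongr
    have h3 : 1 + ‖ψ f‖ * ‖g‖ ≤ ‖(k : C(K, ℂ)) t + ψ k * (g : C(K, ℂ)) t‖
        + (η + (‖ψ‖ * η + η * ‖g‖)) := by
      rw [← hb, e2]
      refine (norm_sub_le _ _).trans (add_le_add le_rfl ?_)
      refine (norm_add_le _ _).trans (add_le_add hkt ?_)
      exact (norm_add_le _ _).trans (add_le_add h1 h2)
    have h4 : (‖ψ‖ - η) * ‖g‖ ≤ ‖ψ f‖ * ‖g‖ := by gcongr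
    linarith
  exact ⟨⟨h14, h41⟩, ⟨fun h => h34 (h23 h), h42⟩, ⟨h34, fun h => h23 (h42 h)⟩⟩
end

section
/- Let K be a compact Hausdorff space, X a uniformly convex complex Banach space, and S an X-valued function space over a uniform algebra on K with base algebra A := {x* ∘ f : f ∈ S, x* ∈ X*}, satisfying in addition A⊗X ⊆ S. Let Γ ⊆ K be a closed boundary for A in which the set of strong boundary points of A is dense (these properties hold for the Shilov boundary of A). If there exists a strong peak point for A that is a limit point of Γ (i.e., a point t₀ ∈ Γ such that every neighborhood of t₀ meets Γ∖{t₀}), then S has the convex diametral local diameter two property: the closed unit ball B_S equals the closed convex hull of the set of Δ-points of S. -/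
set_option maxHeartbeats 1000000
set_option synthInstance.maxHeartbeats 1000000

/-- `t₀` is a strong peak point for the algebra `A ⊆ C(K,ℂ)`: some `h ∈ A` satisfies
`|h t₀| = ‖h‖` and `‖h‖ > sup_{t ∈ K∖U} |h t|` for every open neighborhood `U` of `t₀`. -/
def IsStrongPeakPoint {K : Type*} [TopologicalSpace K] [CompactSpace K]
    (A : Subalgebra ℂ C(K, ℂ)) (t₀ : K) : Prop :=
  ∃ h ∈ A, ‖h t₀‖ = ‖h‖ ∧
    ∀ U : Set K, IsOpen U → t₀ ∈ U → ∃ c : ℝ, c < ‖h‖ ∧ ∀ t ∉ U, ‖h t‖ ≤ c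

lemma sbp_small {K : Type*} [TopologicalSpace K] [CompactSpace K]
    {A : Subalgebra ℂ C(K, ℂ)} {t₀ : K} (h0 : IsStrongBoundaryPoint A t₀)
    {U : Set K} (hU : IsOpen U) (ht : t₀ ∈ U) {η : ℝ} (hη : 0 < η) :
    ∃ h ∈ A, h t₀ = 1 ∧ (∀ t, ‖h t‖ ≤ 1) ∧ ∀ t ∉ U, ‖h t‖ ≤ η := by
  obtain ⟨h, hA, h1, hn, c, hc, hcU⟩ := h0 U hU ht
  have hle : ∀ t, ‖h t‖ ≤ 1 := fun t => hn ▸ h.norm_coe_le_norm t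
  obtain ⟨n, hn'⟩ := exists_pow_lt_of_lt_one hη (max_lt hc zero_lt_one)
  refine ⟨h ^ n, A.pow_mem hA n, by simp [h1], fun t => ?_, fun t htU => ?_⟩
  · simpa using pow_le_one₀ (norm_nonneg _) (hle t)
  · have : ‖h t‖ ^ n ≤ (max c 0) ^ n :=
      pow_le_pow_left₀ (norm_nonneg _) ((hcU t htU).trans (le_max_left _ _)) n
    simpa using this.trans hn'.le

lemma real_sum {η q : ℝ} (hη : 0 < η) (hη1 : 4 * η ≤ 1) (hq0 : 0 < q) (hq1 : q < 1)
    (hq : 4 * (1 - q) ≤ η) (z : ℕ → ℂ) (hz : ∀ k, ‖z k‖ ≤ 1)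
    (hzz : ∀ j k, j < k → η < ‖z k‖ → ‖1 - z j‖ ≤ η * q ^ k) :
    ∑' k, (1 - q) * q ^ k * (‖z k‖ + (1 - 4 * η) * ‖1 - z k‖ - 1) ≤ 0 := by
  set e : ℕ → ℝ := fun k => ‖z k‖ + (1 - 4 * η) * ‖1 - z k‖ - 1 with he
  have hw : ∀ k, 0 ≤ (1 - q) * q ^ k := fun k => mul_nonneg (by linarith) (by positivity)
  have h2 : ∀ k, ‖1 - z k‖ ≤ 2 := fun k => (norm_sub_le _ _).trans (by
    have := hz k; rw [norm_one]; linarith)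
  have he1 : ∀ k, e k ≤ ‖1 - z k‖ := fun k => by
    have := hz k; have := norm_nonneg (1 - z k); simp only [he]; nlinarith
  have he2 : ∀ k, e k ≤ 2 := fun k => (he1 k).trans (h2 k)
  have heb : ∀ k, |e k| ≤ 9 := fun k => by
    rw [abs_le]; refine ⟨?_, by linarith [he2 k]⟩
    have := norm_nonneg (z k); have := norm_nonneg (1 - z k); have := h2 k
    simp only [he]; nlinarith
  have hgeo : HasSum (fun k => (1 - q) * q ^ k) 1 := by
    have := (hasSum_geometric_of_lt_one hq0.le hq1).mul_left (1 - q)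
    rwa [mul_inv_cancel₀ (by linarith)] at this
  have hsum : Summable (fun k => (1 - q) * q ^ k * e k) := by
    refine Summable.of_norm_bounded (g := fun k => ((1 - q) * q ^ k) * 9) (hgeo.summable.mul_right 9) fun k => ?_
    rw [norm_mul, Real.norm_of_nonneg (hw k)]
    exact mul_le_mul_of_nonneg_left (heb k) (hw k)
  have hsm : ∀ k, ‖z k‖ ≤ η → e k ≤ -2 * η := fun k hk => by
    have : ‖1 - z k‖ ≤ 1 + η := (norm_sub_le _ _).trans (by rw [norm_one]; linarith)
    simp only [he]; nlinarith
  by_cases hinf : ∃ k₀, ∀ k, k₀ ≤ k → ‖z k‖ ≤ η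
  · classical
    have hspec := Nat.find_spec hinf
    have hmin := fun m => Nat.find_min hinf (m := m)
    generalize Nat.find hinf = k₀ at hspec hmin
    rcases k₀ with _ | k₀
    · refine tsum_nonpos fun k => mul_nonpos_of_nonneg_of_nonpos (hw k) ?_
      linarith [hsm k (hspec k (Nat.zero_le _))]
    · have hk : η < ‖z k₀‖ := by
        by_contra hcon
        refine hmin k₀ (Nat.lt_succ_self _) fun k hk => ?_
        rcases hk.eq_or_lt with rfl | h
        · exact not_lt.1 hcon
        · exact hspec k h
      rw [← hsum.sum_add_tsum_nat_add (k₀ + 1), Finset.sum_range_succ]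
      have hA : ∑ k ∈ Finset.range k₀, (1 - q) * q ^ k * e k ≤ η * q ^ k₀ := by
        calc _ ≤ ∑ k ∈ Finset.range k₀, (1 - q) * q ^ k * (η * q ^ k₀) :=
              Finset.sum_le_sum fun k hkk => mul_le_mul_of_nonneg_left
                ((he1 k).trans (hzz k k₀ (Finset.mem_range.1 hkk) hk)) (hw k)
          _ = (∑ k ∈ Finset.range k₀, (1 - q) * q ^ k) * (η * q ^ k₀) := by rw [Finset.sum_mul]
          _ ≤ 1 * (η * q ^ k₀) := by
              gcongr
              exact sum_le_hasSum _ (fun k _ => hw k) hgeo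
          _ = _ := one_mul _
      have hB : (1 - q) * q ^ k₀ * e k₀ ≤ (1 - q) * q ^ k₀ * 2 :=
        mul_le_mul_of_nonneg_left (he2 _) (hw _)
      have hC : ∑' k, (1 - q) * q ^ (k + (k₀ + 1)) * e (k + (k₀ + 1)) ≤ q ^ (k₀ + 1) * (-2 * η) := by
        have h3 : HasSum (fun k => (1 - q) * q ^ (k + (k₀ + 1)) * (-2 * η))
            (q ^ (k₀ + 1) * (-2 * η)) := by
          have := hgeo.mul_right (q ^ (k₀ + 1) * (-2 * η))
          rw [one_mul] at this
          refine this.congr_fun ?_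
          intro k; ring
        refine hasSum_le (fun k => ?_) ((summable_nat_add_iff (k₀ + 1)).2 hsum).hasSum h3
        exact mul_le_mul_of_nonneg_left (hsm _ (hspec _ (by omega))) (hw _)
      have hqk : 0 < q ^ k₀ := by positivity
      have : η + (1 - q) * 2 - 2 * η * q ≤ 0 := by nlinarith
      have := mul_nonpos_of_nonneg_of_nonpos hqk.le this
      simp only [pow_succ] at hC ⊢
      nlinarith
  · push Not at hinf
    refine tsum_nonpos fun j => mul_nonpos_of_nonneg_of_nonpos (hw j) ?_
    refine (he1 j).trans ?_
    have hlim : Filter.Tendsto (fun k => η * q ^ k) Filter.atTop (nhds 0) := by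
      simpa using (tendsto_pow_atTop_nhds_zero_of_lt_one hq0.le hq1).const_mul η
    by_contra hpos
    push Not at hpos
    obtain ⟨N, hN⟩ := Filter.eventually_atTop.1 (hlim.eventually (gt_mem_nhds hpos))
    obtain ⟨k, hk, hk2⟩ := hinf (max N (j + 1))
    have := hzz j k (by have := le_max_right N (j+1); omega) hk2
    linarith [hN k ((le_max_left _ _).trans hk)]

lemma stolz {K : Type*} [TopologicalSpace K] [CompactSpace K]
    {A : Subalgebra ℂ C(K, ℂ)} (hAclosed : IsClosed (A : Set C(K, ℂ)))
    {t₀ : K} (h0 : IsStrongBoundaryPoint A t₀)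
    {U : Set K} (hU : IsOpen U) (ht : t₀ ∈ U) {ε : ℝ} (hε : 0 < ε) (hε1 : ε < 1) :
    ∃ φ ∈ A, φ t₀ = 1 ∧ (∀ t, ‖φ t‖ + (1 - ε) * ‖1 - φ t‖ ≤ 1) ∧ ∀ t ∉ U, ‖φ t‖ ≤ ε := by
  obtain ⟨η, rfl⟩ : ∃ η, ε = 4 * η := ⟨ε / 4, by ring⟩
  have hη : 0 < η := by linarith
  obtain ⟨q, hq⟩ : ∃ q, q = 1 - η / 4 := ⟨_, rfl⟩
  have hq0 : 0 < q := by linarith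
  have hq1 : q < 1 := by linarith
  obtain ⟨F, hP, hr⟩ := exists_seq_of_forall_finset_exists
    (P := fun x : C(K, ℂ) × ℕ => x.1 ∈ A ∧ x.1 t₀ = 1 ∧ (∀ t, ‖x.1 t‖ ≤ 1) ∧
      ∀ t ∉ U, ‖x.1 t‖ ≤ η)
    (r := fun x y => x.2 < y.2 ∧ ∀ t, η < ‖y.1 t‖ → ‖1 - x.1 t‖ ≤ η * q ^ y.2) (by
      intro s hs
      set m := s.sup Prod.snd + 1
      have hop : IsOpen (U ∩ ⋂ x ∈ s, {t | ‖1 - x.1 t‖ < η * q ^ m}) :=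
        hU.inter (isOpen_biInter_finset fun x _ =>
          isOpen_lt (by fun_prop) continuous_const)
      obtain ⟨h, hA, h1, hle, hsm⟩ := sbp_small h0 hop ⟨ht, by
        simp only [Set.mem_iInter, Set.mem_ofPred_eq]
        intro x hx
        rw [(hs x hx).2.1]; simp; positivity⟩ hη
      refine ⟨(h, m), ⟨hA, h1, hle, fun t htU => hsm t fun h => htU h.1⟩, fun x hx =>
        ⟨Nat.lt_succ_of_le (Finset.le_sup (f := Prod.snd) hx), fun t htη => ?_⟩⟩
      by_contra hcon
      refine absurd (hsm t fun hmem => hcon ?_) (not_le.2 htη)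
      have := hmem.2
      simp only [Set.mem_iInter, Set.mem_ofPred_eq] at this
      exact (this x hx).le)
  have hidx : ∀ n, n ≤ (F n).2 := by
    have : StrictMono (fun n => (F n).2) := fun m n hmn => (hr m n hmn).1
    exact this.id_le
  have hgeo : HasSum (fun k => (1 - q) * q ^ k) 1 := by
    have := (hasSum_geometric_of_lt_one hq0.le hq1).mul_left (1 - q)
    rwa [mul_inv_cancel₀ (by linarith)] at this
  have hw : ∀ k, 0 ≤ (1 - q) * q ^ k := fun k => mul_nonneg (by linarith) (by positivity)
  have hgeoC : HasSum (fun k => (((1 - q) * q ^ k : ℝ) : ℂ)) 1 := by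
    simpa only [Complex.ofReal_one] using Complex.hasSum_ofReal.2 hgeo
  have hnw : ∀ k, ‖(((1 - q) * q ^ k : ℝ) : ℂ)‖ = (1 - q) * q ^ k := fun k => by
    rw [Complex.norm_real, Real.norm_of_nonneg (hw k)]
  have hsum : Summable (fun k => (((1 - q) * q ^ k : ℝ) : ℂ) • (F k).1) := by
    refine Summable.of_norm_bounded hgeo.summable fun k => ?_
    rw [norm_smul, hnw]
    refine mul_le_of_le_one_right (hw k) ?_
    exact (ContinuousMap.norm_le _ zero_le_one).2 (hP k).2.2.1
  set φ := ∑' k, (((1 - q) * q ^ k : ℝ) : ℂ) • (F k).1 with hφ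
  have happ : ∀ t, HasSum (fun k => (((1 - q) * q ^ k : ℝ) : ℂ) * (F k).1 t) (φ t) := fun t => by
    have := ContinuousMap.hasSum_apply hsum.hasSum t
    simpa only [ContinuousMap.smul_apply, smul_eq_mul] using this
  refine ⟨φ, ?_, ?_, fun t => ?_, fun t htU => ?_⟩
  · refine hAclosed.mem_of_tendsto hsum.hasSum (Filter.Eventually.of_forall fun s => ?_)
    exact A.sum_mem fun k _ => A.smul_mem (hP k).1 _
  · refine (happ t₀).unique ?_
    simpa [(hP _).2.1] using hgeoC
  · have hz1 : ∀ k, ‖(F k).1 t‖ ≤ 1 := fun k => (hP k).2.2.1 t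
    have hz2 : ∀ k, ‖1 - (F k).1 t‖ ≤ 2 := fun k => (norm_sub_le _ _).trans (by
      have := hz1 k; rw [norm_one]; linarith)
    have hs1 : Summable (fun k => (1 - q) * q ^ k * ‖(F k).1 t‖) :=
      Summable.of_nonneg_of_le (fun k => mul_nonneg (hw k) (norm_nonneg _))
        (fun k => mul_le_of_le_one_right (hw k) (hz1 k)) hgeo.summable
    have hs2 : Summable (fun k => (1 - q) * q ^ k * ‖1 - (F k).1 t‖) :=
      Summable.of_nonneg_of_le (fun k => mul_nonneg (hw k) (norm_nonneg _))
        (fun k => mul_le_mul_of_nonneg_left (hz2 k) (hw k)) (hgeo.summable.mul_right 2)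
    have b1 : ‖φ t‖ ≤ ∑' k, (1 - q) * q ^ k * ‖(F k).1 t‖ := by
      rw [← (happ t).tsum_eq]
      have : ∀ k, (1 - q) * q ^ k * ‖(F k).1 t‖ = ‖(((1 - q) * q ^ k : ℝ) : ℂ) * (F k).1 t‖ :=
        fun k => by rw [norm_mul, hnw]
      simp only [this] at hs1 ⊢
      exact norm_tsum_le_tsum_norm hs1
    have b2 : ‖1 - φ t‖ ≤ ∑' k, (1 - q) * q ^ k * ‖1 - (F k).1 t‖ := by
      rw [← (hgeoC.sub (happ t)).tsum_eq]
      have : ∀ k, (1 - q) * q ^ k * ‖1 - (F k).1 t‖ =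
          ‖(((1 - q) * q ^ k : ℝ) : ℂ) - (((1 - q) * q ^ k : ℝ) : ℂ) * (F k).1 t‖ :=
        fun k => by rw [← mul_one_sub, norm_mul, hnw]
      simp only [this] at hs2 ⊢
      exact norm_tsum_le_tsum_norm hs2
    have key := real_sum hη (by linarith) hq0 hq1 (by linarith) (fun k => (F k).1 t) hz1
      (fun j k hjk hk => ((hr j k hjk).2 t hk).trans (by
        have := pow_le_pow_of_le_one hq0.le hq1.le (hidx k)
        gcongr))
    have hS := ((hs1.hasSum.add (hs2.hasSum.mul_left (1 - 4 * η))).sub hgeo).tsum_eq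
    have : ∑' k, (1 - q) * q ^ k * (‖(F k).1 t‖ + (1 - 4 * η) * ‖1 - (F k).1 t‖ - 1)
        = _ := (tsum_congr fun k => by ring).trans hS
    have h4 := mul_le_mul_of_nonneg_left b2 (by linarith : 0 ≤ 1 - 4 * η)
    rw [this] at key
    linarith
  · have : ‖φ t‖ ≤ 1 * η := by
      refine (happ t).norm_le_of_bounded (hgeo.mul_right η) fun k => ?_
      rw [norm_mul, hnw]
      exact mul_le_mul_of_nonneg_left ((hP k).2.2.2 t htU) (hw k)
    linarith

lemma bump {K : Type*} [TopologicalSpace K] [CompactSpace K]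
    {X : Type*} [NormedAddCommGroup X] [NormedSpace ℂ X]
    {S : Submodule ℂ C(K, X)} {A : Subalgebra ℂ C(K, ℂ)}
    (hAclosed : IsClosed (A : Set C(K, ℂ)))
    (hmul : ∀ φ ∈ A, ∀ f ∈ S, φ • f ∈ S)
    (htensor : ∀ φ ∈ A, ∀ x : X, φ • ContinuousMap.const K x ∈ S)
    {t₀ : K} (h0 : IsStrongBoundaryPoint A t₀)
    {U : Set K} (hU : IsOpen U) (ht : t₀ ∈ U) {ε : ℝ} (hε : 0 < ε) (hε1 : ε < 1)
    (f : S) (hf : ‖f‖ ≤ 1) :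
    ∃ φ : C(K, ℂ), (∀ t, ‖φ t‖ ≤ 1) ∧ (∀ t ∉ U, ‖φ t‖ ≤ ε) ∧
      ∀ u : X, ‖u‖ ≤ 1 → ∃ k : S, ‖k‖ ≤ 1 ∧ k.1 t₀ = u ∧
        ∀ t, k.1 t - f.1 t = φ t • (u - f.1 t) - (ε : ℂ) • (f.1 t - φ t • f.1 t) := by
  obtain ⟨φ, hφA, h1, hst, hsm⟩ := stolz hAclosed h0 hU ht hε hε1
  have hft : ∀ t, ‖f.1 t‖ ≤ 1 := fun t => (f.1.norm_coe_le_norm t).trans hf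
  refine ⟨φ, fun t => ?_, hsm, fun u hu => ?_⟩
  · have := hst t
    have := mul_nonneg (by linarith : 0 ≤ 1 - ε) (norm_nonneg (1 - φ t))
    linarith
  · have hmem : φ • ContinuousMap.const K u + ((1 - ε : ℝ) : ℂ) • (f.1 - φ • f.1) ∈ S :=
      S.add_mem (htensor φ hφA u) (S.smul_mem _ (S.sub_mem f.2 (hmul φ hφA _ f.2)))
    refine ⟨⟨_, hmem⟩, ?_, ?_, fun t => ?_⟩
    · rw [Submodule.coe_norm]
      refine (ContinuousMap.norm_le _ zero_le_one).2 fun t => ?_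
      have e1 : (φ • ContinuousMap.const K u + ((1 - ε : ℝ) : ℂ) • (f.1 - φ • f.1)) t
          = φ t • u + ((1 - ε : ℝ) : ℂ) • ((1 - φ t) • f.1 t) := by
        simp [sub_smul]
      simp only [e1]
      refine (norm_add_le _ _).trans (le_trans ?_ (hst t))
      rw [norm_smul, norm_smul, norm_smul, Complex.norm_real, Real.norm_of_nonneg (by linarith)]
      have := mul_le_of_le_one_right (norm_nonneg (φ t)) hu
      have h3 := mul_le_of_le_one_right (norm_nonneg (1 - φ t)) (hft t)
      have := mul_le_mul_of_nonneg_left h3 (by linarith : 0 ≤ 1 - ε)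
      linarith
    · simp [h1]
    · simp only [ContinuousMap.add_apply, ContinuousMap.smul_apply', ContinuousMap.const_apply,
        ContinuousMap.smul_apply, ContinuousMap.sub_apply]
      push_cast
      module

lemma bump_bound {X : Type*} [NormedAddCommGroup X] [NormedSpace ℂ X] (z : ℂ) (hz : ‖z‖ ≤ 1)
    (v y : X) (hy : ‖y‖ ≤ 1) {ε : ℝ} (hε : 0 < ε) :
    ‖z • v - (ε : ℂ) • (y - z • y)‖ ≤ ‖z‖ * ‖v‖ + 2 * ε := by
  refine (norm_sub_le _ _).trans ?_
  rw [norm_smul, norm_smul, Complex.norm_real, Real.norm_of_nonneg hε.le]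
  have : ‖y - z • y‖ ≤ 2 := by
    refine (norm_sub_le _ _).trans ?_
    rw [norm_smul]
    have := mul_le_one₀ hz (norm_nonneg _) hy
    linarith
  nlinarith

lemma split_unit {X : Type*} [NormedAddCommGroup X] [NormedSpace ℂ X] [Nontrivial X]
    (x : X) (hx : ‖x‖ ≤ 1) : ∃ (u : X) (a b : ℝ), ‖u‖ = 1 ∧ 0 ≤ a ∧ 0 ≤ b ∧ a + b = 1 ∧
      (a : ℂ) • u + (b : ℂ) • (-u) = x := by
  obtain ⟨u, hu, hux⟩ : ∃ u : X, ‖u‖ = 1 ∧ (‖x‖ : ℂ) • u = x := by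
    by_cases h : x = 0
    · obtain ⟨v, hv⟩ := exists_ne (0 : X)
      refine ⟨((‖v‖⁻¹ : ℝ) : ℂ) • v, ?_, by simp [h]⟩
      rw [norm_smul, Complex.norm_real, norm_inv, norm_norm, inv_mul_cancel₀ (norm_ne_zero_iff.2 hv)]
    · have hn := norm_ne_zero_iff.2 h
      refine ⟨((‖x‖⁻¹ : ℝ) : ℂ) • x, ?_, ?_⟩
      · rw [norm_smul, Complex.norm_real, norm_inv, norm_norm, inv_mul_cancel₀ hn]
      · rw [smul_smul, ← Complex.ofReal_mul, mul_inv_cancel₀ hn]; simp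
  refine ⟨u, (1 + ‖x‖) / 2, (1 - ‖x‖) / 2, hu, by positivity, by linarith, by ring, ?_⟩
  conv_rhs => rw [← hux]
  push_cast
  module

lemma delta_of_norm_one {K : Type*} [TopologicalSpace K] [CompactSpace K] [T2Space K]
    {X : Type*} [NormedAddCommGroup X] [NormedSpace ℂ X]
    {S : Submodule ℂ C(K, X)} {A : Subalgebra ℂ C(K, ℂ)}
    (hAclosed : IsClosed (A : Set C(K, ℂ)))
    (hmul : ∀ φ ∈ A, ∀ f ∈ S, φ • f ∈ S)
    (htensor : ∀ φ ∈ A, ∀ x : X, φ • ContinuousMap.const K x ∈ S)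
    {t₀ : K} (hinf : ∀ V : Set K, IsOpen V → t₀ ∈ V →
      (V ∩ {t | IsStrongBoundaryPoint A t}).Infinite)
    (g : S) (hg : ‖g‖ ≤ 1) (hg0 : ‖g.1 t₀‖ = 1) (ε : ℝ) (hε : 0 < ε) :
    g ∈ closure (convexHull ℝ {k : S | ‖k‖ ≤ 1 ∧ 2 - ε ≤ ‖g - k‖}) := by
  rw [Metric.mem_closure_iff]
  intro ρ hρ
  obtain ⟨η, hη0, hη1, hηε, hηρ⟩ : ∃ η : ℝ, 0 < η ∧ η < 1 ∧ η ≤ ε ∧ 6 * η < ρ := by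
    refine ⟨min (1 / 2) (min ε (ρ / 12)), by positivity, ?_, ?_, ?_⟩
    · exact (min_le_left _ _).trans_lt (by norm_num)
    · exact (min_le_right _ _).trans (min_le_left _ _)
    · have := (min_le_right (1/2) (min ε (ρ / 12))).trans (min_le_right _ _)
      linarith
  obtain ⟨n, hn⟩ := exists_nat_gt (1 / η)
  have hn0 : (0 : ℝ) < n := lt_trans (by positivity) hn
  have hn1 : (1 : ℝ) ≤ n := by exact_mod_cast (by exact_mod_cast hn0 : 0 < n)
  have hnη : 1 < n * η := by rwa [div_lt_iff₀ hη0] at hn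
  have hgt : ∀ t, ‖g.1 t‖ ≤ 1 := fun t => (g.1.norm_coe_le_norm t).trans hg
  obtain ⟨T, hTV, hTc⟩ := (hinf {t | 1 - η < ‖g.1 t‖}
    (isOpen_lt continuous_const (by fun_prop)) (by
      change 1 - η < ‖g.1 t₀‖; linarith)).exists_subset_card_eq n
  obtain ⟨U, hU, hdisj⟩ := T.finite_toSet.t2_separation
  have hbig : ∀ s ∈ T, 1 - η < ‖g.1 s‖ := fun s hs => (hTV hs).1
  have hη' : 0 < η / n := by positivity
  have hη'1 : η / n < 1 := (div_le_self hη0.le hn1).trans_lt hη1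
  have hk : ∀ s : K, ∃ (φ : C(K, ℂ)) (u : X) (k : S), s ∈ T → (∀ t, ‖φ t‖ ≤ 1) ∧
      (∀ t ∉ U s, ‖φ t‖ ≤ η / n) ∧ ‖u‖ ≤ 1 ∧ ‖k‖ ≤ 1 ∧ 2 - ε ≤ ‖g - k‖ ∧
      ∀ t, k.1 t - g.1 t = φ t • (u - g.1 t) - ((η / n : ℝ) : ℂ) • (g.1 t - φ t • g.1 t) := by
    intro s
    by_cases hs : s ∈ T
    swap
    · exact ⟨0, 0, 0, fun h => absurd h hs⟩
    obtain ⟨φ, h1, h2, h3⟩ := bump hAclosed hmul htensor (hTV hs).2 (hU s).2 (hU s).1 hη' hη'1 g hg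
    have hgs : 0 < ‖g.1 s‖ := by linarith [hbig s hs]
    have hu : ‖((-‖g.1 s‖⁻¹ : ℝ) : ℂ) • g.1 s‖ = 1 := by
      rw [norm_smul, Complex.norm_real, norm_neg, norm_inv, norm_norm, inv_mul_cancel₀ hgs.ne']
    obtain ⟨k, hk1, hk2, hk3⟩ := h3 _ hu.le
    refine ⟨φ, _, k, fun _ => ⟨h1, h2, hu.le, hk1, ?_, hk3⟩⟩
    have h5 : ‖g.1 s - k.1 s‖ ≤ ‖g - k‖ := (g - k).1.norm_coe_le_norm s
    refine le_trans ?_ h5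
    have : g.1 s - k.1 s = ((1 + ‖g.1 s‖⁻¹ : ℝ) : ℂ) • g.1 s := by
      rw [hk2]; push_cast; module
    rw [this, norm_smul, Complex.norm_real, Real.norm_of_nonneg (by positivity), add_mul,
      inv_mul_cancel₀ hgs.ne']
    linarith [hbig s hs]
  choose φ u k hφ using hk
  refine ⟨∑ s ∈ T, (1 / n : ℝ) • k s, ?_, ?_⟩
  · refine (convex_convexHull ℝ _).sum_mem (fun _ _ => by positivity) ?_ fun s hs =>
      subset_convexHull ℝ _ ⟨(hφ s hs).2.2.2.1, (hφ s hs).2.2.2.2.1⟩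
    simp [hTc, hn0.ne']
  · rw [dist_comm, dist_eq_norm]
    refine lt_of_le_of_lt ?_ hηρ
    rw [Submodule.coe_norm]
    refine (ContinuousMap.norm_le _ (by positivity)).2 fun t => ?_
    have e1 : ((∑ s ∈ T, (1 / n : ℝ) • k s - g : S) : C(K, X)) t
        = (1 / n : ℝ) • ∑ s ∈ T, ((k s).1 t - g.1 t) := by
      have e2 : ((∑ s ∈ T, (1 / n : ℝ) • k s - g : S) : C(K, X)) t
        = ∑ s ∈ T, (1 / n : ℝ) • (k s).1 t - g.1 t := by
        simp only [Submodule.coe_sub, Submodule.coe_sum, ContinuousMap.sub_apply,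
          ContinuousMap.sum_apply]
        rfl
      rw [e2, Finset.sum_sub_distrib, smul_sub, Finset.smul_sum, Finset.sum_const, hTc,
        ← Nat.cast_smul_eq_nsmul ℝ, smul_smul, one_div_mul_cancel hn0.ne', one_smul]
    rw [e1, norm_smul, Real.norm_of_nonneg (by positivity)]
    have b1 : ‖∑ s ∈ T, ((k s).1 t - g.1 t)‖ ≤ ∑ s ∈ T, (‖φ s t‖ * 2 + 2 * (η / n)) := by
      refine norm_sum_le_of_le _ fun s hs => ?_
      obtain ⟨h1, h2, h3, h4, h5, h6⟩ := hφ s hs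
      rw [h6]
      refine (bump_bound _ (h1 t) _ _ (hgt t) hη').trans ?_
      have : ‖u s - g.1 t‖ ≤ 2 := (norm_sub_le _ _).trans (by linarith [hgt t])
      gcongr
    have b2 : ∑ s ∈ T, ‖φ s t‖ ≤ 1 + η := by
      have hsmall : ∀ T' ⊆ T, (∀ s ∈ T', t ∉ U s) → ∑ s ∈ T', ‖φ s t‖ ≤ η := by
        intro T' hT' h
        calc _ ≤ ∑ s ∈ T', η / n := Finset.sum_le_sum fun s hs => (hφ s (hT' hs)).2.1 t (h s hs)
          _ ≤ ∑ s ∈ T, η / n := Finset.sum_le_sum_of_subset_of_nonneg hT' fun _ _ _ => hη'.le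
          _ = η := by rw [Finset.sum_const, hTc, nsmul_eq_mul]; field_simp
      classical
      by_cases h : ∃ s ∈ T, t ∈ U s
      · obtain ⟨s, hs, hts⟩ := h
        rw [← Finset.add_sum_erase _ _ hs]
        have := hsmall (T.erase s) (Finset.erase_subset _ _) fun s' hs' hts' =>
          Set.disjoint_left.1 (hdisj (Finset.mem_of_mem_erase hs') hs (Finset.ne_of_mem_erase hs')) hts' hts
        linarith [(hφ s hs).1 t]
      · push Not at h
        linarith [hsmall T subset_rfl h]
    have b3 : ∑ s ∈ T, (‖φ s t‖ * 2 + 2 * (η / n)) ≤ n * (6 * η) := by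
      rw [Finset.sum_add_distrib, ← Finset.sum_mul, Finset.sum_const, hTc, nsmul_eq_mul]
      have : (n : ℝ) * (2 * (η / n)) = 2 * η := by field_simp
      rw [this]
      nlinarith
    rw [one_div, inv_mul_le_iff₀ hn0]
    exact b1.trans b3

/- STATEMENT 18: Let `X` be a uniformly convex complex Banach space and `S` an
`X`-valued function space over a uniform algebra on the compact Hausdorff space `K`
with base algebra `A = {x* ∘ f : f ∈ S, x* ∈ X*}`, satisfying `A ⊗ X ⊆ S`. Let `Γ`
be a closed boundary for `A` in which the strong boundary points of `A` are dense.
If some strong peak point for `A` is a limit point of `Γ`, then `S` has the convex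
diametral local diameter two property: the closed unit ball of `S` is the closed
convex hull of the set of Δ-points of `S`. -/
theorem stmt_18 {K : Type*} [TopologicalSpace K] [CompactSpace K] [T2Space K]
    {X : Type*} [NormedAddCommGroup X] [NormedSpace ℂ X] [CompleteSpace X]
    [UniformConvexSpace X]
    (S : Submodule ℂ C(K, X)) (hSclosed : IsClosed (S : Set C(K, X)))
    (A : Subalgebra ℂ C(K, ℂ))
    (hAbase : (A : Set C(K, ℂ)) =
      {g : C(K, ℂ) | ∃ f ∈ S, ∃ φ : X →L[ℂ] ℂ, ∀ t : K, g t = φ (f t)})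
    (hAclosed : IsClosed (A : Set C(K, ℂ)))
    (hAsep : ∀ s t : K, s ≠ t → ∃ g ∈ A, g s ≠ g t)
    (hmul : ∀ φ ∈ A, ∀ f ∈ S, φ • f ∈ S)
    (htensor : ∀ φ ∈ A, ∀ x : X, φ • ContinuousMap.const K x ∈ S)
    (Γ : Set K) (hΓclosed : IsClosed Γ)
    (hΓbd : ∀ g ∈ A, ∃ t ∈ Γ, ‖g t‖ = ‖g‖)
    (hΓdense : Γ ⊆ closure {t | t ∈ Γ ∧ IsStrongBoundaryPoint A t})
    (hpeak : ∃ t₀ ∈ Γ, IsStrongPeakPoint A t₀ ∧ t₀ ∈ closure (Γ \ {t₀})) :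
    Metric.closedBall (0 : S) 1 =
      closure (convexHull ℝ
        {h : S | ‖h‖ = 1 ∧ ∀ ε > (0 : ℝ),
          h ∈ closure (convexHull ℝ {g : S | ‖g‖ ≤ 1 ∧ 2 - ε ≤ ‖h - g‖})}) := by

  obtain ⟨t₀, ht₀, ⟨h, hhA, hh0, hhU⟩, hlim⟩ := hpeak
  -- `t₀` is a strong boundary point
  have hnorm : 0 < ‖h‖ := by
    obtain ⟨t1, -, ht1⟩ : (Γ \ {t₀}).Nonempty := closure_nonempty_iff.1 ⟨_, hlim⟩
    obtain ⟨c, hc, hcU⟩ := hhU {t1}ᶜ isOpen_compl_singleton (fun h => ht1 h.symm)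
    exact ((norm_nonneg _).trans (hcU t1 (by simp))).trans_lt hc
  have hsb : IsStrongBoundaryPoint A t₀ := by
    intro U hU htU
    obtain ⟨c, hc, hcU⟩ := hhU U hU htU
    have hne : h t₀ ≠ 0 := norm_ne_zero_iff.1 (hh0 ▸ hnorm.ne')
    refine ⟨(h t₀)⁻¹ • h, A.smul_mem hhA _, by simp [hne], ?_, c / ‖h‖, ?_, fun t ht => ?_⟩
    · rw [norm_smul, norm_inv, hh0, inv_mul_cancel₀ hnorm.ne']
    · rwa [div_lt_one hnorm]
    · rw [ContinuousMap.smul_apply, norm_smul, norm_inv, hh0, div_eq_inv_mul]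
      exact mul_le_mul_of_nonneg_left (hcU t ht) (by positivity)
  have hinf : ∀ V : Set K, IsOpen V → t₀ ∈ V →
      (V ∩ {t | IsStrongBoundaryPoint A t}).Infinite := by
    intro V hV htV hfin
    obtain ⟨y, ⟨hyV, hyF⟩, hyΓ, hy0⟩ := mem_closure_iff.1 hlim
      (V \ ((V ∩ {t | IsStrongBoundaryPoint A t}) \ {t₀}))
      (hV.sdiff (hfin.subset Set.sdiff_subset).isClosed) ⟨htV, fun h => h.2 rfl⟩
    obtain ⟨w, ⟨hwV, hwF⟩, -, hw⟩ := mem_closure_iff.1 (hΓdense hyΓ)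
      (V \ (V ∩ {t | IsStrongBoundaryPoint A t})) (hV.sdiff hfin.isClosed)
      ⟨hyV, fun h => hyF ⟨h, hy0⟩⟩
    exact hwF ⟨hwV, hw⟩
  have hX : Nontrivial X := by
    by_contra hX
    rw [not_nontrivial_iff_subsingleton] at hX
    have h1 : (1 : C(K, ℂ)) ∈ (A : Set C(K, ℂ)) := A.one_mem
    rw [hAbase] at h1
    obtain ⟨f, -, φ, hf⟩ := h1
    have := hf t₀
    rw [Subsingleton.elim (f t₀) 0] at this
    simp at this
  apply Set.Subset.antisymm
  · intro f hf
    have hf1 : ‖f‖ ≤ 1 := by simpa using hf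
    rw [Metric.mem_closure_iff]
    intro ρ hρ
    obtain ⟨η, hη0, hη1, hηρ⟩ : ∃ η : ℝ, 0 < η ∧ η < 1 ∧ 4 * η < ρ := by
      refine ⟨min (1 / 2) (ρ / 8), by positivity, (min_le_left _ _).trans_lt (by norm_num), ?_⟩
      linarith [min_le_right (1 / 2) (ρ / 8)]
    obtain ⟨φ, hφ1, hφ2, hφ3⟩ := bump hAclosed hmul htensor hsb
      (U := {t | ‖f.1 t₀ - f.1 t‖ < η}) (isOpen_lt (by fun_prop) continuous_const)
      (by simpa using hη0) hη0 hη1 f hf1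
    have hft : ∀ t, ‖f.1 t‖ ≤ 1 := fun t => (f.1.norm_coe_le_norm t).trans hf1
    obtain ⟨u, a, b, hu, ha, hb, hab, hx⟩ := split_unit (f.1 t₀) (hft t₀)
    have hΔ : ∀ k : S, ‖k‖ ≤ 1 → ‖k.1 t₀‖ = 1 → k ∈ {h : S | ‖h‖ = 1 ∧ ∀ ε > (0 : ℝ),
          h ∈ closure (convexHull ℝ {g : S | ‖g‖ ≤ 1 ∧ 2 - ε ≤ ‖h - g‖})} := by
      intro k hk hk0
      exact ⟨le_antisymm hk (hk0 ▸ k.1.norm_coe_le_norm t₀), fun ε hε =>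
        delta_of_norm_one hAclosed hmul htensor hinf k hk hk0 ε hε⟩
    obtain ⟨k1, hk1, hk1', hk1''⟩ := hφ3 u hu.le
    obtain ⟨k2, hk2, hk2', hk2''⟩ := hφ3 (-u) (by rw [norm_neg, hu])
    refine ⟨a • k1 + b • k2, ?_, ?_⟩
    · exact convex_convexHull ℝ _ (subset_convexHull ℝ _ (hΔ k1 hk1 (by rw [hk1', hu])))
        (subset_convexHull ℝ _ (hΔ k2 hk2 (by rw [hk2', norm_neg, hu]))) ha hb hab
    · rw [dist_comm, dist_eq_norm]
      refine lt_of_le_of_lt ?_ hηρ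
      rw [Submodule.coe_norm]
      refine (ContinuousMap.norm_le _ (by positivity)).2 fun t => ?_
      have e1 : ((a • k1 + b • k2 - f : S) : C(K, X)) t
          = φ t • (f.1 t₀ - f.1 t) - (η : ℂ) • (f.1 t - φ t • f.1 t) := by
        have e2 : ((a • k1 + b • k2 - f : S) : C(K, X)) t
          = (a : ℂ) • k1.1 t + (b : ℂ) • k2.1 t - f.1 t := rfl
        have e3 : (a : ℂ) • k1.1 t + (b : ℂ) • k2.1 t - f.1 t =
            (a : ℂ) • (k1.1 t - f.1 t) + (b : ℂ) • (k2.1 t - f.1 t) := by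
          have : (b : ℂ) = 1 - a := by rw [eq_sub_of_add_eq' hab]; push_cast; ring
          rw [this]; module
        rw [e2, e3, hk1'', hk2'', ← hx]
        have : (b : ℂ) = 1 - a := by rw [eq_sub_of_add_eq' hab]; push_cast; ring
        rw [this]; module
      rw [e1]
      refine (bump_bound _ (hφ1 t) _ _ (hft t) hη0).trans ?_
      have h2 : ‖f.1 t₀ - f.1 t‖ ≤ 2 := (norm_sub_le _ _).trans (by linarith [hft t, hft t₀])
      have h3 : ‖φ t‖ * ‖f.1 t₀ - f.1 t‖ ≤ 2 * η := by
        by_cases ht : ‖f.1 t₀ - f.1 t‖ < η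
        · have := mul_le_mul (hφ1 t) ht.le (norm_nonneg _) zero_le_one
          linarith
        · have := mul_le_mul (hφ2 t ht) h2 (norm_nonneg _) hη0.le
          linarith
      linarith
  · refine closure_minimal (convexHull_min ?_ (convex_closedBall _ _)) Metric.isClosed_closedBall
    intro k hk
    simpa using hk.1.le
end
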